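/- arXiv:1107.1571 — 2 statements merged into one kernel-verified Lean document; each statement's English description precedes it below -/
import Mathlib

section
/- Every t ∈ [0,1] that is irrational and algebraic over ℚ belongs to 𝒜. -/
open Filter Finset MeasureTheory

/-- An approximant to a real number `t`: a reduced fraction `u/q` with `q ≥ 1`
and `|t - u/q| < 1/q²`. -/
def IsApproximant (t : ℝ) (u q : ℤ) : Prop :=
  1 ≤ q ∧ Int.gcd u q = 1 ∧ |t - (u : ℝ) / (q : ℝ)| < 1 / (q : ℝ) ^ 2

/-- The set `𝒜_m`: `t ∈ [0,1]` such that for every real `M ≥ m` there is an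
approximant `u/q` to `t` with `M^Δ < q ≤ M^(n-Δ)`. -/
def Aset (n : ℕ) (Δ : ℝ) (m : ℤ) : Set ℝ :=
  {t | t ∈ Set.Icc (0 : ℝ) 1 ∧ ∀ M : ℝ, (m : ℝ) ≤ M →
    ∃ u q : ℤ, IsApproximant t u q ∧ M ^ Δ < (q : ℝ) ∧ (q : ℝ) ≤ M ^ ((n : ℝ) - Δ)}

/-- The set `𝒜`: `t ∈ [0,1]` such that for all sufficiently large `M` there is an
approximant `u/q` to `t` with `M^Δ < q ≤ M^(n-Δ)`. -/
def Aall (n : ℕ) (Δ : ℝ) : Set ℝ :=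
  {t | t ∈ Set.Icc (0 : ℝ) 1 ∧ ∃ M₀ : ℝ, ∀ M : ℝ, M₀ ≤ M →
    ∃ u q : ℤ, IsApproximant t u q ∧ M ^ Δ < (q : ℝ) ∧ (q : ℝ) ≤ M ^ ((n : ℝ) - Δ)}

/-- The set `ℬ_{m,α}`: `t ∈ (0,1]` such that for every real `M ≥ m·t^(-α)` there is an
approximant `u/q` to `t` with `M^Δ < q ≤ M^(n-Δ)`. -/
def Bset (n : ℕ) (Δ : ℝ) (m : ℤ) (α : ℝ) : Set ℝ :=
  {t | t ∈ Set.Ioc (0 : ℝ) 1 ∧ ∀ M : ℝ, (m : ℝ) * t ^ (-α) ≤ M →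
    ∃ u q : ℤ, IsApproximant t u q ∧ M ^ Δ < (q : ℝ) ∧ (q : ℝ) ≤ M ^ ((n : ℝ) - Δ)}

/-!
Dirichlet's theorem with denominators up to `M ^ b`, `b = n - Δ`, gives an approximant `u / q` with
`q ≤ M ^ b` and `|t - u / q| < M ^ (-b) / q`. Since `2 * Δ < n`, one can choose `Δ ≤ a < e < b` with
`0 < a`; if `q ≤ M ^ a`, then `|t - u / q| < M ^ (e - b) / q ^ (1 + e / a)`, which Roth's theorem
for the exponent `1 + e / a > 2` rules out for large `M`.

For Roth's theorem let `α` be an algebraic integer and `β 1, …, β m` very good approximations to it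
with rapidly growing denominators. Choose degrees `r l` so that all `(β l).den ^ r l` are about
`exp Λ`. A Chernoff bound together with Siegel's lemma provides an integer polynomial of degree at
most `r l` in the `l`-th variable, with small coefficients and index about `m / 2` at `(α, …, α)`.
By Roth's lemma its index at `β` is small: some Hasse derivative of small weight does not vanish
at `β`. Its value there is a rational number with denominator at most about `exp (m * Λ)`, but the
large index at `(α, …, α)` makes it smaller than the reciprocal of that.

Roth's lemma goes by induction on the variables: a generalized Wronskian in a shortest separated
expression `∑ φ i * ψ i` of the polynomial factors as a polynomial in the remaining variables times
a one-variable polynomial, and the index of a determinant is controlled row by row.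
-/

namespace Roth

open MvPolynomial
open scoped Pointwise

section GradedSupport

variable {σ R A : Type*} [CommRing R]

theorem det_mem_graded {S : Type*} [CommRing S] [Module R S] [AddCommMonoid A]
    (𝒮 : A → Submodule R S) [SetLike.GradedMonoid 𝒮] {ι : Type*} [Fintype ι] [DecidableEq ι]
    {a : ι → A} {M : Matrix ι ι S} (hM : ∀ i j, M i j ∈ 𝒮 (a j)) : M.det ∈ 𝒮 (∑ j, a j) := by
  rw [Matrix.det_apply]
  refine Submodule.sum_mem _ fun π _ => ?_
  have hprod : ∏ j, M (π j) j ∈ 𝒮 (∑ j, a j) := SetLike.prod_mem_graded 𝒮 a _ fun j _ => hM _ j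
  rcases Int.units_eq_one_or (Equiv.Perm.sign π) with h | h
  · rwa [h, one_smul]
  · rw [h, Units.neg_smul, one_smul]
    exact neg_mem hprod

theorem mem_restrictSupport_iff_coeff {s : Set (σ →₀ ℕ)} {P : MvPolynomial σ R} :
    P ∈ restrictSupport R s ↔ ∀ J, coeff J P ≠ 0 → J ∈ s := by
  simp [mem_restrictSupport_iff, Set.subset_def]

theorem mul_mem_restrictSupport {s t u : Set (σ →₀ ℕ)} (h : s + t ⊆ u) {P Q : MvPolynomial σ R}
    (hP : P ∈ restrictSupport R s) (hQ : Q ∈ restrictSupport R t) : P * Q ∈ restrictSupport R u :=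
  restrictSupport_mono R h (restrictSupport_add R s t ▸ Submodule.mul_mem_mul hP hQ)

theorem one_mem_restrictSupport {s : Set (σ →₀ ℕ)} (h : 0 ∈ s) :
    (1 : MvPolynomial σ R) ∈ restrictSupport R s :=
  (monomial_mem_restrictSupport R).2 (.inl h)

variable (R) in
/-- The polynomials of degree at most `ρ l` in each variable `l`. -/
noncomputable def multidegreeLE (ρ : σ →₀ ℕ) : Submodule R (MvPolynomial σ R) :=
  restrictSupport R (Set.Iic ρ)

theorem mem_multidegreeLE {ρ : σ →₀ ℕ} {P : MvPolynomial σ R} :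
    P ∈ multidegreeLE R ρ ↔ ∀ J, coeff J P ≠ 0 → J ≤ ρ :=
  mem_restrictSupport_iff_coeff

instance multidegreeLE.gradedMonoid : SetLike.GradedMonoid (multidegreeLE (σ := σ) R) where
  one_mem := one_mem_restrictSupport (Set.mem_Iic.2 le_rfl)
  mul_mem _ _ _ _ := mul_mem_restrictSupport (Set.Iic_add_Iic_subset _ _)

end GradedSupport

section Weight

variable {σ : Type*} [Fintype σ]

/-- The weight `∑ l, J l / r l` of the exponent `J`; a variable with `r l = 0` has weight `0`. -/
noncomputable def weight (r J : σ →₀ ℕ) : ℝ :=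
  ∑ l, (J l : ℝ) / r l

theorem weight_nonneg (r J : σ →₀ ℕ) : 0 ≤ weight r J := by
  unfold weight; positivity

theorem weight_add (r J K : σ →₀ ℕ) : weight r (J + K) = weight r J + weight r K := by
  simp [weight, add_div, sum_add_distrib]

theorem weight_single (r : σ →₀ ℕ) (a : σ) (j : ℕ) :
    weight r (Finsupp.single a j) = (j : ℝ) / r a := by
  classical
  rw [weight, sum_eq_single a (fun l _ hl => by simp [hl]) (by simp), Finsupp.single_eq_same]

instance weight.gradedMonoid {R : Type*} [CommRing R] (r : σ →₀ ℕ) :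
    SetLike.GradedMonoid fun θ : ℝ => restrictSupport R {J | θ ≤ weight r J} where
  one_mem := one_mem_restrictSupport (weight_nonneg r 0)
  mul_mem θ θ' _ _ := mul_mem_restrictSupport <| by
    rintro _ ⟨J, hJ, K, hK, rfl⟩
    exact (add_le_add hJ hK).trans_eq (weight_add r J K).symm

end Weight

section CoeffNorm

variable {σ ι : Type*}

/-- The sum of the absolute values of the coefficients. -/
noncomputable def l1Norm (P : MvPolynomial σ ℝ) : ℝ :=
  ∑ J ∈ P.support, |coeff J P|

theorem l1Norm_eq_sum {P : MvPolynomial σ ℝ} {s : Finset (σ →₀ ℕ)} (h : P.support ⊆ s) :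
    l1Norm P = ∑ J ∈ s, |coeff J P| :=
  sum_subset h fun J _ hJ => by simpa using hJ

theorem l1Norm_nonneg (P : MvPolynomial σ ℝ) : 0 ≤ l1Norm P :=
  sum_nonneg fun _ _ => abs_nonneg _

theorem sum_abs_coeff_le_l1Norm (P : MvPolynomial σ ℝ) (s : Finset (σ →₀ ℕ)) :
    ∑ J ∈ s, |coeff J P| ≤ l1Norm P := by
  classical
  rw [l1Norm_eq_sum (subset_union_left (s₂ := s))]
  exact sum_le_sum_of_subset_of_nonneg subset_union_right fun _ _ _ => abs_nonneg _

theorem abs_coeff_le_l1Norm (P : MvPolynomial σ ℝ) (J : σ →₀ ℕ) : |coeff J P| ≤ l1Norm P := by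
  simpa using sum_abs_coeff_le_l1Norm P {J}

theorem l1Norm_pos {P : MvPolynomial σ ℝ} (h : P ≠ 0) : 0 < l1Norm P :=
  sum_pos (fun _ hJ => abs_pos.2 (mem_support_iff.1 hJ)) (support_nonempty.2 h)

theorem l1Norm_monomial (J : σ →₀ ℕ) (c : ℝ) : l1Norm (monomial J c) = |c| := by
  classical
  simp [l1Norm_eq_sum (support_monomial_subset (s := J))]

theorem l1Norm_one : l1Norm (1 : MvPolynomial σ ℝ) = 1 :=
  (l1Norm_monomial 0 1).trans abs_one

theorem l1Norm_smul (c : ℝ) (P : MvPolynomial σ ℝ) : l1Norm (c • P) = |c| * l1Norm P := by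
  rw [l1Norm_eq_sum (support_smul (f := P)), l1Norm, mul_sum]
  simp [abs_mul]

theorem l1Norm_add_le (P Q : MvPolynomial σ ℝ) : l1Norm (P + Q) ≤ l1Norm P + l1Norm Q := by
  classical
  calc l1Norm (P + Q) = ∑ J ∈ P.support ∪ Q.support, |coeff J P + coeff J Q| := by
        simp only [l1Norm_eq_sum support_add, coeff_add]
    _ ≤ ∑ J ∈ P.support ∪ Q.support, (|coeff J P| + |coeff J Q|) :=
        sum_le_sum fun J _ => abs_add_le _ _
    _ ≤ l1Norm P + l1Norm Q := by
        rw [sum_add_distrib]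
        exact add_le_add (sum_abs_coeff_le_l1Norm _ _) (sum_abs_coeff_le_l1Norm _ _)

theorem l1Norm_sum_le (s : Finset ι) (P : ι → MvPolynomial σ ℝ) :
    l1Norm (∑ i ∈ s, P i) ≤ ∑ i ∈ s, l1Norm (P i) :=
  le_sum_of_subadditive l1Norm (by simp [l1Norm]) l1Norm_add_le s P

theorem l1Norm_mul_le (P Q : MvPolynomial σ ℝ) : l1Norm (P * Q) ≤ l1Norm P * l1Norm Q := by
  calc l1Norm (P * Q) = l1Norm (∑ J ∈ P.support, ∑ K ∈ Q.support,
          monomial J (coeff J P) * monomial K (coeff K Q)) := by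
        rw [← sum_mul_sum, ← P.as_sum, ← Q.as_sum]
    _ ≤ ∑ J ∈ P.support, ∑ K ∈ Q.support,
          l1Norm (monomial J (coeff J P) * monomial K (coeff K Q)) :=
        (l1Norm_sum_le _ _).trans (sum_le_sum fun J _ => l1Norm_sum_le _ _)
    _ = l1Norm P * l1Norm Q := by
        simp only [monomial_mul, l1Norm_monomial, abs_mul, ← sum_mul_sum]
        rfl

theorem l1Norm_prod_le (s : Finset ι) (P : ι → MvPolynomial σ ℝ) :
    l1Norm (∏ i ∈ s, P i) ≤ ∏ i ∈ s, l1Norm (P i) := by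
  classical
  induction s using Finset.induction_on with
  | empty => simp [l1Norm_one]
  | insert i s hi ih =>
    rw [prod_insert hi, prod_insert hi]
    exact (l1Norm_mul_le _ _).trans (mul_le_mul_of_nonneg_left ih (l1Norm_nonneg _))

theorem l1Norm_pow_le (P : MvPolynomial σ ℝ) (n : ℕ) : l1Norm (P ^ n) ≤ l1Norm P ^ n := by
  simpa using l1Norm_prod_le (range n) fun _ => P

theorem l1Norm_det_le [Fintype ι] [DecidableEq ι] {M : Matrix ι ι (MvPolynomial σ ℝ)} {B : ℝ}
    (hM : ∀ i j, l1Norm (M i j) ≤ B) :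
    l1Norm M.det ≤ (Fintype.card ι).factorial * B ^ Fintype.card ι := by
  have hterm (π : Equiv.Perm ι) :
      l1Norm (Equiv.Perm.sign π • ∏ i, M (π i) i) ≤ B ^ Fintype.card ι :=
    calc l1Norm (Equiv.Perm.sign π • ∏ i, M (π i) i) = l1Norm (∏ i, M (π i) i) := by
          rcases Int.units_eq_one_or (Equiv.Perm.sign π) with h | h
          · rw [h, one_smul]
          · simpa [h] using l1Norm_smul (-1) (∏ i, M (π i) i)
      _ ≤ ∏ i, l1Norm (M (π i) i) := l1Norm_prod_le _ _
      _ ≤ B ^ Fintype.card ι :=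
          (prod_le_prod (fun _ _ => l1Norm_nonneg _) fun i _ => hM (π i) i).trans_eq (by simp)
  calc l1Norm M.det ≤ ∑ _π : Equiv.Perm ι, B ^ Fintype.card ι := by
        rw [Matrix.det_apply]
        exact (l1Norm_sum_le _ _).trans (sum_le_sum fun π _ => hterm π)
    _ = _ := by simp [Fintype.card_perm]

end CoeffNorm

section Integral

variable {σ ι : Type*}

variable (σ) in
/-- The subring of polynomials with integer coefficients. -/
noncomputable def integralPolys : Subring (MvPolynomial σ ℝ) :=
  (MvPolynomial.map (Int.castRingHom ℝ)).range

theorem mem_integralPolys_iff {P : MvPolynomial σ ℝ} :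
    P ∈ integralPolys σ ↔ ∀ J, ∃ z : ℤ, (z : ℝ) = coeff J P := by
  refine ⟨?_, fun h => ?_⟩
  · rintro ⟨Q, rfl⟩ J
    exact ⟨coeff J Q, by simp [coeff_map]⟩
  · choose z hz using h
    rw [P.as_sum]
    exact Subring.sum_mem _ fun J _ => RingHom.mem_range.2 ⟨monomial J (z J), by simp [hz]⟩

theorem det_mem_subring {R : Type*} [CommRing R] (S : Subring R) [Fintype ι] [DecidableEq ι]
    {M : Matrix ι ι R} (hM : ∀ i j, M i j ∈ S) : M.det ∈ S := by
  choose N hN using fun i j => (⟨⟨M i j, hM i j⟩, rfl⟩ : ∃ x : S, S.subtype x = M i j)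
  have hMN : M = S.subtype.mapMatrix (Matrix.of N) := by ext i j; exact (hN i j).symm
  rw [hMN, ← RingHom.map_det]
  exact Subtype.prop _

end Integral

section Taylor

variable {σ R S : Type*} [CommRing R] [CommRing S]

/-- The substitution `X l ↦ X l + β l`. -/
noncomputable def translate (β : σ → R) : MvPolynomial σ R →ₐ[R] MvPolynomial σ R :=
  aeval fun l => X l + C (β l)

theorem translate_X (β : σ → R) (l : σ) : translate β (X l) = X l + C (β l) :=
  aeval_X _ l

theorem translate_zero (P : MvPolynomial σ R) : translate 0 P = P := by
  refine DFunLike.congr_fun (algHom_ext (g := AlgHom.id R _) fun l => ?_) P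
  simp [translate_X]

theorem eval_translate (β γ : σ → R) (P : MvPolynomial σ R) :
    eval γ (translate β P) = eval (γ + β) P := by
  induction P using MvPolynomial.induction_on with
  | C c => simp
  | add P Q hP hQ => simp [hP, hQ]
  | mul_X P l hP => simp [hP, translate_X]

theorem translate_translate (β γ : σ → R) (P : MvPolynomial σ R) :
    translate β (translate γ P) = translate (β + γ) P := by
  refine DFunLike.congr_fun (algHom_ext (f := (translate β).comp (translate γ)) fun l => ?_) P
  simp [translate_X, add_assoc]

theorem map_translate (f : R →+* S) (β : σ → R) (P : MvPolynomial σ R) :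
    MvPolynomial.map f (translate β P) = translate (f ∘ β) (MvPolynomial.map f P) := by
  induction P using MvPolynomial.induction_on with
  | C c => simp
  | add P Q hP hQ => simp [hP, hQ]
  | mul_X P l hP => simp [hP, translate_X]

/-- The divided derivative `∂^I / I!`: the coefficient of `Y ^ I` in the Taylor expansion
of `P (X + Y)`. -/
noncomputable def hasse (I : σ →₀ ℕ) : MvPolynomial σ R →+ MvPolynomial σ R where
  toFun P := coeff I (translate X (MvPolynomial.map C P))
  map_zero' := by simp
  map_add' := by simp

theorem hasse_def (I : σ →₀ ℕ) (P : MvPolynomial σ R) :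
    hasse I P = coeff I (translate X (MvPolynomial.map C P)) := rfl

theorem map_hasse (f : R →+* S) (I : σ →₀ ℕ) (P : MvPolynomial σ R) :
    MvPolynomial.map f (hasse I P) = hasse I (MvPolynomial.map f P) := by
  have hX : MvPolynomial.map f ∘ (X : σ → _) = X := funext fun l => by simp
  have hC : (MvPolynomial.map f).comp C = (C : S →+* MvPolynomial σ S).comp f :=
    RingHom.ext fun c => by simp
  rw [hasse_def, ← coeff_map, map_translate, MvPolynomial.map_map, hX, hC,
    ← MvPolynomial.map_map, hasse_def]

theorem eval_hasse (β : σ → R) (I : σ →₀ ℕ) (P : MvPolynomial σ R) :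
    eval β (hasse I P) = coeff I (translate β P) := by
  have hX : eval β ∘ X = β := funext fun l => by simp
  have hC : (eval β).comp C = RingHom.id R := RingHom.ext fun c => by simp
  rw [hasse_def, ← coeff_map, map_translate, MvPolynomial.map_map, hX, hC, MvPolynomial.map_id]

theorem translate_hasse (β : σ → R) (I : σ →₀ ℕ) (P : MvPolynomial σ R) :
    translate β (hasse I P) = hasse I (translate β P) := by
  let τ : MvPolynomial σ R →+* MvPolynomial σ R := translate β
  have hX : τ ∘ X = X + C ∘ β := funext fun l => by simp [τ, translate_X]
  have hC : τ.comp C = C := RingHom.ext fun c => by simp [τ]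
  calc τ (hasse I P) = coeff I (translate (τ ∘ X) (MvPolynomial.map (τ.comp C) P)) := by
        rw [hasse_def, ← coeff_map, map_translate, MvPolynomial.map_map]
    _ = hasse I (translate β P) := by
        rw [hX, hC, hasse_def, map_translate, translate_translate]

variable [Fintype σ]

theorem coeff_translate_monomial (β : σ → R) (I J : σ →₀ ℕ) (c : R) :
    coeff I (translate β (monomial J c)) =
      c * ∏ l, (β l ^ (J l - I l) * ((J l).choose (I l) : R)) := by
  classical
  have hpow (l : σ) : (X l + C (β l)) ^ J l = ∑ i ∈ range (J l + 1),
      monomial (Finsupp.single l i) (β l ^ (J l - i) * ((J l).choose i : R)) := by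
    rw [add_pow]
    refine sum_congr rfl fun i _ => ?_
    rw [X_pow_eq_monomial, mul_assoc, ← map_pow, ← map_natCast C, ← map_mul, mul_comm,
      C_mul_monomial, mul_one]
  have hprod : translate β (monomial J c) = ∑ p ∈ Fintype.piFinset fun l => range (J l + 1),
      monomial (Finsupp.equivFunOnFinite.symm p)
        (c * ∏ l, (β l ^ (J l - p l) * ((J l).choose (p l) : R))) := by
    rw [translate, aeval_monomial, Finsupp.prod_fintype _ _ (by simp), prod_congr rfl fun l _ =>
      hpow l, prod_univ_sum, mul_sum]
    refine sum_congr rfl fun p _ => ?_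
    rw [← monomial_sum_prod, algebraMap_eq, C_mul_monomial, ← Finsupp.univ_sum_single
      (Finsupp.equivFunOnFinite.symm p)]
    rfl
  rw [hprod, coeff_sum]
  simp_rw [coeff_monomial]
  rw [sum_eq_single ⇑I]
  · exact if_pos (Finsupp.equivFunOnFinite_symm_coe I)
  · intro p _ hp
    exact if_neg fun h => hp (by rw [← h]; rfl)
  · intro hI
    obtain ⟨l, hl⟩ : ∃ l, J l < I l := by simpa [Fintype.mem_piFinset, Nat.lt_succ_iff] using hI
    simp [prod_eq_zero (mem_univ l), Nat.choose_eq_zero_of_lt hl]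

theorem hasse_monomial (I J : σ →₀ ℕ) (c : R) :
    hasse I (monomial J c) = monomial (J - I) (c * ∏ l, ((J l).choose (I l) : R)) := by
  rw [hasse_def, map_monomial, coeff_translate_monomial, monomial_eq,
    Finsupp.prod_fintype _ _ (by simp), prod_mul_distrib]
  simp [mul_assoc, mul_comm]

theorem coeff_hasse (I K : σ →₀ ℕ) (P : MvPolynomial σ R) :
    coeff K (hasse I P) = (∏ l, ((K l + I l).choose (I l) : R)) * coeff (K + I) P := by
  classical
  conv_lhs => rw [P.as_sum, map_sum, coeff_sum]
  simp_rw [hasse_monomial, coeff_monomial]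
  rw [sum_eq_single (K + I)]
  · simp [mul_comm]
  · intro J _ hJ
    by_cases hIJ : I ≤ J
    · exact if_neg fun h => hJ (by rw [← h, tsub_add_cancel_of_le hIJ])
    · obtain ⟨l, hl⟩ : ∃ l, J l < I l := by simpa [Finsupp.le_def] using hIJ
      simp [prod_eq_zero (mem_univ l), Nat.choose_eq_zero_of_lt hl]
  · intro h
    simp [notMem_support_iff.1 h]

end Taylor

section HasseDerivatives

variable {σ R : Type*} [CommRing R]

theorem hasse_mem_integralPolys {P : MvPolynomial σ ℝ} (hP : P ∈ integralPolys σ) (I : σ →₀ ℕ) :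
    hasse I P ∈ integralPolys σ := by
  obtain ⟨Q, rfl⟩ := hP
  exact ⟨hasse I Q, map_hasse _ I Q⟩

theorem l1Norm_map_le (f : MvPolynomial σ ℝ →+ MvPolynomial σ ℝ) {P : MvPolynomial σ ℝ} {B : ℝ}
    (hf : ∀ J ∈ P.support, ∀ c, l1Norm (f (monomial J c)) ≤ B * |c|) :
    l1Norm (f P) ≤ B * l1Norm P :=
  calc l1Norm (f P) = l1Norm (∑ J ∈ P.support, f (monomial J (coeff J P))) := by
        rw [← map_sum, ← P.as_sum]
    _ ≤ ∑ J ∈ P.support, B * |coeff J P| :=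
        (l1Norm_sum_le _ _).trans (sum_le_sum fun J hJ => hf J hJ _)
    _ = B * l1Norm P := (mul_sum ..).symm

theorem prod_choose_le [Fintype σ] {J ρ : σ →₀ ℕ} (h : J ≤ ρ) (I : σ →₀ ℕ) :
    ∏ l, ((J l).choose (I l) : ℝ) ≤ 2 ^ ρ.degree := by
  rw [Finsupp.degree_eq_sum, ← prod_pow_eq_pow_sum]
  refine prod_le_prod (fun _ _ => by positivity) fun l _ => ?_
  calc ((J l).choose (I l) : ℝ) ≤ 2 ^ J l := by exact_mod_cast Nat.choose_le_two_pow _ _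
    _ ≤ 2 ^ ρ l := pow_le_pow_right₀ one_le_two (h l)

variable [Finite σ]

theorem pderiv_hasse (l : σ) (I : σ →₀ ℕ) (P : MvPolynomial σ R) :
    pderiv l (hasse I P) = (I l + 1) • hasse (I + Finsupp.single l 1) P := by
  classical
  cases nonempty_fintype σ
  have hchoose (K : σ →₀ ℕ) (m : σ) : ((K + .single l 1 : σ →₀ ℕ) m + I m).choose (I m) *
        (if m = l then K l + 1 else 1) =
      (K m + (I + .single l 1 : σ →₀ ℕ) m).choose ((I + .single l 1 : σ →₀ ℕ) m) *
        (if m = l then I l + 1 else 1) := by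
    rcases eq_or_ne m l with rfl | hm
    · have h := Nat.choose_succ_right_eq (K m + I m + 1) (I m)
      simp only [Finsupp.add_apply, Finsupp.single_eq_same, if_true, ← add_assoc]
      rw [h, add_right_comm]
      congr 1
      omega
    · simp [hm]
  ext K
  have hprod := congrArg (Nat.cast (R := R)) (prod_congr rfl fun m (_ : m ∈ univ) => hchoose K m)
  simp only [prod_mul_distrib, prod_ite_eq', mem_univ, if_true] at hprod
  push_cast at hprod
  rw [coeff_pderiv, coeff_smul, coeff_hasse, coeff_hasse, add_right_comm, ← add_assoc,
    nsmul_eq_mul, mul_right_comm, ← mul_assoc]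
  push_cast
  rw [hprod, mul_comm (_ + 1 : R)]

theorem hasse_mem_multidegreeLE {ρ : σ →₀ ℕ} {P : MvPolynomial σ R} (hP : P ∈ multidegreeLE R ρ)
    (I : σ →₀ ℕ) : hasse I P ∈ multidegreeLE R ρ := by
  cases nonempty_fintype σ
  refine mem_multidegreeLE.2 fun K hK => ?_
  rw [coeff_hasse] at hK
  exact le_self_add.trans (mem_multidegreeLE.1 hP _ (right_ne_zero_of_mul hK))

theorem le_of_hasse_ne_zero {ρ : σ →₀ ℕ} {P : MvPolynomial σ R} (hP : P ∈ multidegreeLE R ρ)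
    {I : σ →₀ ℕ} (h : hasse I P ≠ 0) : I ≤ ρ := by
  cases nonempty_fintype σ
  obtain ⟨K, hK⟩ := ne_zero_iff.1 h
  rw [coeff_hasse] at hK
  exact le_add_self.trans (mem_multidegreeLE.1 hP _ (right_ne_zero_of_mul hK))

theorem translate_mem_multidegreeLE {ρ : σ →₀ ℕ} {P : MvPolynomial σ R}
    (hP : P ∈ multidegreeLE R ρ) (β : σ → R) : translate β P ∈ multidegreeLE R ρ := by
  cases nonempty_fintype σ
  refine mem_multidegreeLE.2 fun I hI => ?_
  rw [← eval_hasse] at hI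
  exact le_of_hasse_ne_zero hP fun h0 => hI (by rw [h0, map_zero])

theorem l1Norm_hasse_le {ρ : σ →₀ ℕ} {P : MvPolynomial σ ℝ} (hP : P ∈ multidegreeLE ℝ ρ)
    (I : σ →₀ ℕ) : l1Norm (hasse I P) ≤ 2 ^ ρ.degree * l1Norm P := by
  cases nonempty_fintype σ
  refine l1Norm_map_le _ fun J hJ c => ?_
  rw [hasse_monomial, l1Norm_monomial, abs_mul, mul_comm, abs_of_nonneg (by positivity)]
  gcongr
  exact prod_choose_le (mem_multidegreeLE.1 hP J (mem_support_iff.1 hJ)) I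

theorem l1Norm_translate_le {ρ : σ →₀ ℕ} {P : MvPolynomial σ ℝ} (hP : P ∈ multidegreeLE ℝ ρ)
    {β : σ → ℝ} {A : ℝ} (hβ : ∀ l, 1 + |β l| ≤ A) :
    l1Norm (translate β P) ≤ A ^ ρ.degree * l1Norm P := by
  cases nonempty_fintype σ
  have hlinear (l : σ) : l1Norm (X l + C (β l)) ≤ A :=
    calc l1Norm (X l + C (β l)) ≤ l1Norm (X l : MvPolynomial σ ℝ) + l1Norm (C (β l)) :=
          l1Norm_add_le _ _
      _ = 1 + |β l| := by rw [X, C_apply, l1Norm_monomial, l1Norm_monomial, abs_one]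
      _ ≤ A := hβ l
  refine l1Norm_map_le (translate β : MvPolynomial σ ℝ →+ MvPolynomial σ ℝ) fun J hJ c => ?_
  have hJρ := mem_multidegreeLE.1 hP J (mem_support_iff.1 hJ)
  calc l1Norm (translate β (monomial J c)) = |c| * l1Norm (∏ l, (X l + C (β l)) ^ J l) := by
        rw [translate, aeval_monomial, Finsupp.prod_fintype _ _ (by simp), algebraMap_eq,
          ← smul_eq_C_mul, l1Norm_smul]
    _ ≤ |c| * ∏ l, A ^ ρ l := by
        refine mul_le_mul_of_nonneg_left ((l1Norm_prod_le _ _).trans ?_) (abs_nonneg _)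
        refine prod_le_prod (fun _ _ => l1Norm_nonneg _) fun l _ => ?_
        have hA : 1 ≤ A := (le_add_of_nonneg_right (abs_nonneg _)).trans (hβ l)
        calc l1Norm ((X l + C (β l)) ^ J l) ≤ A ^ J l :=
              (l1Norm_pow_le _ _).trans (pow_le_pow_left₀ (l1Norm_nonneg _) (hlinear l) _)
          _ ≤ A ^ ρ l := pow_le_pow_right₀ hA (hJρ l)
    _ = A ^ ρ.degree * |c| := by
        rw [prod_pow_eq_pow_sum, Finsupp.degree_eq_sum, mul_comm]

end HasseDerivatives

section Index

variable {σ R : Type*} [CommRing R] [Fintype σ]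

/-- The polynomials whose index at the point `β` with respect to the weights `1 / r l` is at
least `θ`. -/
noncomputable def indexGE (r : σ →₀ ℕ) (β : σ → R) (θ : ℝ) : Submodule R (MvPolynomial σ R) :=
  (restrictSupport R {J | θ ≤ weight r J}).comap (translate β).toLinearMap

theorem mem_indexGE {r : σ →₀ ℕ} {β : σ → R} {θ : ℝ} {P : MvPolynomial σ R} :
    P ∈ indexGE r β θ ↔ ∀ J, coeff J (translate β P) ≠ 0 → θ ≤ weight r J :=
  mem_restrictSupport_iff_coeff

instance indexGE.gradedMonoid (r : σ →₀ ℕ) (β : σ → R) :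
    SetLike.GradedMonoid (indexGE r β) where
  one_mem := mem_indexGE.2 fun J _ => weight_nonneg r J
  mul_mem θ θ' P Q hP hQ := by
    have := (weight.gradedMonoid (R := R) r).mul_mem hP hQ
    rwa [indexGE, Submodule.mem_comap, AlgHom.toLinearMap_apply, map_mul]

theorem hasse_mem_indexGE {r : σ →₀ ℕ} {β : σ → R} {θ : ℝ} {P : MvPolynomial σ R}
    (hP : P ∈ indexGE r β θ) (I : σ →₀ ℕ) : hasse I P ∈ indexGE r β (max 0 (θ - weight r I)) := by
  refine mem_indexGE.2 fun J hJ => max_le (weight_nonneg r J) ?_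
  rw [translate_hasse, coeff_hasse] at hJ
  have := mem_indexGE.1 hP _ (right_ne_zero_of_mul hJ)
  rw [weight_add] at this
  linarith

end Index

section Wronskian

open scoped MonomialOrder

theorem exists_det_ne_zero_of_linearIndependent {R ι : Type*} [CommRing R] [Nontrivial R] {k : ℕ}
    {v : Fin k → ι → R} (hv : LinearIndependent R v) :
    ∃ f : Fin k → ι, (Matrix.of fun i s => v s (f i)).det ≠ 0 := by
  induction k with
  | zero => exact ⟨Fin.elim0, by simp⟩
  | succ k ih =>
    obtain ⟨f, hf⟩ := ih (hv.comp Fin.succ (Fin.succ_injective k))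
    by_contra! hdet
    let minor (s : Fin (k + 1)) : R := (Matrix.of fun p q => v (s.succAbove q) (f p)).det
    have hlaplace : ∑ s : Fin (k + 1), ((-1) ^ (s : ℕ) * minor s) • v s = 0 := by
      funext i
      rw [Pi.zero_apply, ← hdet (Fin.cons i f), Matrix.det_succ_row_zero, Finset.sum_apply]
      exact sum_congr rfl fun s _ => mul_right_comm _ _ _
    have h0 := Fintype.linearIndependent_iff.1 hv _ hlaplace 0
    exact hf (by simpa [minor] using h0)

/-- The iterated derivative of `x` along a list of derivations. -/
def iterDeriv {k R ι : Type*} [CommRing k] [CommRing R] [Algebra k R] (d : ι → Derivation k R R)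
    (L : List ι) (x : R) : R :=
  L.foldr (fun l => d l) x

variable {k R ι : Type*} [CommRing k] [CommRing R] [Algebra k R]

theorem sum_cross_mul_iterDeriv_eq_zero {n : Type*} [Fintype n] (d : ι → Derivation k R R) (l : ι)
    (L : List ι) (w : R) {u φ : n → R} (hL : ∑ s, u s * iterDeriv d L (φ s) = 0)
    (hlL : ∑ s, u s * iterDeriv d (l :: L) (φ s) = 0) :
    ∑ s, (w * d l (u s) - u s * d l w) * iterDeriv d L (φ s) = 0 := by
  have hderiv : ∑ s, iterDeriv d L (φ s) * d l (u s) = 0 := by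
    have h := congrArg (d l) hL
    simp only [map_sum, map_zero, Derivation.leibniz, smul_eq_mul, sum_add_distrib] at h
    rwa [show ∑ s, u s * d l (iterDeriv d L (φ s)) = 0 from hlL, zero_add] at h
  calc ∑ s, (w * d l (u s) - u s * d l w) * iterDeriv d L (φ s)
      = w * ∑ s, iterDeriv d L (φ s) * d l (u s) - d l w * ∑ s, u s * iterDeriv d L (φ s) := by
        rw [mul_sum, mul_sum, ← sum_sub_distrib]
        exact sum_congr rfl fun s _ => by ring
    _ = 0 := by rw [hderiv, hL, mul_zero, mul_zero, sub_zero]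

theorem linearIndependent_iterDeriv [IsDomain R] {d : ι → Derivation k R R}
    (hconst : ∀ u v : R, u ≠ 0 → (∀ l, u * d l v = v * d l u) → ∃ c : k, v = c • u)
    {n : ℕ} {φ : Fin n → R} (hφ : LinearIndependent k φ) :
    LinearIndependent R fun s (L : {L : List ι // L.length < n}) => iterDeriv d L (φ s) := by
  have main {u : Fin n → R} (hu : ∀ L : List ι, L.length < n →
      ∑ s, u s * iterDeriv d L (φ s) = 0) : u = 0 := by
    induction n with
    | zero => exact Subsingleton.elim _ _
    | succ n ih =>
      by_contra hne
      obtain ⟨s₀, hs₀⟩ : ∃ s₀, u s₀ ≠ 0 := Function.ne_iff.1 hne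
      have hcross (l : ι) (s : Fin n) :
          u s₀ * d l (u (s₀.succAbove s)) = u (s₀.succAbove s) * d l (u s₀) := by
        refine sub_eq_zero.1 <| congrFun (ih (φ := φ ∘ s₀.succAbove)
          (hφ.comp _ Fin.succAbove_right_injective)
          (u := fun s => u s₀ * d l (u (s₀.succAbove s)) - u (s₀.succAbove s) * d l (u s₀))
          fun L hL => ?_) s
        have := sum_cross_mul_iterDeriv_eq_zero d l L (u s₀) (hu L (by lia))
          (hu (l :: L) (by simpa using hL))
        simpa [Fin.sum_univ_succAbove _ s₀] using this
      choose c hc using fun s => hconst (u s₀) (u s) hs₀ fun l => by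
        rcases Fin.eq_self_or_eq_succAbove s₀ s with rfl | ⟨s, rfl⟩
        exacts [rfl, hcross l s]
      have hrel : u s₀ * ∑ s, c s • φ s = 0 := by
        rw [← hu [] (by simp), mul_sum]
        refine sum_congr rfl fun s _ => ?_
        rw [hc s, mul_smul_comm, smul_mul_assoc]; rfl
      have hc₀ := Fintype.linearIndependent_iff.1 hφ c ((mul_eq_zero.1 hrel).resolve_left hs₀) s₀
      exact hs₀ (by rw [hc s₀, hc₀, zero_smul])
  refine Fintype.linearIndependent_iff.2 fun u hu => congrFun (main fun L hL => ?_)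
  simpa using congrFun hu ⟨L, hL⟩

variable {σ : Type*}

theorem coeff_X_mul_pderiv (l : σ) (P : MvPolynomial σ R) (J : σ →₀ ℕ) :
    coeff J (X l * pderiv l P) = J l * coeff J P := by
  classical
  induction P using MvPolynomial.induction_on' with
  | monomial I c =>
    rw [X, pderiv_monomial, monomial_mul, one_mul, coeff_monomial, coeff_monomial,
      mul_ite, mul_zero]
    rcases eq_or_ne (I l) 0 with h0 | h0
    · rcases eq_or_ne I J with rfl | hIJ
      · simp [h0]
      · simp [h0, hIJ]
    · rw [add_tsub_cancel_of_le (Finsupp.single_le_iff.2 (Nat.one_le_iff_ne_zero.2 h0))]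
      rcases eq_or_ne I J with rfl | hIJ
      · simp [mul_comm]
      · simp [hIJ]
  | add P Q hP hQ => simp [mul_add, hP, hQ]

theorem exists_hasse_eq_iterDeriv_pderiv [Finite σ] (L : List σ) :
    ∃ (c : ℕ) (I : σ →₀ ℕ), I.degree = L.length ∧
      ∀ P : MvPolynomial σ R, iterDeriv (fun l => pderiv l) L P = c • hasse I P := by
  cases nonempty_fintype σ
  induction L with
  | nil => exact ⟨1, 0, by simp, fun P => by ext K; simp [iterDeriv, coeff_hasse]⟩
  | cons l L ih =>
    obtain ⟨c, I, hI, h⟩ := ih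
    refine ⟨c * (I l + 1), I + .single l 1, by simp [hI], fun P => ?_⟩
    calc iterDeriv (fun l => pderiv l) (l :: L) P = pderiv l (c • hasse I P) := by
          rw [← h]; rfl
      _ = _ := by rw [map_nsmul, pderiv_hasse, mul_smul]

variable {K : Type*} [Field K] [CharZero K]

theorem exists_eq_smul_of_mul_pderiv_eq [Finite σ] {u v : MvPolynomial σ K} (hu : u ≠ 0)
    (h : ∀ l, u * pderiv l v = v * pderiv l u) : ∃ c : K, v = c • u := by
  classical
  let _ : LinearOrder σ := linearOrderOfSTO WellOrderingRel
  let m : MonomialOrder σ := .lex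
  have hdeg (l : σ) (P : MvPolynomial σ K) : m.degree (X l * pderiv l P) ≼[m] m.degree P := by
    refine m.degree_le_iff.2 fun J hJ => m.le_degree ?_
    rw [mem_support_iff, coeff_X_mul_pderiv] at hJ
    exact mem_support_iff.2 (right_ne_zero_of_mul hJ)
  let I := m.degree u
  let c := coeff I v / coeff I u
  let w := v - c • u
  have hwI : coeff I w = 0 := by
    have : coeff I u ≠ 0 := m.coeff_degree_ne_zero_iff.2 hu
    simp [w, c, this]
  have hw (l : σ) : u * (X l * pderiv l w) = w * (X l * pderiv l u) := by
    simp only [w, map_sub, Derivation.map_smul, sub_mul, mul_sub, mul_smul_comm, smul_mul_assoc]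
    linear_combination X l * h l
  refine ⟨c, sub_eq_zero.1 (by_contra fun hw₀ : w ≠ 0 => ?_)⟩
  let J := m.degree w
  have hwJ : coeff J w ≠ 0 := m.coeff_degree_ne_zero_iff.2 hw₀
  have huI : coeff I u ≠ 0 := m.coeff_degree_ne_zero_iff.2 hu
  have hIJ : I = J := Finsupp.ext fun l => by
    have hl := congrArg (coeff (I + J)) (hw l)
    rw [m.coeff_mul_of_add_of_degree_le le_rfl (hdeg l w), add_comm I J,
      m.coeff_mul_of_add_of_degree_le le_rfl (hdeg l u), coeff_X_mul_pderiv,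
      coeff_X_mul_pderiv] at hl
    have : (J l : K) = I l := mul_left_cancel₀ (mul_ne_zero huI hwJ) (by linear_combination hl)
    exact_mod_cast this.symm
  exact hwJ (hIJ ▸ hwI)

theorem exists_det_hasse_ne_zero [Finite σ] {n : ℕ} {φ : Fin n → MvPolynomial σ K}
    (hφ : LinearIndependent K φ) :
    ∃ I : Fin n → σ →₀ ℕ, (∀ i, (I i).degree < n) ∧
      (Matrix.of fun i s => hasse (I i) (φ s)).det ≠ 0 := by
  obtain ⟨L, hL⟩ := exists_det_ne_zero_of_linearIndependent
    (linearIndependent_iterDeriv (fun u v hu => exists_eq_smul_of_mul_pderiv_eq hu) hφ)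
  choose c I hI hc using exists_hasse_eq_iterDeriv_pderiv (σ := σ) (R := K)
  refine ⟨fun i => I (L i).1, fun i => (hI _).trans_lt (L i).2, fun h0 => hL ?_⟩
  simp only [hc, nsmul_eq_mul]
  exact (Matrix.det_mul_column (fun i => (c (L i).1 : MvPolynomial σ K))
    (.of fun i s => hasse (I (L i).1) (φ s))).trans (by rw [h0, mul_zero])

end Wronskian

section Separation

theorem exists_sum_mul_eq_of_not_linearIndependent {K A : Type*} [Field K] [CommRing A]
    [Algebra K A] {S T : Submodule K A} {n : ℕ} {φ ψ : Fin (n + 1) → A} (hφS : ∀ i, φ i ∈ S)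
    (hψT : ∀ i, ψ i ∈ T) (hφ : ¬ LinearIndependent K φ) :
    ∃ φ' ψ' : Fin n → A, (∀ i, φ' i ∈ S) ∧ (∀ i, ψ' i ∈ T) ∧
      ∑ i, φ' i * ψ' i = ∑ i, φ i * ψ i := by
  obtain ⟨g, hg, i₀, hi₀⟩ := Fintype.not_linearIndependent_iff.1 hφ
  rw [Fin.sum_univ_succAbove _ i₀] at hg
  have hφi₀ : φ i₀ = -∑ i, ((g i₀)⁻¹ * g (i₀.succAbove i)) • φ (i₀.succAbove i) := by
    rw [eq_neg_iff_add_eq_zero, ← inv_smul_smul₀ hi₀ (φ i₀)]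
    simp only [mul_smul, ← smul_sum, ← smul_add]
    rw [hg, smul_zero]
  refine ⟨fun i => φ (i₀.succAbove i),
    fun i => ψ (i₀.succAbove i) - ((g i₀)⁻¹ * g (i₀.succAbove i)) • ψ i₀, fun i => hφS _,
    fun i => T.sub_mem (hψT _) (T.smul_mem _ (hψT _)), ?_⟩
  rw [Fin.sum_univ_succAbove _ i₀, hφi₀, neg_mul, sum_mul, ← sum_neg_distrib, ← sum_add_distrib]
  exact sum_congr rfl fun i _ => by rw [mul_sub, mul_smul_comm, smul_mul_assoc]; ring

theorem exists_linearIndependent_of_mem_mul {K A : Type*} [Field K] [CommRing A] [Algebra K A]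
    {S T : Submodule K A} {x : A} (hx : x ∈ S * T) :
    ∃ (n : ℕ) (φ ψ : Fin n → A), (∀ i, φ i ∈ S) ∧ (∀ i, ψ i ∈ T) ∧ LinearIndependent K φ ∧
      LinearIndependent K ψ ∧ ∑ i, φ i * ψ i = x := by
  classical
  have hex : ∃ (n : ℕ) (φ ψ : Fin n → A), (∀ i, φ i ∈ S) ∧ (∀ i, ψ i ∈ T) ∧
      ∑ i, φ i * ψ i = x := by
    induction hx using Submodule.mul_induction_on' with
    | mem_mul_mem a ha b hb => exact ⟨1, fun _ => a, fun _ => b, fun _ => ha, fun _ => hb, by simp⟩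
    | add x _ y _ hx hy =>
      obtain ⟨n, φ, ψ, hφ, hψ, rfl⟩ := hx
      obtain ⟨m, φ', ψ', hφ', hψ', rfl⟩ := hy
      exact ⟨n + m, Fin.append φ φ', Fin.append ψ ψ', Fin.addCases (by simpa) (by simpa),
        Fin.addCases (by simpa) (by simpa), by simp [Fin.sum_univ_add]⟩
  obtain ⟨φ, ψ, hφ, hψ, hsum⟩ := Nat.find_spec hex
  have hmin {m : ℕ} (hm : Nat.find hex = m + 1) {φ' ψ' : Fin m → A} (hφ' : ∀ i, φ' i ∈ S)
      (hψ' : ∀ i, ψ' i ∈ T) : ∑ i, φ' i * ψ' i ≠ x := fun h =>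
    Nat.find_min hex (hm ▸ m.lt_succ_self) ⟨φ', ψ', hφ', hψ', h⟩
  refine ⟨_, φ, ψ, hφ, hψ, ?_, ?_, hsum⟩
  all_goals
    by_contra hdep
    generalize Nat.find hex = n at *
    cases n with
    | zero => exact hdep linearIndependent_empty_type
    | succ n => ?_
  · obtain ⟨φ', ψ', hφ', hψ', h⟩ := exists_sum_mul_eq_of_not_linearIndependent hφ hψ hdep
    exact hmin rfl hφ' hψ' (h.trans hsum)
  · obtain ⟨ψ', φ', hψ', hφ', h⟩ := exists_sum_mul_eq_of_not_linearIndependent hψ hφ hdep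
    refine hmin rfl hφ' hψ' ?_
    simpa only [mul_comm, hsum] using h

variable {σ R : Type*} [CommRing R] {ρ τ : σ →₀ ℕ}

theorem multidegreeLE_add (ρ τ : σ →₀ ℕ) :
    multidegreeLE R (ρ + τ) = multidegreeLE R ρ * multidegreeLE R τ := by
  rw [multidegreeLE, multidegreeLE, multidegreeLE, ← restrictSupport_add]
  congr 1
  refine (Set.Iic_add_Iic_subset _ _).antisymm' fun J hJ => ?_
  refine ⟨J ⊓ ρ, Set.mem_Iic.2 inf_le_right, J - J ⊓ ρ, Set.mem_Iic.2 fun l => ?_,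
    add_tsub_cancel_of_le inf_le_left⟩
  have := (Set.mem_Iic.1 hJ) l
  simp only [Finsupp.tsub_apply, Finsupp.inf_apply, Finsupp.add_apply] at this ⊢
  omega

theorem coeff_add_mul_of_disjoint (h : Disjoint ρ.support τ.support) {U V : MvPolynomial σ R}
    (hU : U ∈ multidegreeLE R ρ) (hV : V ∈ multidegreeLE R τ) {J K : σ →₀ ℕ}
    (hJ : J.support ⊆ ρ.support) (hK : K.support ⊆ τ.support) :
    coeff (J + K) (U * V) = coeff J U * coeff K V := by
  classical
  rw [coeff_mul]
  refine sum_eq_single_of_mem (J, K) (mem_antidiagonal.2 rfl) ?_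
  rintro ⟨J', K'⟩ hsum hne
  by_contra h0
  have hJ' := Finsupp.support_mono (mem_multidegreeLE.1 hU J' (left_ne_zero_of_mul h0))
  have hK' := Finsupp.support_mono (mem_multidegreeLE.1 hV K' (right_ne_zero_of_mul h0))
  have hJJ' : J' = J := Finsupp.ext fun l => by
    have hl := DFunLike.congr_fun (mem_antidiagonal.1 hsum) l
    by_cases hlρ : l ∈ ρ.support
    · have hlτ := disjoint_left.1 h hlρ
      simpa [Finsupp.notMem_support_iff.1 (mt (@hK l) hlτ),
        Finsupp.notMem_support_iff.1 (mt (@hK' l) hlτ)] using hl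
    · rw [Finsupp.notMem_support_iff.1 (mt (@hJ l) hlρ),
        Finsupp.notMem_support_iff.1 (mt (@hJ' l) hlρ)]
  subst hJJ'
  exact hne (Prod.ext rfl (add_left_cancel (mem_antidiagonal.1 hsum)))

theorem map_mem_multidegreeLE {S : Type*} [CommRing S] (f : R →+* S) {P : MvPolynomial σ R}
    (hP : P ∈ multidegreeLE R ρ) : MvPolynomial.map f P ∈ multidegreeLE S ρ := by
  refine mem_multidegreeLE.2 fun J hJ => mem_multidegreeLE.1 hP J fun h0 => hJ ?_
  rw [coeff_map, h0, map_zero]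

variable [Finite σ]

theorem hasse_add_mul_of_disjoint (h : Disjoint ρ.support τ.support) {U V : MvPolynomial σ R}
    (hU : U ∈ multidegreeLE R ρ) (hV : V ∈ multidegreeLE R τ) {I J : σ →₀ ℕ}
    (hI : I.support ⊆ ρ.support) (hJ : J.support ⊆ τ.support) :
    hasse (I + J) (U * V) = hasse I U * hasse J V := by
  simp only [hasse_def, map_mul]
  exact coeff_add_mul_of_disjoint h (translate_mem_multidegreeLE (map_mem_multidegreeLE _ hU) _)
    (translate_mem_multidegreeLE (map_mem_multidegreeLE _ hV) _) hI hJ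

variable {K : Type*} [Field K] [CharZero K]

theorem exists_det_hasse_ne_zero_of_mem_multidegreeLE {n : ℕ} {φ : Fin n → MvPolynomial σ K}
    (hφ : LinearIndependent K φ) (hφρ : ∀ s, φ s ∈ multidegreeLE K ρ) :
    ∃ I : Fin n → σ →₀ ℕ, (∀ i, (I i).degree < n) ∧ (∀ i, I i ≤ ρ) ∧ Function.Injective I ∧
      (Matrix.of fun i s => hasse (I i) (φ s)).det ≠ 0 ∧
      (Matrix.of fun i s => hasse (I i) (φ s)).det ∈ multidegreeLE K (n • ρ) := by
  obtain ⟨I, hIn, hdet⟩ := exists_det_hasse_ne_zero hφ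
  refine ⟨I, hIn, fun i => ?_, fun i j hij => ?_, hdet, ?_⟩
  · have hrow : ∃ s, hasse (I i) (φ s) ≠ 0 := by
      by_contra! h0
      exact hdet (Matrix.det_eq_zero_of_row_eq_zero i h0)
    obtain ⟨s, hs⟩ := hrow
    exact le_of_hasse_ne_zero (hφρ s) hs
  · by_contra hne
    exact hdet (Matrix.det_zero_of_row_eq hne (funext fun s => by simp [hij]))
  · have := det_mem_graded (multidegreeLE (σ := σ) K) (a := fun _ : Fin n => ρ)
      (M := .of fun i s => hasse (I i) (φ s)) fun i j => hasse_mem_multidegreeLE (hφρ j) (I i)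
    rwa [sum_const, card_univ, Fintype.card_fin] at this

theorem exists_mul_eq_det_hasse (h : Disjoint ρ.support τ.support) {P : MvPolynomial σ K}
    (hP : P ∈ multidegreeLE K (ρ + τ)) (hP0 : P ≠ 0) :
    ∃ (n : ℕ) (I J : Fin n → σ →₀ ℕ) (U V : MvPolynomial σ K),
      (∀ i, (I i).degree < n ∧ I i ≤ ρ) ∧ (∀ j, (J j).degree < n ∧ J j ≤ τ) ∧
      Function.Injective J ∧ 0 < n ∧
      U ≠ 0 ∧ V ≠ 0 ∧ U ∈ multidegreeLE K (n • ρ) ∧ V ∈ multidegreeLE K (n • τ) ∧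
      U * V = (Matrix.of fun i j => hasse (I i + J j) P).det := by
  obtain ⟨n, φ, ψ, hφρ, hψτ, hφ, hψ, rfl⟩ :=
    exists_linearIndependent_of_mem_mul (multidegreeLE_add (R := K) ρ τ ▸ hP)
  obtain ⟨I, hIn, hIρ, -, hU0, hU⟩ := exists_det_hasse_ne_zero_of_mem_multidegreeLE hφ hφρ
  obtain ⟨J, hJn, hJτ, hJ, hV0, hV⟩ := exists_det_hasse_ne_zero_of_mem_multidegreeLE hψ hψτ
  refine ⟨n, I, J, _, _, fun i => ⟨hIn i, hIρ i⟩, fun j => ⟨hJn j, hJτ j⟩, hJ,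
    Nat.pos_of_ne_zero fun hn => hP0 ?_, hU0, hV0, hU, hV, ?_⟩
  · subst hn
    exact Fin.sum_univ_zero _
  · rw [← Matrix.det_transpose (.of fun i s => hasse (J i) (ψ s)), ← Matrix.det_mul]
    congr 1
    ext1 i j
    rw [Matrix.mul_apply, Matrix.of_apply, map_sum]
    exact sum_congr rfl fun s _ => (hasse_add_mul_of_disjoint h (hφρ s) (hψτ s)
      (Finsupp.support_mono (hIρ i)) (Finsupp.support_mono (hJτ j))).symm

end Separation

section OneVariable

theorem isPrimitive_den_mul_X_sub_num (x : ℚ) :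
    (Polynomial.C (x.den : ℤ) * Polynomial.X - Polynomial.C x.num).IsPrimitive := by
  intro r hr
  rw [Polynomial.C_dvd_iff_dvd_coeff] at hr
  have hden : r ∣ x.den := by
    simpa only [Polynomial.coeff_sub, Polynomial.coeff_C_mul, Polynomial.coeff_X_one, mul_one,
      Polynomial.coeff_C_of_ne_zero one_ne_zero, sub_zero] using hr 1
  have hnum : r ∣ x.num := by simpa using hr 0
  exact x.isCoprime_num_den.isUnit_of_dvd' hnum hden

theorem den_pow_rootMultiplicity_dvd_leadingCoeff (f : Polynomial ℤ) (x : ℚ) :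
    (x.den : ℤ) ^ (f.map (Int.castRingHom ℚ)).rootMultiplicity x ∣ f.leadingCoeff := by
  have hden : (x.den : ℚ) ≠ 0 := by exact_mod_cast x.den_nz
  have hlinear : (Polynomial.C (x.den : ℤ) * Polynomial.X - Polynomial.C x.num).map
      (Int.castRingHom ℚ) = Polynomial.C (x.den : ℚ) * (Polynomial.X - Polynomial.C x) := by
    rw [mul_sub, ← map_mul, mul_comm _ x, Rat.mul_den_eq_num]
    simp
  have hprim (n : ℕ) :
      ((Polynomial.C (x.den : ℤ) * Polynomial.X - Polynomial.C x.num) ^ n).IsPrimitive := by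
    induction n with
    | zero => exact Polynomial.isPrimitive_one
    | succ n ih => rw [pow_succ]; exact ih.mul (isPrimitive_den_mul_X_sub_num x)
  have hdvd := (Polynomial.IsPrimitive.Int.dvd_iff_map_cast_dvd_map_cast _ f (hprim _)).2 <| by
    rw [Polynomial.map_pow, hlinear, mul_pow, ← map_pow]
    exact (Polynomial.isUnit_C.2 (pow_ne_zero _ hden).isUnit).mul_left_dvd.2
      (Polynomial.pow_rootMultiplicity_dvd _ x)
  have := Polynomial.leadingCoeff_dvd_leadingCoeff hdvd
  rwa [Polynomial.leadingCoeff_pow, sub_eq_add_neg, ← map_neg,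
    Polynomial.leadingCoeff_linear (by exact_mod_cast x.den_nz)] at this

theorem taylor_coeff_rootMultiplicity_ne_zero {R : Type*} [CommRing R] [IsDomain R]
    {f : Polynomial R} (hf : f ≠ 0) (x : R) :
    (Polynomial.taylor x f).coeff (f.rootMultiplicity x) ≠ 0 := by
  rw [Polynomial.rootMultiplicity_eq_natTrailingDegree, ← Polynomial.taylor_apply]
  exact Polynomial.trailingCoeff_nonzero_iff_nonzero.2 fun h =>
    hf (Polynomial.taylor_injective x (by simpa using h))

variable {σ R : Type*} [CommRing R]

theorem coeff_single_toMvPolynomial (a : σ) (j : ℕ) (f : Polynomial R) :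
    coeff (Finsupp.single a j) (f.toMvPolynomial a) = f.coeff j := by
  classical
  induction f using Polynomial.induction_on' with
  | add f g hf hg => simp [hf, hg]
  | monomial n c =>
    rw [← Polynomial.C_mul_X_pow_eq_monomial]
    simp [MvPolynomial.coeff_X_pow, Polynomial.coeff_X_pow, eq_comm,
      (Finsupp.single_injective a).eq_iff]

theorem map_toMvPolynomial {S : Type*} [CommRing S] (φ : R →+* S) (a : σ) (f : Polynomial R) :
    MvPolynomial.map φ (f.toMvPolynomial a) = (f.map φ).toMvPolynomial a := by
  induction f using Polynomial.induction_on' with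
  | add f g hf hg => simp [hf, hg]
  | monomial n c => simp [← Polynomial.C_mul_X_pow_eq_monomial]

theorem translate_toMvPolynomial (β : σ → R) (a : σ) (f : Polynomial R) :
    translate β (f.toMvPolynomial a) = (Polynomial.taylor (β a) f).toMvPolynomial a := by
  have : (translate β).comp (Polynomial.toMvPolynomial a) =
      (Polynomial.toMvPolynomial a).comp (Polynomial.taylorAlgHom (β a)) := by
    ext1
    simp [translate_X]
  exact DFunLike.congr_fun this f

theorem exists_toMvPolynomial_eq {a : σ} {n : ℕ} {P : MvPolynomial σ R}
    (hP : P ∈ multidegreeLE R (Finsupp.single a n)) :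
    ∃ f : Polynomial R, f.toMvPolynomial a = P := by
  refine ⟨∑ J ∈ P.support, Polynomial.monomial (J a) (coeff J P), ?_⟩
  conv_rhs => rw [P.as_sum]
  rw [map_sum]
  refine sum_congr rfl fun J hJ => ?_
  have hJa : Finsupp.single a (J a) = J := by
    refine (Finsupp.support_subset_singleton.1 ?_).symm
    exact (Finsupp.support_mono (mem_multidegreeLE.1 hP J (mem_support_iff.1 hJ))).trans
      Finsupp.support_single_subset
  rw [← Polynomial.C_mul_X_pow_eq_monomial]
  simp [X_pow_eq_monomial, C_mul_monomial, hJa]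

theorem exists_den_pow_le_l1Norm {a : σ} {n : ℕ} {P : MvPolynomial σ ℝ}
    (hP : P ∈ integralPolys σ) (hP0 : P ≠ 0) (hPn : P ∈ multidegreeLE ℝ (Finsupp.single a n))
    (β : σ → ℚ) :
    ∃ j : ℕ, coeff (Finsupp.single a j) (translate (fun l => (β l : ℝ)) P) ≠ 0 ∧
      ((β a).den : ℝ) ^ j ≤ l1Norm P := by
  obtain ⟨Q, rfl⟩ := hP
  have hQ : Q ∈ multidegreeLE ℤ (Finsupp.single a n) :=
    mem_multidegreeLE.2 fun J hJ => mem_multidegreeLE.1 hPn J (by simpa [coeff_map] using hJ)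
  obtain ⟨f, rfl⟩ := exists_toMvPolynomial_eq hQ
  have hf : f ≠ 0 := by rintro rfl; simp at hP0
  let g := f.map (Int.castRingHom ℚ)
  have hg : g ≠ 0 := (Polynomial.map_ne_zero_iff (RingHom.injective_int _)).2 hf
  have hcast : MvPolynomial.map (Int.castRingHom ℝ) (f.toMvPolynomial a) =
      MvPolynomial.map (Rat.castHom ℝ) (g.toMvPolynomial a) := by
    rw [map_toMvPolynomial, map_toMvPolynomial, Polynomial.map_map]
    congr 1
  refine ⟨g.rootMultiplicity (β a), ?_, ?_⟩
  · rw [hcast, show (fun l => (β l : ℝ)) = Rat.castHom ℝ ∘ β from rfl, ← map_translate, coeff_map,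
      translate_toMvPolynomial, coeff_single_toMvPolynomial]
    exact Rat.cast_ne_zero.2 (taylor_coeff_rootMultiplicity_ne_zero hg _)
  · have hle := Int.le_of_dvd (abs_pos.2 (Polynomial.leadingCoeff_ne_zero.2 hf))
      ((dvd_abs _ _).2 (den_pow_rootMultiplicity_dvd_leadingCoeff f (β a)))
    calc ((β a).den : ℝ) ^ g.rootMultiplicity (β a) ≤ |(f.leadingCoeff : ℝ)| := by
          exact_mod_cast hle
      _ ≤ _ := by
        have := abs_coeff_le_l1Norm (MvPolynomial.map (Int.castRingHom ℝ) (f.toMvPolynomial a))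
          (Finsupp.single a f.natDegree)
        rwa [coeff_map, coeff_single_toMvPolynomial] at this

end OneVariable

section RothLemma

theorem mul_sq_div_eight_le_sum {θ : ℝ} (hθ₀ : 0 ≤ θ) (hθ₁ : θ ≤ 1) {r n : ℕ} (hn : n ≤ r + 1) :
    n * (θ ^ 2 / 8) ≤ ∑ j ∈ range n, max 0 (θ - (j : ℝ) / r) := by
  rcases eq_or_ne r 0 with rfl | hr
  · simp only [Nat.cast_zero, div_zero, sub_zero, max_eq_right hθ₀, sum_const, card_range,
      nsmul_eq_mul]
    gcongr
    nlinarith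
  have : (1 : ℝ) ≤ r := by exact_mod_cast Nat.one_le_iff_ne_zero.2 hr
  let N := min n (⌊θ * r / 2⌋₊ + 1)
  have hN : (n : ℝ) * θ / 4 ≤ N := by
    have hfloor := Nat.lt_floor_add_one (θ * r / 2)
    have hnr : (n : ℝ) ≤ r + 1 := by exact_mod_cast hn
    simp only [N, Nat.cast_min, le_min_iff]
    constructor
    · nlinarith [(Nat.cast_nonneg n : (0 : ℝ) ≤ n)]
    · push_cast; nlinarith
  calc n * (θ ^ 2 / 8) = n * θ / 4 * (θ / 2) := by ring
    _ ≤ N * (θ / 2) := by gcongr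
    _ = ∑ _j ∈ range N, θ / 2 := by rw [sum_const, card_range, nsmul_eq_mul]
    _ ≤ ∑ j ∈ range N, max 0 (θ - (j : ℝ) / r) := sum_le_sum fun j hj => le_max_of_le_right <| by
        have hj : (j : ℝ) ≤ θ * r / 2 := (Nat.cast_le.2 (Nat.lt_succ_iff.1
          ((mem_range.1 hj).trans_le (min_le_right _ _)))).trans (Nat.floor_le (by positivity))
        have : (j : ℝ) / r ≤ θ / 2 := by rw [div_le_iff₀ (by positivity)]; linarith
        linarith
    _ ≤ ∑ j ∈ range n, max 0 (θ - (j : ℝ) / r) :=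
        sum_le_sum_of_subset_of_nonneg (range_mono (min_le_left _ _)) fun _ _ _ => le_max_left _ _

variable {σ : Type*}

theorem coeff_smul_mem_integralPolys {ρ τ : σ →₀ ℕ} (h : Disjoint ρ.support τ.support)
    {U V : MvPolynomial σ ℝ} (hU : U ∈ multidegreeLE ℝ ρ) (hV : V ∈ multidegreeLE ℝ τ)
    (hUV : U * V ∈ integralPolys σ) {K : σ →₀ ℕ} (hK : K.support ⊆ τ.support) :
    coeff K V • U ∈ integralPolys σ := by
  refine mem_integralPolys_iff.2 fun J => ?_
  rcases eq_or_ne (coeff J U) 0 with h0 | h0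
  · exact ⟨0, by simp [h0]⟩
  · rw [coeff_smul, smul_eq_mul, mul_comm, ← coeff_add_mul_of_disjoint h hU hV
      (Finsupp.support_mono (mem_multidegreeLE.1 hU J h0)) hK]
    exact mem_integralPolys_iff.1 hUV _

theorem l1Norm_coeff_smul_le {ρ τ : σ →₀ ℕ} (h : Disjoint ρ.support τ.support)
    {U V : MvPolynomial σ ℝ} (hU : U ∈ multidegreeLE ℝ ρ) (hV : V ∈ multidegreeLE ℝ τ)
    {K : σ →₀ ℕ} (hK : K.support ⊆ τ.support) : l1Norm (coeff K V • U) ≤ l1Norm (U * V) := by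
  calc l1Norm (coeff K V • U) = ∑ J ∈ U.support, |coeff (J + K) (U * V)| := by
        rw [l1Norm_eq_sum (support_smul (f := U))]
        refine sum_congr rfl fun J hJ => ?_
        rw [coeff_smul, smul_eq_mul, mul_comm, coeff_add_mul_of_disjoint h hU hV
          (Finsupp.support_mono (mem_multidegreeLE.1 hU J (mem_support_iff.1 hJ))) hK]
    _ = ∑ J ∈ U.support.map (addRightEmbedding K), |coeff J (U * V)| :=
        (sum_map U.support (addRightEmbedding K) fun J => |coeff J (U * V)|).symm
    _ ≤ l1Norm (U * V) := sum_abs_coeff_le_l1Norm _ _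

variable [Fintype σ]

theorem weight_nsmul (n : ℕ) (r J : σ →₀ ℕ) : weight (n • r) J = weight r J / n := by
  simp [weight, sum_div, div_div, mul_comm]

theorem weight_erase {r J : σ →₀ ℕ} {a : σ} (hJ : J a = 0) :
    weight (r.erase a) J = weight r J :=
  sum_congr rfl fun l _ => by
    rcases eq_or_ne l a with rfl | hl
    · simp [hJ]
    · rw [Finsupp.erase_ne hl]

theorem weight_le_of_degree_le {r I : σ →₀ ℕ} {δ B : ℝ} (hδ : 0 ≤ δ) (hB : 0 < B)
    (hr : ∀ l ∈ I.support, B ≤ δ * r l) (hI : (I.degree : ℝ) ≤ B) : weight r I ≤ δ := by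
  have hterm (l : σ) : (I l : ℝ) / r l ≤ I l * (δ / B) := by
    rcases eq_or_ne (I l) 0 with h0 | h0
    · simp [h0]
    · have hBl := hr l (Finsupp.mem_support_iff.2 h0)
      rw [div_eq_mul_inv]
      gcongr
      rw [inv_le_iff_one_le_mul₀ (pos_of_mul_pos_right (hB.trans_le hBl) hδ), div_mul_eq_mul_div,
        one_le_div hB]
      exact hBl
  calc weight r I ≤ ∑ l, I l * (δ / B) := sum_le_sum fun l _ => hterm l
    _ = I.degree * (δ / B) := by rw [← sum_mul, Finsupp.degree_eq_sum, Nat.cast_sum]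
    _ ≤ B * (δ / B) := by gcongr
    _ = δ := mul_div_cancel₀ δ hB.ne'

theorem det_hasse_mem_indexGE {R ι : Type*} [CommRing R] [Fintype ι] [DecidableEq ι]
    {r : σ →₀ ℕ} {β : σ → R} {θ τ : ℝ} {P : MvPolynomial σ R} (hP : P ∈ indexGE r β θ)
    {I : ι → σ →₀ ℕ} (hI : ∀ i, weight r (I i) ≤ τ) (J : ι → σ →₀ ℕ) :
    (Matrix.of fun i j => hasse (I i + J j) P).det ∈
      indexGE r β (∑ j, max 0 (θ - τ - weight r (J j))) := by
  refine det_mem_graded (indexGE r β) (M := .of fun i j => hasse (I i + J j) P) fun i j => ?_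
  refine mem_indexGE.2 fun K hK => le_trans (max_le_max_left 0 ?_)
    (mem_indexGE.1 (hasse_mem_indexGE hP (I i + J j)) K hK)
  rw [weight_add]
  linarith [hI i]

theorem log_l1Norm_det_hasse_le {r : σ →₀ ℕ} {P : MvPolynomial σ ℝ}
    (hP : P ∈ multidegreeLE ℝ r) (hP0 : P ≠ 0) {B : ℝ} (hr : ∀ l, r l ≤ B)
    (hB : Real.log (l1Norm P) ≤ B) {n : ℕ} (hn : n ≤ B + 1) (I : Fin n → Fin n → σ →₀ ℕ)
    (hdet : (Matrix.of fun i j => hasse (I i j) P).det ≠ 0) :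
    Real.log (l1Norm (Matrix.of fun i j => hasse (I i j) P).det) ≤
      n * ((Fintype.card σ + 2) * B) := by
  have hPpos := l1Norm_pos hP0
  have hfact : (0 : ℝ) < n.factorial := by exact_mod_cast n.factorial_pos
  have hlogfact : Real.log n.factorial ≤ n * B := by
    rcases Nat.eq_zero_or_pos n with rfl | hn0
    · simp
    calc Real.log n.factorial ≤ Real.log ((n : ℝ) ^ n) :=
          Real.log_le_log hfact (by exact_mod_cast n.factorial_le_pow)
      _ ≤ n * B := by
          rw [Real.log_pow]
          gcongr
          linarith [Real.log_le_sub_one_of_pos (Nat.cast_pos.2 hn0 : (0 : ℝ) < n)]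
  have hlogtwo : r.degree * Real.log 2 ≤ Fintype.card σ * B :=
    calc r.degree * Real.log 2 ≤ r.degree * 1 := by
          gcongr
          linarith [Real.log_two_lt_d9]
      _ = ∑ l, (r l : ℝ) := by rw [mul_one, Finsupp.degree_eq_sum, Nat.cast_sum]
      _ ≤ Fintype.card σ * B := (sum_le_card_nsmul _ _ _ fun l _ => hr l).trans_eq (by simp)
  calc Real.log (l1Norm (Matrix.of fun i j => hasse (I i j) P).det)
      ≤ Real.log (n.factorial * (2 ^ r.degree * l1Norm P) ^ n) :=
        Real.log_le_log (l1Norm_pos hdet) <| by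
          have hdet := l1Norm_det_le (M := .of fun i j => hasse (I i j) P)
            fun i j => l1Norm_hasse_le hP (I i j)
          rwa [Fintype.card_fin] at hdet
    _ = Real.log n.factorial + n * (r.degree * Real.log 2 + Real.log (l1Norm P)) := by
        rw [Real.log_mul hfact.ne' (by positivity), Real.log_pow,
          Real.log_mul (by positivity) hPpos.ne', Real.log_pow]
    _ ≤ n * B + n * (Fintype.card σ * B + B) := by gcongr
    _ = n * ((Fintype.card σ + 2) * B) := by ring

end RothLemma

section Admissible

variable {σ : Type*} [LinearOrder σ] {δ δ' Λ : ℝ} {r : σ →₀ ℕ} {β : σ → ℚ}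

/-- The hypotheses of Roth's lemma on the degrees `r` and the rational point `β`: the degrees
decrease rapidly along the order of the variables and are small compared with `Λ`, while
`(β l).den ^ r l` is at least `exp Λ` for every variable that occurs. -/
structure Admissible (δ Λ : ℝ) (r : σ →₀ ℕ) (β : σ → ℚ) : Prop where
  scale_pos : 0 < Λ
  degree_le : ∀ l, r l ≤ δ * Λ
  degree_le_of_lt : ∀ l ∈ r.support, ∀ l', l < l' → r l' ≤ δ * r l
  le_log_den : ∀ l ∈ r.support, Λ ≤ r l * Real.log (β l).den

namespace Admissible

theorem mono (hδ : δ ≤ δ') (h : Admissible δ Λ r β) : Admissible δ' Λ r β where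
  scale_pos := h.scale_pos
  degree_le l := (h.degree_le l).trans (mul_le_mul_of_nonneg_right hδ h.scale_pos.le)
  degree_le_of_lt l hl l' hll' :=
    (h.degree_le_of_lt l hl l' hll').trans (mul_le_mul_of_nonneg_right hδ (Nat.cast_nonneg _))
  le_log_den := h.le_log_den

theorem nsmul {n : ℕ} (hn : 0 < n) (h : Admissible δ Λ r β) :
    Admissible δ (n * Λ) (n • r) β where
  scale_pos := mul_pos (Nat.cast_pos.2 hn) h.scale_pos
  degree_le l := by
    have := mul_le_mul_of_nonneg_left (h.degree_le l) (Nat.cast_nonneg (α := ℝ) n)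
    simpa [mul_left_comm] using this
  degree_le_of_lt l hl l' hll' := by
    have := mul_le_mul_of_nonneg_left (h.degree_le_of_lt l (Finsupp.support_smul hl) l' hll')
      (Nat.cast_nonneg (α := ℝ) n)
    simpa [mul_left_comm] using this
  le_log_den l hl := by
    have := mul_le_mul_of_nonneg_left (h.le_log_den l (Finsupp.support_smul hl))
      (Nat.cast_nonneg (α := ℝ) n)
    simpa [mul_assoc] using this

theorem erase (a : σ) (h : Admissible δ Λ r β) : Admissible δ Λ (r.erase a) β := by
  have hle (l : σ) : ((r.erase a l : ℕ) : ℝ) ≤ r l := by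
    rw [Finsupp.erase_apply]
    split_ifs <;> simp
  have hmem {l : σ} (hl : l ∈ (r.erase a).support) : r.erase a l = r l ∧ l ∈ r.support := by
    rw [Finsupp.support_erase, mem_erase] at hl
    exact ⟨Finsupp.erase_ne hl.1, hl.2⟩
  refine ⟨h.scale_pos, fun l => (hle l).trans (h.degree_le l), fun l hl l' hll' => ?_,
    fun l hl => ?_⟩
  · rw [(hmem hl).1]
    exact (hle l').trans (h.degree_le_of_lt l (hmem hl).2 l' hll')
  · rw [(hmem hl).1]
    exact h.le_log_den l (hmem hl).2

end Admissible

end Admissible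

section RothLemmaInduction

variable {σ : Type*} {δ δ' η Λ : ℝ} {r : σ →₀ ℕ} {β : σ → ℚ} {a : σ}

theorem le_add_one_of_injective_of_le_single {n k : ℕ} {J : Fin n → σ →₀ ℕ}
    (hJ : Function.Injective J) (hJk : ∀ j, J j ≤ Finsupp.single a k) : n ≤ k + 1 := by
  classical
  have hcard : #(Iic (Finsupp.single a k)) ≤ k + 1 := by
    rw [Finsupp.card_Iic]
    refine (prod_le_prod_of_subset_of_one_le' Finsupp.support_single_subset
      fun _ _ _ => Finset.card_pos.2 ⟨0, mem_Iic.2 zero_le⟩).trans ?_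
    simp
  simpa using
    (card_le_card_of_injOn (s := univ) J (fun j _ => mem_Iic.2 (hJk j)) hJ.injOn).trans hcard

theorem exists_div_le_of_log_l1Norm_le {V : MvPolynomial σ ℝ} {k d : ℕ} {c : ℝ}
    (hV : V ∈ integralPolys σ) (hV0 : V ≠ 0) (hVk : V ∈ multidegreeLE ℝ (Finsupp.single a k))
    (hΛ : 0 < Λ) (hd : Λ ≤ d * Real.log (β a).den) (hlog : Real.log (l1Norm V) ≤ c * Λ) :
    ∃ j : ℕ, (j : ℝ) / d ≤ c ∧
      coeff (Finsupp.single a j) (translate (fun l => (β l : ℝ)) V) ≠ 0 := by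
  obtain ⟨j, hj, hden⟩ := exists_den_pow_le_l1Norm hV hV0 hVk β
  have hden₁ : (1 : ℝ) ≤ (β a).den := Nat.one_le_cast.2 (β a).den_pos
  have hd₀ : 0 < d * Real.log (β a).den := hΛ.trans_le hd
  have hjΛ : j * Real.log (β a).den ≤ c * Λ := by
    rw [← Real.log_pow]
    exact (Real.log_le_log (pow_pos (one_pos.trans_le hden₁) j) hden).trans hlog
  have hc : 0 ≤ c := nonneg_of_mul_nonneg_left
    ((mul_nonneg j.cast_nonneg (Real.log_nonneg hden₁)).trans hjΛ) hΛ
  refine ⟨j, ?_, hj⟩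
  rw [div_le_iff₀ (pos_of_mul_pos_left hd₀ (Real.log_nonneg hden₁))]
  refine le_of_mul_le_mul_right ?_ (pos_of_mul_pos_right hd₀ d.cast_nonneg)
  calc j * Real.log (β a).den ≤ c * Λ := hjΛ
    _ ≤ c * (d * Real.log (β a).den) := by gcongr
    _ = c * d * Real.log (β a).den := (mul_assoc ..).symm

variable [Fintype σ]

/-- The conclusion of Roth's lemma: every nonzero integral polynomial of multidegree at most `r`
whose coefficients are bounded by `exp (δ * Λ)` has index at most `η` at the point `β`. -/
def HasSmallIndex (η δ Λ : ℝ) (r : σ →₀ ℕ) (β : σ → ℚ) : Prop :=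
  ∀ P ∈ integralPolys σ, P ≠ 0 → P ∈ multidegreeLE ℝ r → Real.log (l1Norm P) ≤ δ * Λ →
    ∃ J, weight r J ≤ η ∧ coeff J (translate (fun l => (β l : ℝ)) P) ≠ 0

theorem hasSmallIndex_zero (hη : 0 ≤ η) : HasSmallIndex η δ Λ 0 β := by
  intro P _ hP0 hP0deg _
  have hne : translate (fun l => (β l : ℝ)) P ≠ 0 := fun h0 => hP0 <| by
    have := congrArg (translate (-fun l => (β l : ℝ))) h0
    rwa [translate_translate, neg_add_cancel, translate_zero, map_zero] at this
  obtain ⟨J, hJ⟩ := ne_zero_iff.1 hne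
  have hJ0 : J = 0 :=
    le_zero_iff.1 (mem_multidegreeLE.1 (translate_mem_multidegreeLE hP0deg _) J hJ)
  exact ⟨J, by simpa [hJ0, weight] using hη, hJ⟩

theorem mul_sq_div_eight_le_sum_weight {n : ℕ} {J : Fin n → σ →₀ ℕ} (hJ : Function.Injective J)
    (hJn : ∀ j, (J j).degree < n) (hJr : ∀ j, J j ≤ Finsupp.single a (r a)) {θ : ℝ} (hθ₀ : 0 ≤ θ)
    (hθ₁ : θ ≤ 1) : n * (θ ^ 2 / 8) ≤ ∑ j, max 0 (θ - weight r (J j)) := by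
  have hsingle (j : Fin n) : J j = Finsupp.single a (J j a) :=
    Finsupp.support_subset_singleton.1
      ((Finsupp.support_mono (hJr j)).trans Finsupp.support_single_subset)
  have hlt (j : Fin n) : J j a < n := by
    have := hJn j
    rwa [hsingle j, Finsupp.degree_single] at this
  have hbij : Function.Bijective fun j => (⟨J j a, hlt j⟩ : Fin n) :=
    Finite.injective_iff_bijective.1 fun i j hij => hJ <| by
      rw [hsingle i, hsingle j, Fin.mk.inj hij]
  refine (mul_sq_div_eight_le_sum hθ₀ hθ₁
    (le_add_one_of_injective_of_le_single hJ hJr)).trans_eq ?_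
  rw [← Fin.sum_univ_eq_sum_range (fun j => max 0 (θ - (j : ℝ) / r a)),
    ← hbij.sum_comp fun j : Fin n => max 0 (θ - (j : ℝ) / r a)]
  refine sum_congr rfl fun j _ => ?_
  rw [← weight_single, ← hsingle]

variable [LinearOrder σ]

theorem exists_mul_mem_indexGE (h : Admissible δ Λ r β) (ha : a ∈ r.support)
    (hmax : ∀ l ∈ r.support, l ≤ a) {θ : ℝ} (hδ : δ ≤ θ) (hθ₁ : θ ≤ 1 + δ)
    {P : MvPolynomial σ ℝ} (hP : P ∈ integralPolys σ) (hP0 : P ≠ 0) (hPr : P ∈ multidegreeLE ℝ r)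
    (hlog : Real.log (l1Norm P) ≤ δ * Λ) (hidx : P ∈ indexGE r (fun l => (β l : ℝ)) θ) :
    ∃ (n : ℕ) (U V : MvPolynomial σ ℝ), 0 < n ∧ U ≠ 0 ∧ V ≠ 0 ∧
      U ∈ multidegreeLE ℝ (n • r.erase a) ∧ V ∈ multidegreeLE ℝ (Finsupp.single a (n * r a)) ∧
      U * V ∈ integralPolys σ ∧
      Real.log (l1Norm (U * V)) ≤ n * ((Fintype.card σ + 2) * (δ * Λ)) ∧
      U * V ∈ indexGE r (fun l => (β l : ℝ)) (n * ((θ - δ) ^ 2 / 8)) := by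
  have hra : r a ≠ 0 := Finsupp.mem_support_iff.1 ha
  have hdisj : Disjoint (r.erase a).support (Finsupp.single a (r a)).support := by
    simp [Finsupp.support_single a hra]
  obtain ⟨n, I, J, U, V, hI, hJ, hJinj, hn, hU0, hV0, hU, hV, hUV⟩ :=
    exists_mul_eq_det_hasse hdisj (by rwa [Finsupp.erase_add_single]) hP0
  have hnr := le_add_one_of_injective_of_le_single hJinj fun j => (hJ j).2
  have hsum := mul_sq_div_eight_le_sum_weight hJinj (fun j => (hJ j).1) (fun j => (hJ j).2)
    (sub_nonneg.2 hδ) (sub_le_iff_le_add.2 hθ₁)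
  have hnr' : (n : ℝ) ≤ r a + 1 := by exact_mod_cast hnr
  have hδ₀ : 0 ≤ δ :=
    nonneg_of_mul_nonneg_left ((Nat.cast_nonneg _).trans (h.degree_le a)) h.scale_pos
  have hweight (i : Fin n) : weight r (I i) ≤ δ := by
    refine weight_le_of_degree_le hδ₀ (Nat.cast_pos.2 (Nat.pos_of_ne_zero hra)) (fun l hl => ?_)
      (Nat.cast_le.2 (Nat.lt_succ_iff.1 ((hI i).1.trans_le hnr)))
    have hla := Finsupp.support_mono (hI i).2 hl
    rw [Finsupp.support_erase, mem_erase] at hla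
    exact h.degree_le_of_lt l hla.2 a ((hmax l hla.2).lt_of_ne hla.1)
  refine ⟨n, U, V, hn, hU0, hV0, hU, ?_, ?_, ?_, ?_⟩
  · rwa [Finsupp.smul_single, smul_eq_mul] at hV
  · rw [hUV]
    exact det_mem_subring _ fun i j => hasse_mem_integralPolys hP (I i + J j)
  · rw [hUV]
    refine log_l1Norm_det_hasse_le hPr hP0 h.degree_le hlog ?_ _ (hUV ▸ mul_ne_zero hU0 hV0)
    linarith [h.degree_le a]
  · rw [hUV]
    exact mem_indexGE.2 fun K hK =>
      hsum.trans (mem_indexGE.1 (det_hasse_mem_indexGE hidx hweight J) K hK)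

theorem HasSmallIndex.exists_weight_le_of_mul {n : ℕ} (hn : 0 < n)
    (ih : HasSmallIndex η δ (n * Λ) (n • r.erase a) β) (h : Admissible δ' Λ r β)
    (ha : a ∈ r.support) {U V : MvPolynomial σ ℝ} (hU0 : U ≠ 0) (hV0 : V ≠ 0)
    (hU : U ∈ multidegreeLE ℝ (n • r.erase a))
    (hV : V ∈ multidegreeLE ℝ (Finsupp.single a (n * r a))) (hUV : U * V ∈ integralPolys σ)
    (hδ : Real.log (l1Norm (U * V)) ≤ δ * (n * Λ)) (hη : Real.log (l1Norm (U * V)) ≤ η * (n * Λ)) :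
    ∃ J, weight r J ≤ n * (2 * η) ∧ coeff J (translate (fun l => (β l : ℝ)) (U * V)) ≠ 0 := by
  have hn' : (0 : ℝ) < n := Nat.cast_pos.2 hn
  have hra : r a ≠ 0 := Finsupp.mem_support_iff.1 ha
  have hdisj : Disjoint (n • r.erase a).support (Finsupp.single a (n * r a)).support := by
    rw [Finsupp.support_single a (mul_ne_zero hn.ne' hra), disjoint_singleton_right,
      Finsupp.mem_support_iff]
    simp
  obtain ⟨J₀, hJ₀⟩ := ne_zero_iff.1 hU0
  obtain ⟨K₀, hK₀⟩ := ne_zero_iff.1 hV0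
  have hJ₀r := Finsupp.support_mono (mem_multidegreeLE.1 hU J₀ hJ₀)
  have hK₀r := Finsupp.support_mono (mem_multidegreeLE.1 hV K₀ hK₀)
  have hUne : coeff K₀ V • U ≠ 0 := smul_ne_zero hK₀ hU0
  have hVne : coeff J₀ U • V ≠ 0 := smul_ne_zero hJ₀ hV0
  obtain ⟨J, hJη, hJ⟩ := ih _ (coeff_smul_mem_integralPolys hdisj hU hV hUV hK₀r) hUne
    (Submodule.smul_mem _ _ hU) ((Real.log_le_log (l1Norm_pos hUne)
      (l1Norm_coeff_smul_le hdisj hU hV hK₀r)).trans hδ)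
  obtain ⟨j, hja, hj⟩ := exists_div_le_of_log_l1Norm_le (c := n * η)
    (coeff_smul_mem_integralPolys hdisj.symm hV hU (mul_comm U V ▸ hUV) hJ₀r) hVne
    (Submodule.smul_mem _ _ hV) h.scale_pos (h.le_log_den a ha)
    ((Real.log_le_log (l1Norm_pos hVne) (l1Norm_coeff_smul_le hdisj.symm hV hU hJ₀r)).trans
      (by rw [mul_comm V U]; linarith))
  rw [map_smul, coeff_smul, smul_ne_zero_iff] at hJ hj
  have hJa : J a = 0 := by
    simpa using mem_multidegreeLE.1 (translate_mem_multidegreeLE hU _) J hJ.2 a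
  have hweight : weight r J ≤ n * η := by
    rwa [weight_nsmul, weight_erase hJa, div_le_iff₀' hn'] at hJη
  refine ⟨J + Finsupp.single a j, ?_, ?_⟩
  · rw [weight_add, weight_single]
    linarith
  · have hJr := Finsupp.support_mono
      (mem_multidegreeLE.1 (translate_mem_multidegreeLE hU _) J hJ.2)
    have hjr := Finsupp.support_mono
      (mem_multidegreeLE.1 (translate_mem_multidegreeLE hV _) _ hj.2)
    rw [map_mul, coeff_add_mul_of_disjoint hdisj (translate_mem_multidegreeLE hU _)
      (translate_mem_multidegreeLE hV _) hJr hjr]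
    exact mul_ne_zero hJ.2 hj.2

theorem HasSmallIndex.of_erase (hη₀ : 0 < η) (hη₁ : η ≤ 1) (hδη : δ ≤ η / 2)
    (hδ' : (Fintype.card σ + 2) * δ ≤ δ') (hδη' : (Fintype.card σ + 2) * δ ≤ η ^ 2 / 100)
    (h : Admissible δ Λ r β) (ha : a ∈ r.support) (hmax : ∀ l ∈ r.support, l ≤ a)
    (ih : ∀ n : ℕ, 0 < n → HasSmallIndex (η ^ 2 / 100) δ' (n * Λ) (n • r.erase a) β) :
    HasSmallIndex η δ Λ r β := by
  intro P hP hP0 hPr hlog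
  have hδ₀ : 0 ≤ δ :=
    nonneg_of_mul_nonneg_left ((Nat.cast_nonneg _).trans (h.degree_le a)) h.scale_pos
  by_contra! hidx
  have hPη : P ∈ indexGE r (fun l => (β l : ℝ)) η :=
    mem_indexGE.2 fun J hJ => le_of_not_ge fun hle => hJ (hidx J hle)
  obtain ⟨n, U, V, hn, hU0, hV0, hU, hV, hUV, hlogUV, hUVη⟩ :=
    exists_mul_mem_indexGE h ha hmax (hδη.trans (by linarith)) (by linarith) hP hP0 hPr hlog hPη
  have hscale {c : ℝ} (hc : (Fintype.card σ + 2) * δ ≤ c) :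
      Real.log (l1Norm (U * V)) ≤ c * (n * Λ) := by
    calc Real.log (l1Norm (U * V)) ≤ (Fintype.card σ + 2) * δ * (n * Λ) := by linarith
      _ ≤ c * (n * Λ) := by have := h.scale_pos; gcongr
  obtain ⟨J, hJ, hJ0⟩ :=
    (ih n hn).exists_weight_le_of_mul hn h ha hU0 hV0 hU hV hUV (hscale hδ') (hscale hδη')
  have hcontra : (n : ℝ) * ((η - δ) ^ 2 / 8) ≤ n * (2 * (η ^ 2 / 100)) :=
    (mem_indexGE.1 hUVη J hJ0).trans hJ
  have := le_of_mul_le_mul_left hcontra (Nat.cast_pos.2 hn)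
  nlinarith

theorem exists_forall_admissible_hasSmallIndex (S : Finset σ) :
    ∀ η : ℝ, 0 < η → η ≤ 1 → ∃ δ : ℝ, 0 < δ ∧ ∀ (r : σ →₀ ℕ) (Λ : ℝ) (β : σ → ℚ),
      r.support = S → Admissible δ Λ r β → HasSmallIndex η δ Λ r β := by
  induction S using Finset.induction_on_max with
  | empty =>
    refine fun η hη _ => ⟨1, one_pos, fun r Λ β hr _ => ?_⟩
    rw [Finsupp.support_eq_empty.1 hr]
    exact hasSmallIndex_zero hη.le
  | insert a S hmax ih =>
    intro η hη₀ hη₁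
    obtain ⟨δ', hδ'₀, ih⟩ := ih (η ^ 2 / 100) (by positivity) (by nlinarith)
    have hcard : (0 : ℝ) < Fintype.card σ + 2 := by positivity
    refine ⟨min (η / 2) (min δ' (η ^ 2 / 100) / (Fintype.card σ + 2)), by positivity,
      fun r Λ β hr h => ?_⟩
    set δ := min (η / 2) (min δ' (η ^ 2 / 100) / (Fintype.card σ + 2))
    have hδ : (Fintype.card σ + 2) * δ ≤ min δ' (η ^ 2 / 100) :=
      (le_div_iff₀' hcard).1 (min_le_right _ _)
    have hδδ' : δ ≤ δ' := by
      have : 0 < δ := by positivity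
      nlinarith [hδ.trans (min_le_left _ _), (Nat.cast_nonneg (Fintype.card σ) : (0 : ℝ) ≤ _)]
    refine HasSmallIndex.of_erase (a := a) hη₀ hη₁ (min_le_left _ _)
      (hδ.trans (min_le_left _ _)) (hδ.trans (min_le_right _ _)) h (by simp [hr]) (fun l hl => ?_)
      fun n hn => ih _ _ _ ?_ (((h.erase a).nsmul hn).mono hδδ')
    · rw [hr, mem_insert] at hl
      exact hl.elim le_of_eq fun hl => (hmax l hl).le
    · rw [Finsupp.support_smul_eq hn.ne', Finsupp.support_erase, hr,
        erase_insert fun ha => (hmax a ha).false]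

end RothLemmaInduction

section Counting

variable {σ : Type*} [Fintype σ]

theorem sum_exp_mul_half_sub_le {r : ℕ} (hr : r ≠ 0) (c : ℝ) :
    ∑ i ∈ range (r + 1), Real.exp (c * (1 / 2 - (i : ℝ) / r)) ≤ (r + 1) * Real.exp (c ^ 2 / 8) := by
  have hr' : (0 : ℝ) < r := Nat.cast_pos.2 (Nat.pos_of_ne_zero hr)
  have hreflect : ∑ i ∈ range (r + 1), Real.exp (-(c * (1 / 2 - (i : ℝ) / r))) =
      ∑ i ∈ range (r + 1), Real.exp (c * (1 / 2 - (i : ℝ) / r)) := by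
    rw [← sum_flip]
    refine sum_congr rfl fun i hi => congrArg Real.exp ?_
    rw [Nat.cast_sub (Nat.lt_succ_iff.1 (mem_range.1 hi))]
    field_simp
    ring
  calc ∑ i ∈ range (r + 1), Real.exp (c * (1 / 2 - (i : ℝ) / r))
      = ∑ i ∈ range (r + 1), Real.cosh (c * (1 / 2 - (i : ℝ) / r)) := by
        simp only [Real.cosh_eq, ← sum_div, sum_add_distrib, hreflect]
        ring
    _ ≤ ∑ _i ∈ range (r + 1), Real.exp (c ^ 2 / 8) := sum_le_sum fun i hi => by
        have hi₀ : 0 ≤ (i : ℝ) / r := by positivity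
        have hi₁ : (i : ℝ) / r ≤ 1 := by
          rw [div_le_one hr']
          exact_mod_cast Nat.lt_succ_iff.1 (mem_range.1 hi)
        refine (Real.cosh_le_exp_half_sq _).trans (Real.exp_le_exp.2 ?_)
        have : (1 / 2 - (i : ℝ) / r) ^ 2 ≤ 1 / 4 := by nlinarith
        rw [mul_pow]
        nlinarith [sq_nonneg c]
    _ = (r + 1) * Real.exp (c ^ 2 / 8) := by simp

theorem sum_Iic_prod [DecidableEq σ] (r : σ →₀ ℕ) (f : σ → ℕ → ℝ) :
    ∑ J ∈ Iic r, ∏ l, f l (J l) = ∏ l, ∑ i ∈ range (r l + 1), f l i := by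
  rw [prod_univ_sum]
  refine sum_equiv Finsupp.equivFunOnFinite (fun J => ?_) fun J _ => rfl
  simp [Finsupp.le_def]

/-- A Chernoff bound: `weight r J` is a sum of independent variables of mean `1 / 2` when `J` is
uniform on `Iic r`. -/
theorem card_weight_lt_le [DecidableEq σ] {r : σ →₀ ℕ} (hr : ∀ l, r l ≠ 0) {s : ℝ} (hs : 0 ≤ s) :
    (#{J ∈ Iic r | weight r J < Fintype.card σ * (1 / 2 - s)} : ℝ) ≤
      #(Iic r) * Real.exp (-(2 * s ^ 2 * Fintype.card σ)) := by
  have hcard : (#(Iic r) : ℝ) = ∏ l, ((r l : ℝ) + 1) := by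
    simpa using sum_Iic_prod r fun _ _ => 1
  have hexp (J : σ →₀ ℕ) :
      Real.exp (4 * s * (Fintype.card σ * (1 / 2 - s) - weight r J)) =
        Real.exp (-(4 * s ^ 2 * Fintype.card σ)) *
          ∏ l, Real.exp (4 * s * (1 / 2 - (J l : ℝ) / r l)) := by
    rw [← Real.exp_sum, ← mul_sum, sum_sub_distrib, ← Real.exp_add, weight]
    simp only [sum_const, card_univ, nsmul_eq_mul]
    ring_nf
  calc (#{J ∈ Iic r | weight r J < Fintype.card σ * (1 / 2 - s)} : ℝ)
      ≤ ∑ J ∈ Iic r, Real.exp (4 * s * (Fintype.card σ * (1 / 2 - s) - weight r J)) := by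
        rw [card_filter, Nat.cast_sum]
        refine sum_le_sum fun J _ => ?_
        split_ifs with hJ
        · rw [Nat.cast_one, Real.one_le_exp_iff]
          exact mul_nonneg (by positivity) (sub_nonneg.2 hJ.le)
        · simp [Real.exp_nonneg]
    _ = Real.exp (-(4 * s ^ 2 * Fintype.card σ)) *
          ∏ l, ∑ i ∈ range (r l + 1), Real.exp (4 * s * (1 / 2 - (i : ℝ) / r l)) := by
        simp only [hexp, ← mul_sum]
        rw [sum_Iic_prod r fun l i => Real.exp (4 * s * (1 / 2 - (i : ℝ) / r l))]
    _ ≤ Real.exp (-(4 * s ^ 2 * Fintype.card σ)) *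
          ∏ l, (((r l : ℝ) + 1) * Real.exp ((4 * s) ^ 2 / 8)) := by
        gcongr with l
        exact sum_exp_mul_half_sub_le (hr l) _
    _ = #(Iic r) * Real.exp (-(2 * s ^ 2 * Fintype.card σ)) := by
        rw [prod_mul_distrib, ← hcard, prod_const, ← Real.exp_nat_mul, mul_left_comm,
          ← Real.exp_add, card_univ]
        ring_nf

end Counting

section Siegel

theorem exists_ne_zero_mulVec_eq_zero_abs_le {ι κ : Type*} [Fintype ι] [Fintype κ] [Nonempty κ]
    (A : Matrix ι κ ℤ) {B : ℝ} (hB : 1 ≤ B) (hA : ∀ i j, |(A i j : ℝ)| ≤ B)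
    (hcard : 2 * Fintype.card ι ≤ Fintype.card κ) :
    ∃ t : κ → ℤ, t ≠ 0 ∧ A.mulVec t = 0 ∧ ∀ j, |(t j : ℝ)| ≤ Fintype.card κ * B := by
  have hκ : (1 : ℝ) ≤ Fintype.card κ := by exact_mod_cast Fintype.card_pos (α := κ)
  rcases isEmpty_or_nonempty ι with hι | hι
  · exact ⟨1, one_ne_zero, Subsingleton.elim _ _, fun j => by simpa using by nlinarith⟩
  have hι₀ : 0 < Fintype.card ι := Fintype.card_pos
  obtain ⟨t, ht₀, htA, ht⟩ := Int.Matrix.exists_ne_zero_int_vec_norm_le A (by omega) hι₀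
  let := Matrix.seminormedAddCommGroup (m := ι) (n := κ) (α := ℤ)
  have hAB : max 1 ‖A‖ ≤ B := max_le hB <| (Matrix.norm_le_iff (zero_le_one.trans hB)).2
    fun i j => (Int.norm_eq_abs _).trans_le (hA i j)
  have hexponent : (Fintype.card ι : ℝ) / (Fintype.card κ - Fintype.card ι) ≤ 1 := by
    have hι₀' : (0 : ℝ) < Fintype.card ι := Nat.cast_pos.2 hι₀
    have hcard' : 2 * (Fintype.card ι : ℝ) ≤ Fintype.card κ := by exact_mod_cast hcard
    rw [div_le_one (by linarith)]
    linarith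
  refine ⟨t, ht₀, htA, fun j => ?_⟩
  calc |(t j : ℝ)| ≤ ‖t‖ := (Int.norm_eq_abs _).symm.trans_le (norm_le_pi_norm t j)
    _ ≤ (Fintype.card κ * max 1 ‖A‖) ^ (1 : ℝ) :=
        ht.trans <| Real.rpow_le_rpow_of_exponent_le
          (one_le_mul_of_one_le_of_one_le hκ (le_max_left _ _)) hexponent
    _ ≤ Fintype.card κ * B := by
        rw [Real.rpow_one]
        gcongr

end Siegel

section AuxiliaryPolynomial

theorem exists_pow_eq_sum_of_mul_eq_sum {ι : Type*} [Fintype ι] {α C : ℝ} {v : ι → ℝ} {c₀ : ι → ℤ}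
    {M : ι → ι → ℤ} (hC : 0 ≤ C) (hc₀ : 1 = ∑ b, c₀ b * v b)
    (hM : ∀ a, α * v a = ∑ b, M a b * v b) (hC₀ : ∀ b, |(c₀ b : ℝ)| ≤ C)
    (hCM : ∀ b, ∑ a, |(M a b : ℝ)| ≤ C) (e : ℕ) :
    ∃ c : ι → ℤ, α ^ e = ∑ b, c b * v b ∧ ∀ b, |(c b : ℝ)| ≤ C ^ (e + 1) := by
  induction e with
  | zero => exact ⟨c₀, by simpa using hc₀, by simpa using hC₀⟩
  | succ e ih =>
    obtain ⟨c, hc, hcC⟩ := ih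
    refine ⟨fun b => ∑ a, c a * M a b, ?_, fun b => ?_⟩
    · rw [pow_succ', hc, mul_sum]
      simp only [mul_left_comm α, hM, Int.cast_sum, Int.cast_mul, sum_mul, mul_sum, mul_assoc]
      exact sum_comm
    · calc |((∑ a, c a * M a b : ℤ) : ℝ)| ≤ ∑ a, |(c a : ℝ)| * |(M a b : ℝ)| := by
            simp only [Int.cast_sum, Int.cast_mul, ← abs_mul]
            exact abs_sum_le_sum_abs _ _
        _ ≤ ∑ a, C ^ (e + 1) * |(M a b : ℝ)| := by gcongr; exact hcC _
        _ ≤ C ^ (e + 1 + 1) := by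
            rw [← mul_sum, pow_succ C (e + 1)]
            gcongr
            exact hCM b

theorem exists_pow_eq_sum_intCast_mul {α : ℝ} (h : IsIntegral ℤ α) :
    ∃ (d : ℕ) (v : Fin d → ℝ) (C : ℝ), 1 ≤ C ∧ ∀ e : ℕ, ∃ c : Fin d → ℤ,
      α ^ e = ∑ b, c b * v b ∧ ∀ b, |(c b : ℝ)| ≤ C ^ (e + 1) := by
  obtain ⟨d, v, hv⟩ := Submodule.fg_iff_exists_fin_generating_family.1 h.fg_adjoin_singleton
  have hspan {x : ℝ} (hx : x ∈ Algebra.adjoin ℤ {α}) : ∃ c : Fin d → ℤ, x = ∑ b, c b * v b := by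
    rw [← Subalgebra.mem_toSubmodule, ← hv, Submodule.mem_span_range_iff_exists_fun] at hx
    obtain ⟨c, hc⟩ := hx
    exact ⟨c, by simpa using hc.symm⟩
  have hα := Algebra.self_mem_adjoin_singleton ℤ α
  have hvmem (b : Fin d) : v b ∈ Algebra.adjoin ℤ {α} := by
    rw [← Subalgebra.mem_toSubmodule, ← hv]
    exact Submodule.subset_span ⟨b, rfl⟩
  obtain ⟨c₀, hc₀⟩ := hspan (one_mem _)
  choose M hM using fun b => hspan (mul_mem hα (hvmem b))
  have hC₀ (b : Fin d) : |(c₀ b : ℝ)| ≤ 1 + ∑ a, |(c₀ a : ℝ)| + ∑ a, ∑ b, |(M a b : ℝ)| := by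
    have := single_le_sum (fun a _ => abs_nonneg (c₀ a : ℝ)) (mem_univ b)
    have : 0 ≤ ∑ a, ∑ b, |(M a b : ℝ)| := by positivity
    linarith
  have hCM (b : Fin d) :
      ∑ a, |(M a b : ℝ)| ≤ 1 + ∑ a, |(c₀ a : ℝ)| + ∑ a, ∑ b, |(M a b : ℝ)| := by
    have : ∑ a, |(M a b : ℝ)| ≤ ∑ a, ∑ b, |(M a b : ℝ)| :=
      sum_le_sum fun a _ => single_le_sum (fun b _ => abs_nonneg (M a b : ℝ)) (mem_univ b)
    have : 0 ≤ ∑ a, |(c₀ a : ℝ)| := by positivity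
    linarith
  have hC : 1 ≤ 1 + ∑ a, |(c₀ a : ℝ)| + ∑ a, ∑ b, |(M a b : ℝ)| := by
    rw [add_assoc, le_add_iff_nonneg_right]
    positivity
  exact ⟨d, v, _, hC, exists_pow_eq_sum_of_mul_eq_sum (zero_le_one.trans hC) hc₀ hM hC₀ hCM⟩

theorem card_Iic_le_two_pow_degree {σ : Type*} [Finite σ] [DecidableEq σ] (r : σ →₀ ℕ) :
    (#(Iic r) : ℝ) ≤ 2 ^ r.degree := by
  cases nonempty_fintype σ
  rw [Finsupp.degree_eq_sum, ← prod_pow_eq_pow_sum]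
  calc (#(Iic r) : ℝ) = ∏ l, ((r l : ℝ) + 1) := by simpa using sum_Iic_prod r fun _ _ => 1
    _ ≤ ∏ l, 2 ^ r l := prod_le_prod (fun _ _ => by positivity) fun l _ => by
        exact_mod_cast Nat.lt_two_pow_self

variable {σ ι : Type*} [Fintype σ] [Fintype ι] {r : σ →₀ ℕ}

theorem coeff_translate_const_sum {κ : Type*} [Fintype κ] {α : ℝ} {v : ι → ℝ} {c : ℕ → ι → ℤ}
    (hc : ∀ e, α ^ e = ∑ b, c e b * v b) (E : κ → σ →₀ ℕ) (t : κ → ℤ) (I : σ →₀ ℕ) :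
    coeff I (translate (fun _ => α) (∑ k, monomial (E k) (t k : ℝ))) =
      ∑ b, ((∑ k, (∏ l, ((E k l).choose (I l) : ℤ)) * c (E k - I).degree b * t k : ℤ) : ℝ) *
        v b := by
  have hmonomial (k : κ) : coeff I (translate (fun _ => α) (monomial (E k) (t k : ℝ))) =
      ∑ b, (((∏ l, ((E k l).choose (I l) : ℤ)) * c (E k - I).degree b * t k : ℤ) : ℝ) * v b := by
    have hdeg : ∑ l, (E k l - I l) = (E k - I).degree := (Finsupp.degree_eq_sum (E k - I)).symm
    rw [coeff_translate_monomial, prod_mul_distrib, prod_pow_eq_pow_sum, hdeg, hc, sum_mul, mul_sum]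
    refine sum_congr rfl fun b _ => ?_
    push_cast
    ring
  simp only [map_sum, coeff_sum, hmonomial, Int.cast_sum, sum_mul]
  exact sum_comm

theorem abs_prod_choose_mul_le {ι : Type*} {C : ℝ} (hC : 1 ≤ C) {c : ℕ → ι → ℤ}
    (hc : ∀ e b, |(c e b : ℝ)| ≤ C ^ (e + 1)) {J : σ →₀ ℕ} (hJ : J ≤ r) (I : σ →₀ ℕ) (b : ι) :
    |(((∏ l, ((J l).choose (I l) : ℤ)) * c (J - I).degree b : ℤ) : ℝ)| ≤
      2 ^ r.degree * C ^ (r.degree + 1) := by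
  push_cast
  rw [abs_mul, abs_of_nonneg (by positivity)]
  gcongr
  · exact prod_choose_le hJ I
  · refine (hc _ b).trans (pow_le_pow_right₀ hC ?_)
    gcongr
    exact Finsupp.degree_mono (tsub_le_self.trans hJ)

variable {C s : ℝ}

theorem exists_ne_zero_sum_choose_mul_eq_zero [DecidableEq σ] {c : ℕ → ι → ℤ} (hC : 1 ≤ C)
    (hc : ∀ e b, |(c e b : ℝ)| ≤ C ^ (e + 1)) (hr : ∀ l, r l ≠ 0) (hs : 0 ≤ s)
    (hcard : 2 * Fintype.card ι * Real.exp (-(2 * s ^ 2 * Fintype.card σ)) ≤ 1) :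
    ∃ t : Iic r → ℤ, t ≠ 0 ∧ (∀ I ≤ r, weight r I < Fintype.card σ * (1 / 2 - s) →
      ∀ b, ∑ J, (∏ l, ((J.1 l).choose (I l) : ℤ)) * c (J.1 - I).degree b * t J = 0) ∧
      ∀ J, |(t J : ℝ)| ≤ 2 ^ r.degree * (2 ^ r.degree * C ^ (r.degree + 1)) := by
  let lowWeight := {J ∈ Iic r | weight r J < Fintype.card σ * (1 / 2 - s)}
  have : Nonempty (Iic r) := ⟨⟨0, mem_Iic.2 zero_le⟩⟩
  let A : Matrix (lowWeight × ι) (Iic r) ℤ := fun Ib J =>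
    (∏ l, ((J.1 l).choose (Ib.1.1 l) : ℤ)) * c (J.1 - Ib.1.1).degree Ib.2
  have hunknowns : 2 * Fintype.card (lowWeight × ι) ≤ Fintype.card (Iic r) := by
    have hlow := card_weight_lt_le hr hs
    rw [Fintype.card_prod, Fintype.card_coe, Fintype.card_coe]
    have : 2 * ((#lowWeight : ℝ) * Fintype.card ι) ≤ #(Iic r) :=
      calc 2 * ((#lowWeight : ℝ) * Fintype.card ι)
          ≤ 2 * (#(Iic r) * Real.exp (-(2 * s ^ 2 * Fintype.card σ)) * Fintype.card ι) := by gcongr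
        _ = #(Iic r) * (2 * Fintype.card ι * Real.exp (-(2 * s ^ 2 * Fintype.card σ))) := by ring
        _ ≤ #(Iic r) := mul_le_of_le_one_right (Nat.cast_nonneg _) hcard
    exact_mod_cast this
  obtain ⟨t, ht₀, hAt, ht⟩ := exists_ne_zero_mulVec_eq_zero_abs_le A
    (one_le_mul_of_one_le_of_one_le (one_le_pow₀ one_le_two) (one_le_pow₀ hC))
    (fun Ib J => abs_prod_choose_mul_le hC hc (mem_Iic.1 J.2) Ib.1.1 Ib.2) hunknowns
  refine ⟨t, ht₀, fun I hI hlow b => ?_, fun J => (ht J).trans ?_⟩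
  · exact congrFun hAt (⟨I, mem_filter.2 ⟨mem_Iic.2 hI, hlow⟩⟩, b)
  · rw [Fintype.card_coe]
    gcongr
    exact card_Iic_le_two_pow_degree r

theorem exists_mem_indexGE_l1Norm_le {α : ℝ} {v : ι → ℝ} (hC : 1 ≤ C)
    (hα : ∀ e : ℕ, ∃ c : ι → ℤ, α ^ e = ∑ b, c b * v b ∧ ∀ b, |(c b : ℝ)| ≤ C ^ (e + 1))
    (hr : ∀ l, r l ≠ 0) (hs : 0 ≤ s)
    (hcard : 2 * Fintype.card ι * Real.exp (-(2 * s ^ 2 * Fintype.card σ)) ≤ 1) :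
    ∃ P ∈ integralPolys σ, P ≠ 0 ∧ P ∈ multidegreeLE ℝ r ∧
      P ∈ indexGE r (fun _ => α) (Fintype.card σ * (1 / 2 - s)) ∧
      l1Norm P ≤ (8 * C) ^ r.degree * C := by
  classical
  choose c hc hcC using hα
  obtain ⟨t, ht₀, hzero, ht⟩ := exists_ne_zero_sum_choose_mul_eq_zero hC hcC hr hs hcard
  let P : MvPolynomial σ ℝ := ∑ J : Iic r, monomial J.1 (t J : ℝ)
  have hcoeff (J : Iic r) : coeff J.1 P = t J := by
    simp [P, coeff_sum, coeff_monomial]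
  have hP : P ∈ multidegreeLE ℝ r := Submodule.sum_mem _ fun J _ =>
    (monomial_mem_restrictSupport ℝ).2 (.inl (mem_Iic.1 J.2))
  refine ⟨P, ⟨∑ J : Iic r, monomial J.1 (t J), by simp [P]⟩, fun hP₀ => ht₀ (funext fun J => ?_),
    hP, mem_indexGE.2 fun I hI => ?_, ?_⟩
  · have := hcoeff J
    rw [hP₀, coeff_zero] at this
    exact_mod_cast this.symm
  · by_contra! hlow
    have hIr := mem_multidegreeLE.1 (translate_mem_multidegreeLE hP _) I hI
    refine hI ((coeff_translate_const_sum hc _ t I).trans (sum_eq_zero fun b _ => ?_))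
    rw [hzero I hIr hlow b, Int.cast_zero, zero_mul]
  · calc l1Norm P ≤ ∑ J : Iic r, l1Norm (monomial J.1 (t J : ℝ)) := l1Norm_sum_le _ _
      _ ≤ ∑ _J : Iic r, 2 ^ r.degree * (2 ^ r.degree * C ^ (r.degree + 1)) :=
          sum_le_sum fun J _ => (l1Norm_monomial _ _).trans_le (ht J)
      _ = #(Iic r) * (2 ^ r.degree * (2 ^ r.degree * C ^ (r.degree + 1))) := by simp
      _ ≤ 2 ^ r.degree * (2 ^ r.degree * (2 ^ r.degree * C ^ (r.degree + 1))) := by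
          gcongr
          exact card_Iic_le_two_pow_degree r
      _ = (8 * C) ^ r.degree * C := by
          rw [mul_pow, pow_succ, show (8 : ℝ) = 2 * 2 * 2 by norm_num, mul_pow, mul_pow]
          ring

end AuxiliaryPolynomial

section Evaluation

variable {σ : Type*} [Fintype σ] {r : σ →₀ ℕ} {G : MvPolynomial σ ℝ}

theorem one_le_abs_eval_mul_prod_den_pow {β : σ → ℚ} (hG : G ∈ integralPolys σ)
    (hd : G ∈ multidegreeLE ℝ r) (h0 : eval (fun l => (β l : ℝ)) G ≠ 0) :
    1 ≤ |eval (fun l => (β l : ℝ)) G| * ∏ l, ((β l).den : ℝ) ^ r l := by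
  choose z hz using mem_integralPolys_iff.1 hG
  have hpos : 0 < ∏ l, ((β l).den : ℝ) ^ r l :=
    prod_pos fun l _ => pow_pos (Nat.cast_pos.2 (β l).den_pos) _
  have hint : eval (fun l => (β l : ℝ)) G * ∏ l, ((β l).den : ℝ) ^ r l =
      ((∑ J ∈ G.support, z J * ∏ l, ((β l).num ^ J l * (β l).den ^ (r l - J l)) : ℤ) : ℝ) := by
    rw [eval_eq', sum_mul]
    push_cast
    refine sum_congr rfl fun J hJ => ?_
    rw [hz, mul_assoc, ← prod_mul_distrib]
    congr 1
    refine prod_congr rfl fun l _ => ?_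
    have hle : J l ≤ r l := mem_multidegreeLE.1 hd J (mem_support_iff.1 hJ) l
    have hden : ((β l).den : ℝ) ≠ 0 := Nat.cast_ne_zero.2 (β l).den_nz
    rw [Rat.cast_def (β l), div_pow, ← Nat.add_sub_cancel' hle, pow_add, Nat.add_sub_cancel_left,
      ← mul_assoc, div_mul_cancel₀ _ (pow_ne_zero _ hden)]
  rw [← abs_of_pos hpos, ← abs_mul, hint, ← Int.cast_abs, ← Int.cast_one, Int.cast_le]
  refine Int.one_le_abs fun h => mul_ne_zero h0 hpos.ne' ?_
  rw [hint, h, Int.cast_zero]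

theorem abs_eval_le_of_mem_indexGE {β γ : σ → ℝ} {θ A : ℝ} (hG : G ∈ indexGE r β θ) (hA : 0 ≤ A)
    (hγ : ∀ l, |γ l - β l| ≤ Real.exp (-(A / r l))) :
    |eval γ G| ≤ l1Norm (translate β G) * Real.exp (-(A * θ)) := by
  have hshift : eval γ G = eval (γ - β) (translate β G) := by
    rw [eval_translate, sub_add_cancel]
  rw [hshift, eval_eq', l1Norm, sum_mul]
  refine (abs_sum_le_sum_abs _ _).trans (sum_le_sum fun J hJ => ?_)
  rw [abs_mul, abs_prod]
  refine mul_le_mul_of_nonneg_left ?_ (abs_nonneg _)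
  calc ∏ l, |(γ - β) l ^ J l| ≤ ∏ l, Real.exp (-(A * (J l / r l))) := by
        refine prod_le_prod (fun _ _ => abs_nonneg _) fun l _ => ?_
        rw [abs_pow]
        refine (pow_le_pow_left₀ (abs_nonneg _) (hγ l) _).trans_eq ?_
        rw [← Real.exp_nat_mul]
        ring_nf
    _ = Real.exp (-(A * weight r J)) := by
        rw [← Real.exp_sum, sum_neg_distrib, ← mul_sum, weight]
    _ ≤ Real.exp (-(A * θ)) := by
        gcongr
        exact mem_indexGE.1 hG J (mem_support_iff.1 hJ)

theorem mul_le_of_mem_indexGE {α κ ε θ Λ : ℝ} {β : σ → ℚ} (hκ : 0 ≤ κ) (hΛ : 0 < Λ)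
    (hlo : ∀ l, Λ ≤ r l * Real.log (β l).den) (hhi : ∀ l, r l * Real.log (β l).den ≤ (1 + ε) * Λ)
    (hβ : ∀ l, |α - β l| ≤ ((β l).den : ℝ) ^ (-κ)) (hG : G ∈ integralPolys σ)
    (hd : G ∈ multidegreeLE ℝ r) (h0 : eval (fun l => (β l : ℝ)) G ≠ 0)
    (hind : G ∈ indexGE r (fun _ => α) θ)
    (hnorm : l1Norm (translate (fun _ => α) G) ≤ Real.exp (ε * Λ)) :
    κ * θ ≤ Fintype.card σ * (1 + ε) + ε := by
  have hden : ∀ l, (0 : ℝ) < (β l).den := fun l => Nat.cast_pos.2 (β l).den_pos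
  have hr : ∀ l, (0 : ℝ) < r l := fun l => (Nat.cast_nonneg _).lt_of_ne fun h => by
    linarith [h ▸ hlo l, zero_mul (Real.log (β l).den)]
  have hclose : ∀ l, |(β l : ℝ) - α| ≤ Real.exp (-(κ * Λ / r l)) := fun l => by
    rw [abs_sub_comm]
    refine (hβ l).trans ?_
    rw [Real.rpow_def_of_pos (hden l), mul_neg, mul_comm]
    gcongr
    rw [mul_div_assoc]
    exact mul_le_mul_of_nonneg_left ((div_le_iff₀' (hr l)).2 (hlo l)) hκ
  have hprod : ∏ l, ((β l).den : ℝ) ^ r l ≤ Real.exp (Fintype.card σ * ((1 + ε) * Λ)) := by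
    have hexp : ∀ l, ((β l).den : ℝ) ^ r l = Real.exp (r l * Real.log (β l).den) := fun l => by
      rw [Real.exp_nat_mul, Real.exp_log (hden l)]
    simp only [hexp]
    rw [← Real.exp_sum, ← nsmul_eq_mul, ← card_univ]
    exact Real.exp_le_exp.2 (sum_le_card_nsmul _ _ _ fun l _ => hhi l)
  have hone : 1 ≤ Real.exp (ε * Λ) * Real.exp (-(κ * Λ * θ)) *
      Real.exp (Fintype.card σ * ((1 + ε) * Λ)) :=
    calc 1 ≤ |eval (fun l => (β l : ℝ)) G| * ∏ l, ((β l).den : ℝ) ^ r l :=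
          one_le_abs_eval_mul_prod_den_pow hG hd h0
      _ ≤ _ := by
          gcongr
          exact (abs_eval_le_of_mem_indexGE hind (by positivity) hclose).trans (by gcongr)
  rw [← Real.exp_add, ← Real.exp_add, Real.one_le_exp_iff] at hone
  refine le_of_mul_le_mul_right ?_ hΛ
  linarith

end Evaluation

section Approximants

variable {σ : Type*} {r : σ →₀ ℕ} {δ ε Λ : ℝ} {β : σ → ℚ}

theorem exists_forall_le_mul_and_mul_le [Finite σ] {x : σ → ℝ} (hx : ∀ l, 0 < x l) (hε : 0 < ε) :
    ∃ Λ : ℝ, 0 < Λ ∧ ∃ r : σ →₀ ℕ, ∀ l, Λ ≤ r l * x l ∧ r l * x l ≤ (1 + ε) * Λ := by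
  cases nonempty_fintype σ
  have hsum : 0 ≤ ∑ l, x l := sum_nonneg fun l _ => (hx l).le
  refine ⟨(1 + ∑ l, x l) / ε, by positivity,
    Finsupp.equivFunOnFinite.symm fun l => ⌈(1 + ∑ l, x l) / ε / x l⌉₊, fun l => ⟨?_, ?_⟩⟩
  · rw [← div_le_iff₀ (hx l)]
    exact Nat.le_ceil _
  · have hle : x l ≤ 1 + ∑ l, x l := by
      linarith [single_le_sum (fun l _ => (hx l).le) (mem_univ l)]
    have hceil : (⌈(1 + ∑ l, x l) / ε / x l⌉₊ : ℝ) ≤ (1 + ∑ l, x l) / ε / x l + 1 :=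
      (Nat.ceil_lt_add_one (div_nonneg (by positivity) (hx l).le)).le
    calc (⌈(1 + ∑ l, x l) / ε / x l⌉₊ : ℝ) * x l
        ≤ ((1 + ∑ l, x l) / ε / x l + 1) * x l := mul_le_mul_of_nonneg_right hceil (hx l).le
      _ = (1 + ∑ l, x l) / ε + x l := by rw [add_one_mul, div_mul_cancel₀ _ (hx l).ne']
      _ ≤ (1 + ∑ l, x l) / ε + (1 + ∑ l, x l) := by gcongr
      _ = (1 + ε) * ((1 + ∑ l, x l) / ε) := by field_simp

theorem Admissible.of_log_den [LinearOrder σ] (hΛ : 0 < Λ) (hδ : 0 < δ)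
    (hlo : ∀ l, Λ ≤ r l * Real.log (β l).den) (hhi : ∀ l, r l * Real.log (β l).den ≤ 2 * Λ)
    (hlarge : ∀ l, 2 / δ ≤ Real.log (β l).den)
    (hgrow : ∀ l l', l < l' → 2 / δ * Real.log (β l).den ≤ Real.log (β l').den) :
    Admissible δ Λ r β where
  scale_pos := hΛ
  degree_le l := by
    have h : (r l : ℝ) * (2 / δ) ≤ 2 * Λ :=
      (mul_le_mul_of_nonneg_left (hlarge l) (Nat.cast_nonneg _)).trans (hhi l)
    rw [mul_div_assoc', div_le_iff₀ hδ] at h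
    linarith
  degree_le_of_lt l _ l' hll' := by
    have hpos : 0 < Real.log (β l).den := (div_pos two_pos hδ).trans_le (hlarge l)
    have h : (r l' : ℝ) * (2 / δ) * Real.log (β l).den ≤ 2 * r l * Real.log (β l).den :=
      calc (r l' : ℝ) * (2 / δ) * Real.log (β l).den ≤ r l' * Real.log (β l').den := by
            rw [mul_assoc]
            exact mul_le_mul_of_nonneg_left (hgrow l l' hll') (Nat.cast_nonneg _)
        _ ≤ 2 * Λ := hhi l'
        _ ≤ 2 * r l * Real.log (β l).den := by linarith [hlo l]
    have h := le_of_mul_le_mul_right h hpos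
    rw [mul_div_assoc', div_le_iff₀ hδ] at h
    linarith
  le_log_den l _ := hlo l

theorem exists_seq_log_den_growth {p : ℚ → Prop} (h : ∀ Q : ℝ, ∃ x, Q ≤ Real.log x.den ∧ p x)
    (K L : ℝ) : ∃ β : ℕ → ℚ, (∀ l, L ≤ Real.log (β l).den ∧ p (β l)) ∧
      ∀ l l', l < l' → K * Real.log (β l).den ≤ Real.log (β l').den := by
  refine exists_seq_of_forall_finset_exists (fun x : ℚ => L ≤ Real.log x.den ∧ p x)
    (fun x y => K * Real.log x.den ≤ Real.log y.den) fun s _ => ?_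
  obtain ⟨B, hB⟩ := (s.image fun x : ℚ => K * Real.log x.den).exists_le
  obtain ⟨y, hy, hpy⟩ := h (max L B)
  exact ⟨y, ⟨(le_max_left _ _).trans hy, hpy⟩, fun x hx =>
    (hB _ (mem_image_of_mem _ hx)).trans ((le_max_right _ _).trans hy)⟩

end Approximants

section AlgebraicInteger

theorem l1Norm_translate_hasse_le {σ : Type*} [Finite σ] {r : σ →₀ ℕ} {P : MvPolynomial σ ℝ}
    {B : ℝ} (hP : P ∈ multidegreeLE ℝ r) (hB : l1Norm P ≤ B ^ r.degree) (α : ℝ) (J : σ →₀ ℕ) :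
    l1Norm (translate (fun _ => α) (hasse J P)) ≤ (2 * B * (1 + |α|)) ^ r.degree :=
  calc l1Norm (translate (fun _ => α) (hasse J P))
      ≤ (1 + |α|) ^ r.degree * l1Norm (hasse J P) :=
        l1Norm_translate_le (hasse_mem_multidegreeLE hP J) fun _ => le_rfl
    _ ≤ (1 + |α|) ^ r.degree * (2 ^ r.degree * B ^ r.degree) := by
        gcongr
        exact (l1Norm_hasse_le hP J).trans (by gcongr)
    _ = (2 * B * (1 + |α|)) ^ r.degree := by
        rw [← mul_pow, ← mul_pow]
        ring

/-- The index of the auxiliary polynomial is bounded below at `(α, …, α)` and above at `β`. -/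
theorem HasSmallIndex.mul_sub_le {σ ι : Type*} [Fintype σ] [Nonempty σ] [Fintype ι] {r : σ →₀ ℕ}
    {β : σ → ℚ} {v : ι → ℝ} {α κ δ ε Λ C : ℝ} (hβr : HasSmallIndex ε δ Λ r β) (hC : 1 ≤ C)
    (hα : ∀ e : ℕ, ∃ c : ι → ℤ, α ^ e = ∑ b, c b * v b ∧ ∀ b, |(c b : ℝ)| ≤ C ^ (e + 1))
    (hκ : 0 ≤ κ) (hε : 0 ≤ ε) (hΛ : 0 < Λ)
    (hcard : 2 * Fintype.card ι * Real.exp (-(2 * ε ^ 2 * Fintype.card σ)) ≤ 1)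
    (hlo : ∀ l, Λ ≤ r l * Real.log (β l).den) (hhi : ∀ l, r l * Real.log (β l).den ≤ (1 + ε) * Λ)
    (hβ : ∀ l, |α - β l| ≤ ((β l).den : ℝ) ^ (-κ))
    (hdeg : r.degree * Real.log (16 * C ^ 2 * (1 + |α|)) ≤ min δ ε * Λ) :
    κ * (Fintype.card σ * (1 / 2 - ε) - ε) ≤ Fintype.card σ * (1 + ε) + ε := by
  have hr (l : σ) : r l ≠ 0 := fun h => (hlo l).not_gt (by simpa [h] using hΛ)
  have hr₀ : r.degree ≠ 0 := fun h => hr (Classical.arbitrary σ) (by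
    rw [(Finsupp.degree_eq_zero_iff r).1 h, Finsupp.coe_zero, Pi.zero_apply])
  obtain ⟨P, hP, hP₀, hPr, hPα, hPnorm⟩ := exists_mem_indexGE_l1Norm_le hC hα hr hε hcard
  have hnorm : l1Norm P ≤ (8 * C ^ 2) ^ r.degree :=
    calc l1Norm P ≤ (8 * C) ^ r.degree * C ^ r.degree :=
          hPnorm.trans (by gcongr; exact le_self_pow₀ hC hr₀)
      _ = (8 * C ^ 2) ^ r.degree := by rw [← mul_pow]; ring
  have hexp {x : ℝ} (hx : min δ ε ≤ x) :
      (16 * C ^ 2 * (1 + |α|)) ^ r.degree ≤ Real.exp (x * Λ) := by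
    rw [← Real.exp_log (x := 16 * C ^ 2 * (1 + |α|)) (by positivity), ← Real.exp_nat_mul]
    exact Real.exp_le_exp.2 (hdeg.trans (by gcongr))
  have hlog : Real.log (l1Norm P) ≤ δ * Λ := by
    refine (Real.log_le_iff_le_exp (l1Norm_pos hP₀)).2 ((hnorm.trans ?_).trans
      (hexp (min_le_left δ ε)))
    have hbase : 8 * C ^ 2 ≤ 16 * C ^ 2 * (1 + |α|) := by
      nlinarith [mul_nonneg (sq_nonneg C) (abs_nonneg α), sq_nonneg C]
    gcongr
  obtain ⟨J, hJη, hJ⟩ := hβr P hP hP₀ hPr hlog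
  refine le_trans ?_ (mul_le_of_mem_indexGE hκ hΛ hlo hhi hβ (hasse_mem_integralPolys hP J)
    (hasse_mem_multidegreeLE hPr J) (by rwa [eval_hasse]) (hasse_mem_indexGE hPα J) ?_)
  · gcongr
    exact (sub_le_sub_left hJη _).trans (le_max_right _ _)
  · refine (l1Norm_translate_hasse_le hPr hnorm α J).trans (le_trans (le_of_eq ?_)
      (hexp (min_le_right δ ε)))
    ring

theorem exists_pos_two_mul_mul_exp_le_one (d : ℝ) {c : ℝ} (hc : 0 < c) :
    ∃ m : ℕ, 0 < m ∧ 2 * d * Real.exp (-(c * m)) ≤ 1 := by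
  have hlim : Tendsto (fun m : ℕ => 2 * d * Real.exp (-(c * m))) atTop (nhds (2 * d * 0)) :=
    (Real.tendsto_exp_neg_atTop_nhds_zero.comp
      (tendsto_natCast_atTop_atTop.const_mul_atTop hc)).const_mul _
  rw [mul_zero] at hlim
  exact ((eventually_gt_atTop 0).and (hlim.eventually_le_const one_pos)).exists

theorem degree_mul_le {σ : Type*} [Fintype σ] {r : σ →₀ ℕ} {x : σ → ℝ} {L Λ : ℝ}
    (hx : ∀ l, L ≤ x l) (hr : ∀ l, r l * x l ≤ Λ) : r.degree * L ≤ Fintype.card σ * Λ :=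
  calc (r.degree : ℝ) * L = ∑ l, r l * L := by
        rw [Finsupp.degree_eq_sum r, Nat.cast_sum, sum_mul]
    _ ≤ ∑ _l : σ, Λ := sum_le_sum fun l _ =>
        (mul_le_mul_of_nonneg_left (hx l) (Nat.cast_nonneg _)).trans (hr l)
    _ = Fintype.card σ * Λ := by rw [sum_const, card_univ, nsmul_eq_mul]

theorem exists_admissible_of_forall_exists {p : ℚ → Prop} {δ ε c : ℝ}
    (hp : ∀ Q : ℝ, ∃ x, Q ≤ Real.log x.den ∧ p x) (m : ℕ) (hδ : 0 < δ) (hε : 0 < ε) (hε₁ : ε ≤ 1)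
    (hc : 0 < c) (D : ℝ) : ∃ (Λ : ℝ) (r : Fin m →₀ ℕ) (β : Fin m → ℚ),
      Admissible δ Λ r β ∧ (∀ l, p (β l)) ∧ (∀ l, Λ ≤ r l * Real.log (β l).den) ∧
        (∀ l, r l * Real.log (β l).den ≤ (1 + ε) * Λ) ∧ r.degree * D ≤ c * Λ := by
  obtain ⟨β, hβ, hgrow⟩ := exists_seq_log_den_growth hp (2 / δ) (max (2 / δ) (m * 2 * D / c))
  have hlarge (l : Fin m) : 2 / δ ≤ Real.log (β l).den := (le_max_left _ _).trans (hβ l).1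
  obtain ⟨Λ, hΛ, r, hr⟩ := exists_forall_le_mul_and_mul_le
    (fun l => (div_pos two_pos hδ).trans_le (hlarge l)) hε
  have hr₂ (l : Fin m) : r l * Real.log (β l).den ≤ 2 * Λ := (hr l).2.trans (by gcongr; linarith)
  refine ⟨Λ, r, fun l => β l, .of_log_den hΛ hδ (fun l => (hr l).1) hr₂ hlarge
    fun l l' h => hgrow l l' h, fun l => (hβ l).2, fun l => (hr l).1, fun l => (hr l).2, ?_⟩
  rcases m.eq_zero_or_pos with rfl | hm
  · rw [Subsingleton.elim r 0, map_zero, Nat.cast_zero, zero_mul]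
    positivity
  · have hdeg : r.degree * (m * 2 * D / c) ≤ m * (2 * Λ) := by
      simpa using degree_mul_le (fun l : Fin m => (le_max_right _ _).trans (hβ l).1) hr₂
    have hm₀ : (0 : ℝ) < m * 2 := by positivity
    refine le_of_mul_le_mul_left ?_ hm₀
    rw [mul_div_assoc', div_le_iff₀ hc] at hdeg
    linarith

theorem exists_forall_log_den_lt_of_isIntegral {α κ : ℝ} (hα : IsIntegral ℤ α) (hκ : 2 < κ) :
    ∃ Q : ℝ, ∀ x : ℚ, Q ≤ Real.log x.den → (x.den : ℝ) ^ (-κ) < |α - x| := by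
  by_contra! hgood
  obtain ⟨d, v, C, hC, hv⟩ := exists_pow_eq_sum_intCast_mul hα
  obtain ⟨ε, hε, hεκ⟩ : ∃ ε, 0 < ε ∧ 8 * (κ + 1) * ε = κ - 2 :=
    ⟨(κ - 2) / (8 * (κ + 1)), div_pos (by linarith) (by linarith),
      mul_div_cancel₀ _ (by linarith)⟩
  have hε₁ : ε ≤ 1 := by nlinarith
  obtain ⟨m, hm, hcard⟩ :=
    exists_pos_two_mul_mul_exp_le_one d (c := 2 * ε ^ 2) (by positivity)
  obtain ⟨δ, hδ, hroth⟩ :=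
    exists_forall_admissible_hasSmallIndex (univ : Finset (Fin m)) ε hε hε₁
  obtain ⟨Λ, r, β, hadm, hβ, hlo, hhi, hdeg⟩ := exists_admissible_of_forall_exists hgood m hδ hε hε₁
    (lt_min hδ hε) (Real.log (16 * C ^ 2 * (1 + |α|)))
  have hsupp : r.support = univ := eq_univ_iff_forall.2 fun l =>
    Finsupp.mem_support_iff.2 fun h => (hlo l).not_gt (by simpa [h] using hadm.scale_pos)
  have : Nonempty (Fin m) := ⟨⟨0, hm⟩⟩
  have hle := (hroth r Λ β hsupp hadm).mul_sub_le hC hv (by linarith) hε.le hadm.scale_pos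
    (by simpa using hcard) hlo hhi hβ hdeg
  rw [Fintype.card_fin] at hle
  have hm₁ : (1 : ℝ) ≤ m := Nat.one_le_cast.2 hm
  have hloss : (m + 1) * ((κ + 1) * ε) ≤ 2 * m * ((κ + 1) * ε) := by
    have : 0 < κ + 1 := by linarith
    gcongr
    linarith
  have hgain : 0 < m * (κ - 2) := mul_pos (Nat.cast_pos.2 hm) (sub_pos.2 hκ)
  have hεm : m * (8 * (κ + 1) * ε) = m * (κ - 2) := by rw [hεκ]
  linarith

end AlgebraicInteger

section Irrationality

theorem exists_lt_den_abs_sub_lt {x p q : ℝ} (h : LiouvilleWith p x) (hp : 1 < p) (hq : 0 < q)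
    (hqp : q < p) (B : ℕ) : ∃ y : ℚ, B < y.den ∧ |x - y| < (y.den : ℝ) ^ (-q) := by
  have hfar := ((tendsto_rpow_neg_atTop hq).comp tendsto_natCast_atTop_atTop).eventually
    ((h.irrational hp).eventually_forall_le_dist_cast_rat_of_den_le B)
  obtain ⟨n, ⟨m, -, hclose⟩, hfar, hn⟩ := ((h.frequently_lt_rpow_neg hqp).and_eventually
    (hfar.and (eventually_gt_atTop 0))).exists
  let y : ℚ := m / n
  have hy : (y : ℝ) = m / n := by push_cast [y]; rfl
  have hden : y.den ≤ n := Nat.le_of_dvd hn (by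
    simpa [y, Rat.mkRat_eq_div] using Int.natCast_dvd_natCast.1 (Rat.den_dvd m n))
  rw [← hy] at hclose
  refine ⟨y, not_le.1 fun hB => (hfar y hB).not_gt hclose, hclose.trans_le ?_⟩
  exact Real.rpow_le_rpow_of_nonpos (Nat.cast_pos.2 y.den_pos) (Nat.cast_le.2 hden)
    (neg_nonpos.2 hq.le)

theorem exists_pos_div_rpow_le_abs_sub {x p : ℝ} (hx : Irrational x) (hp : 0 ≤ p)
    (h : ¬ LiouvilleWith p x) : ∃ c : ℝ, 0 < c ∧ ∀ y : ℚ, c / (y.den : ℝ) ^ p ≤ |x - y| := by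
  by_contra! hclose
  refine h ⟨1, frequently_atTop.2 fun B => ?_⟩
  obtain ⟨ε, hfar, hε⟩ :=
    (((hx.eventually_forall_le_dist_cast_rat_of_den_le B).filter_mono nhdsWithin_le_nhds).and
      (self_mem_nhdsWithin (s := Set.Ioi 0))).exists
  obtain ⟨y, hy⟩ := hclose (min 1 ε) (lt_min one_pos hε)
  have hden : 1 ≤ (y.den : ℝ) ^ p := Real.one_le_rpow (Nat.one_le_cast.2 y.den_pos) hp
  have hyε : |x - y| < ε :=
    hy.trans_le ((div_le_self (le_min zero_le_one hε.le) hden).trans (min_le_right _ _))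
  rw [Rat.cast_def] at hy
  refine ⟨y.den, not_lt.1 fun hB => (hfar y hB.le).not_gt hyε, y.num, ?_, hy.trans_le ?_⟩
  · rw [← Rat.cast_def]
    exact hx.ne_rat y
  · gcongr
    exact min_le_left _ _

theorem not_liouvilleWith_of_isAlgebraic {α κ : ℝ} (hα : IsAlgebraic ℚ α) (hκ : 2 < κ) :
    ¬ LiouvilleWith κ α := fun hL => by
  obtain ⟨k, hk, hint⟩ := ((IsFractionRing.isAlgebraic_iff ℤ ℚ ℝ).2 hα).exists_integral_multiple
  obtain ⟨κ', hκ', hκ'κ⟩ := exists_between hκ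
  obtain ⟨Q, hQ⟩ := exists_forall_log_den_lt_of_isIntegral hint hκ'
  obtain ⟨B, hB⟩ := exists_nat_ge (Real.exp Q)
  obtain ⟨y, hy, hclose⟩ :=
    exists_lt_den_abs_sub_lt (hL.int_mul hk) (by linarith) (by linarith) hκ'κ B
  rw [← zsmul_eq_mul] at hclose
  refine (hQ y ?_).not_gt hclose
  rw [Real.le_log_iff_exp_le (Nat.cast_pos.2 y.den_pos)]
  exact hB.trans (Nat.cast_le.2 hy.le)

end Irrationality

section Window

theorem exists_rat_isApproximant (t : ℝ) {X : ℝ} (hX : 1 ≤ X) :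
    ∃ x : ℚ, IsApproximant t x.num x.den ∧ x.den ≤ X ∧ |t - x| < 1 / (X * x.den) := by
  obtain ⟨x, hx, hden⟩ := Real.exists_rat_abs_sub_le_and_den_le t (Nat.floor_pos.2 hX)
  have hxX : (x.den : ℝ) ≤ X := (Nat.cast_le.2 hden).trans (Nat.floor_le (by linarith))
  have : (0 : ℝ) < x.den := Nat.cast_pos.2 x.den_pos
  have hlt : |t - x| < 1 / (X * x.den) := by
    refine hx.trans_lt (one_div_lt_one_div_of_lt (by positivity) ?_)
    gcongr
    exact Nat.lt_floor_add_one X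
  refine ⟨x, ⟨by exact_mod_cast x.den_pos, x.reduced, ?_⟩, hxX, hlt⟩
  rw [Int.cast_natCast, ← Rat.cast_def, sq]
  exact hlt.trans_le (one_div_le_one_div_of_le (by positivity) (by gcongr))

theorem eventually_exists_isApproximant {t a b : ℝ} (hirr : Irrational t) (halg : IsAlgebraic ℚ t)
    (ha : 0 < a) (hab : a < b) : ∀ᶠ M : ℝ in atTop,
      ∃ u q : ℤ, IsApproximant t u q ∧ M ^ a < q ∧ q ≤ M ^ b := by
  obtain ⟨e, hae, heb⟩ := exists_between hab
  have he : 1 < e / a := (one_lt_div ha).2 hae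
  obtain ⟨c, hc, hroth⟩ := exists_pos_div_rpow_le_abs_sub (p := 1 + e / a) hirr (by linarith)
    (not_liouvilleWith_of_isAlgebraic halg (by linarith))
  filter_upwards [eventually_ge_atTop 1,
    (tendsto_rpow_atTop (sub_pos.2 heb)).eventually_ge_atTop c⁻¹] with M hM hMc
  have hM₀ : 0 < M := by linarith
  obtain ⟨x, happ, hxb, hx⟩ :=
    exists_rat_isApproximant t (Real.one_le_rpow hM (ha.trans hab).le)
  refine ⟨x.num, x.den, happ, ?_, by exact_mod_cast hxb⟩
  rw [Int.cast_natCast]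
  by_contra! hxa
  have hq : (0 : ℝ) < x.den := Nat.cast_pos.2 x.den_pos
  have hpow : (x.den : ℝ) ^ (e / a) ≤ M ^ e :=
    calc (x.den : ℝ) ^ (e / a) ≤ (M ^ a) ^ (e / a) := by gcongr
      _ = M ^ e := by rw [← Real.rpow_mul hM₀.le, mul_div_cancel₀ _ ha.ne']
  have hsep : c * M ^ b < (x.den : ℝ) ^ (e / a) := by
    have h := (hroth x).trans_lt hx
    rw [Real.rpow_add hq, Real.rpow_one, div_lt_div_iff₀ (by positivity) (by positivity)] at h
    refine lt_of_mul_lt_mul_right ?_ hq.le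
    linarith
  have hlarge : M ^ e ≤ c * M ^ b := by
    rw [inv_le_iff_one_le_mul₀' hc, Real.rpow_sub hM₀, mul_div_assoc', one_le_div₀ (by positivity)]
      at hMc
    exact hMc
  exact (hlarge.trans_lt (hsep.trans_le hpow)).false

end Window

end Roth

theorem stmt4_general (n : ℕ) (Δ : ℝ) (hΔ : 2 * Δ < n) (t : ℝ) (ht : t ∈ Set.Icc (0 : ℝ) 1)
    (hirr : Irrational t) (halg : IsAlgebraic ℚ t) :
    t ∈ Aall n Δ := by
  have : (0 : ℝ) ≤ n := n.cast_nonneg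
  obtain ⟨a, ha, hab⟩ := exists_between
    (max_lt (by linarith) (by linarith) : max 0 Δ < (n : ℝ) - Δ)
  obtain ⟨ha₀, hΔa⟩ := max_lt_iff.1 ha
  obtain ⟨M₀, hM₀⟩ := eventually_atTop.1
    ((Roth.eventually_exists_isApproximant hirr halg ha₀ hab).and (eventually_ge_atTop 1))
  refine ⟨ht, M₀, fun M hM => ?_⟩
  obtain ⟨⟨u, q, happ, hlo, hhi⟩, hM₁⟩ := hM₀ M hM
  exact ⟨u, q, happ, (Real.rpow_le_rpow_of_exponent_le hM₁ hΔa.le).trans_lt hlo, hhi⟩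

/-- every irrational algebraic `t ∈ [0,1]` belongs to `𝒜`. -/
theorem stmt4 (n : ℕ) (hn : 2 ≤ n) (Δ : ℝ) (hΔ0 : 0 < Δ) (hΔ1 : Δ < 1)
    (hΔ2 : n = 2 → Δ < 1 / 2) (t : ℝ) (ht : t ∈ Set.Icc (0 : ℝ) 1)
    (hirr : Irrational t) (halg : IsAlgebraic ℚ t) :
    t ∈ Aall n Δ := by
  refine stmt4_general n Δ ?_ t ht hirr halg
  rcases hn.eq_or_lt with rfl | hn
  · push_cast; linarith [hΔ2 rfl]
  · linarith [(Nat.ofNat_lt_cast (α := ℝ)).2 hn]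
end

section
/- If t ∈ 𝒜 then the partial sums S_K(t,x) = Σ_{0<|k|≤K} e(t·k^n + x·k)/k converge uniformly in x ∈ ℝ as K → ∞: there is a function S: ℝ → ℂ such that sup_{x∈ℝ} |S_K(t,x) − S(x)| → 0 as K → ∞. -/
open Filter Finset MeasureTheory

/-- `e(ξ) = exp(2πiξ)`. -/
noncomputable def ee (ξ : ℝ) : ℂ := Complex.exp (2 * Real.pi * Complex.I * ξ)

/-- The symmetric partial sum `S_K(t,x) = Σ_{0<|k|≤K} e(t·k^n + x·k)/k`. -/
noncomputable def SK (n : ℕ) (t x : ℝ) (K : ℕ) : ℂ :=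
  ∑ k ∈ (Finset.Icc (-(K : ℤ)) (K : ℤ)).filter (· ≠ 0),
    ee (t * (k : ℝ) ^ n + x * (k : ℝ)) / (k : ℂ)

/-!
Weyl differencing bounds `|Σ_{i<N} e(P(i))|^(2^(n-1))`, for a phase `P` of degree `n` with leading
coefficient `t`, by a sum of `min N (1 / ‖n! h₁⋯h₍ₙ₋₁₎ t‖)` over a box. Few points of the box share
the same product (divisor bound), and if `u/q` is an approximant to `t` then `q/2` consecutive
multiples of `t` are `1/(2q)`-spaced modulo `1`, so the sum over the products is controlled by `q`.
With `N^Δ < q ≤ N^(n-Δ)` this saves a power of `N` over the trivial bound, uniformly in the lower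
coefficients of `P`. The numerators `e(P(k)) - e(P(-k))` of the symmetric sum then have partial sums
`O(N^(1-δ))`, and summation by parts against `1/k` gives an absolutely and uniformly convergent
series. For the negative half no parity of `P` is needed: `k ↦ P(-k)` on an interval is, read
backwards, a translate of `P`.
-/

open Polynomial in
/-- The phases of degree at most `n` with coefficient `α` in degree `n` and free lower coefficients.
An estimate uniform over `phases n t` is uniform in the parameter `x` of `t * k ^ n + x * k`. -/
def phases (n : ℕ) (α : ℝ) : Set ℝ[X] :=
  {P | P.natDegree ≤ n ∧ P.coeff n = α}

/-- The majorant `min N (1 / (2‖θ‖))` of a sum of `N` consecutive values of `e(θ k)`, where `‖θ‖`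
is the distance from `θ` to the nearest integer. It is written as the inverse of a maximum so that
its value is `N` when `‖θ‖ = 0`. -/
noncomputable def linearSumBound (N : ℕ) (θ : ℝ) : ℝ :=
  (max (N : ℝ)⁻¹ (2 * ‖(θ : UnitAddCircle)‖))⁻¹

section Character

open scoped FourierTransform

lemma ee_eq_fourierChar (a : ℝ) : ee a = 𝐞 a := by
  rw [ee, Real.fourierChar_apply]
  congr 1
  push_cast
  ring

lemma ee_add (a b : ℝ) : ee (a + b) = ee a * ee b := by
  simp only [ee_eq_fourierChar, AddChar.map_add_eq_mul, Circle.coe_mul]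

lemma norm_ee (a : ℝ) : ‖ee a‖ = 1 := by
  rw [ee_eq_fourierChar, Circle.norm_coe]

lemma inner_ee (a b : ℝ) : inner ℂ (ee a) (ee b) = ee (b - a) := by
  simp only [ee_eq_fourierChar, RCLike.inner_apply, ← Circle.coe_inv_eq_conj,
    ← AddChar.map_neg_eq_inv, ← Circle.coe_mul, ← AddChar.map_add_eq_mul, ← sub_eq_add_neg]

lemma ee_sub_intCast (a : ℝ) (k : ℤ) : ee (a - k) = ee a := by
  have hk : ee k = 1 := Complex.exp_eq_one_iff.2 ⟨k, by push_cast; ring⟩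
  rw [← mul_one (ee (a - k)), ← hk, ← ee_add, sub_add_cancel]

lemma four_mul_norm_le_norm_ee_sub_one (a : ℝ) :
    4 * ‖(a : UnitAddCircle)‖ ≤ ‖ee a - 1‖ := by
  set b := a - round a with hb
  have hsmall : |Real.pi * b| ≤ Real.pi / 2 := by
    rw [abs_mul, abs_of_pos Real.pi_pos]
    nlinarith [abs_sub_round a, Real.pi_pos]
  have hchord : ‖ee a - 1‖ = 2 * |Real.sin (Real.pi * b)| := by
    have hexp : ee b = Complex.exp (Complex.I * ((2 * (Real.pi * b) : ℝ) : ℂ)) := by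
      rw [ee]
      congr 1
      push_cast
      ring
    rw [← ee_sub_intCast a (round a), hexp, Complex.norm_exp_I_mul_ofReal_sub_one,
      mul_div_cancel_left₀ _ two_ne_zero, norm_mul, Real.norm_two, Real.norm_eq_abs]
  calc 4 * ‖(a : UnitAddCircle)‖ = 2 * (2 / Real.pi * |Real.pi * b|) := by
        rw [UnitAddCircle.norm_eq, ← hb, abs_mul, abs_of_pos Real.pi_pos]
        field_simp
        ring
    _ ≤ 2 * |Real.sin (Real.pi * b)| := by gcongr; exact Real.mul_abs_le_abs_sin hsmall
    _ = ‖ee a - 1‖ := hchord.symm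

lemma norm_sum_ee_le (s : Finset ℕ) (f : ℕ → ℝ) : ‖∑ i ∈ s, ee (f i)‖ ≤ #s := by
  simpa only [norm_ee, sum_const, nsmul_one] using norm_sum_le s fun i => ee (f i)

end Character

section LinearSumBound

lemma linearSumBound_nonneg (N : ℕ) (θ : ℝ) : 0 ≤ linearSumBound N θ :=
  inv_nonneg.2 (le_max_of_le_left (by positivity))

lemma linearSumBound_le {N : ℕ} (hN : 1 ≤ N) (θ : ℝ) : linearSumBound N θ ≤ N :=
  inv_le_of_inv_le₀ (by positivity) (le_max_left _ _)

lemma linearSumBound_le_of_le_norm {N : ℕ} {θ y : ℝ} (hy : 0 < y)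
    (h : y ≤ ‖(θ : UnitAddCircle)‖) : linearSumBound N θ ≤ (2 * y)⁻¹ :=
  inv_anti₀ (by positivity) (le_max_of_le_right (by gcongr))

lemma norm_sum_ee_linear_le {N L : ℕ} (hN : 1 ≤ N) (hL : L ≤ N) (θ β : ℝ) :
    ‖∑ i ∈ range L, ee (θ * i + β)‖ ≤ linearSumBound N θ := by
  set S := ∑ i ∈ range L, ee (θ * i + β)
  have hgeom : S * (ee θ - 1) = ee (θ * L + β) - ee β := by
    calc S * (ee θ - 1) = ∑ i ∈ range L, (ee (θ * (i + 1 : ℕ) + β) - ee (θ * i + β)) := by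
          rw [sum_mul]
          refine sum_congr rfl fun i _ => ?_
          rw [mul_sub, mul_one, ← ee_add]
          congr 2
          push_cast
          ring
      _ = ee (θ * L + β) - ee β := by
          rw [sum_range_sub fun i : ℕ => ee (θ * i + β), Nat.cast_zero, mul_zero, zero_add]
  have hnorm : ‖S‖ * (4 * ‖(θ : UnitAddCircle)‖) ≤ 2 := by
    calc ‖S‖ * (4 * ‖(θ : UnitAddCircle)‖) ≤ ‖S‖ * ‖ee θ - 1‖ := by
          gcongr
          exact four_mul_norm_le_norm_ee_sub_one θ
      _ = ‖ee (θ * L + β) - ee β‖ := by rw [← norm_mul, hgeom]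
      _ ≤ ‖ee (θ * L + β)‖ + ‖ee β‖ := norm_sub_le _ _
      _ = 2 := by rw [norm_ee, norm_ee, one_add_one_eq_two]
  have htriv : ‖S‖ ≤ N := by
    have := norm_sum_ee_le (range L) fun i => θ * i + β
    rw [card_range] at this
    exact this.trans (by exact_mod_cast hL)
  have hpos : (0 : ℝ) < (N : ℝ)⁻¹ := by positivity
  rw [linearSumBound, ← one_div, le_div_iff₀ (lt_max_of_lt_left hpos),
    mul_max_of_nonneg _ _ (norm_nonneg S), max_le_iff]
  constructor
  · rwa [← div_eq_mul_inv, div_le_one (by positivity)]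
  · linarith

end LinearSumBound

section Phases

open Polynomial

lemma taylor_mem_phases {n : ℕ} {α : ℝ} {P : ℝ[X]} (hP : P ∈ phases n α) (r : ℝ) :
    taylor r P ∈ phases n α := by
  refine ⟨(natDegree_taylor P r).trans_le hP.1, ?_⟩
  have hconst : (hasseDeriv n P).natDegree ≤ 0 :=
    (natDegree_hasseDeriv_le P n).trans (by have := hP.1; omega)
  rw [taylor_coeff, eq_C_of_natDegree_le_zero hconst, eval_C, hasseDeriv_coeff, ← hP.2]
  simp only [zero_add, Nat.choose_self, Nat.cast_one, one_mul]

lemma taylor_sub_mem_phases {n : ℕ} {α : ℝ} {P : ℝ[X]} (hP : P ∈ phases (n + 1) α) (r : ℝ) :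
    taylor r P - P ∈ phases n ((n + 1) * r * α) := by
  have hdeg (k : ℕ) : (hasseDeriv k P).natDegree ≤ n + 1 - k :=
    (natDegree_hasseDeriv_le P k).trans (Nat.sub_le_sub_right hP.1 k)
  constructor
  · refine natDegree_le_iff_coeff_eq_zero.2 fun k hk => ?_
    have hconst : (hasseDeriv k P).natDegree ≤ 0 := (hdeg k).trans (by omega)
    rw [coeff_sub, taylor_coeff, eq_C_of_natDegree_le_zero hconst, eval_C, hasseDeriv_coeff]
    simp only [zero_add, Nat.choose_self, Nat.cast_one, one_mul, sub_self]
  · have hlin : (hasseDeriv n P).natDegree ≤ 1 := (hdeg n).trans (by omega)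
    rw [coeff_sub, taylor_coeff, eq_X_add_C_of_natDegree_le_one hlin]
    simp only [hasseDeriv_coeff, eval_add, eval_mul, eval_C, eval_X, zero_add, add_comm 1 n, hP.2,
      Nat.choose_self, Nat.cast_one, one_mul, Nat.choose_succ_self_right]
    push_cast
    ring

lemma C_mul_X_pow_add_C_mul_X_mem_phases {n : ℕ} (hn : 2 ≤ n) (t x : ℝ) :
    C t * X ^ n + C x * X ∈ phases n t := by
  constructor
  · refine natDegree_add_le_of_degree_le (natDegree_C_mul_X_pow_le t n) ?_
    exact (natDegree_C_mul_le x X).trans (natDegree_X_le.trans (by omega))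
  · simp [coeff_X, show 1 ≠ n by omega]

end Phases

section WeylDifferencing

open Fintype (piFinset)

lemma norm_sq_sum_le_two_mul_re_sum_inner {𝕜 E : Type*} [RCLike 𝕜] [NormedAddCommGroup E]
    [InnerProductSpace 𝕜 E] (z : ℕ → E) (L : ℕ) :
    ‖∑ i ∈ range L, z i‖ ^ 2 ≤
      2 * RCLike.re (∑ j ∈ range L, ∑ i ∈ range (j + 1), inner 𝕜 (z i) (z j)) := by
  induction L with
  | zero => simp
  | succ L ih =>
    rw [sum_range_succ, sum_range_succ, @norm_add_sq 𝕜, sum_range_succ _ L, ← sum_inner, map_add,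
      map_add, inner_self_eq_norm_sq]
    linarith [sq_nonneg ‖z L‖]

lemma norm_sq_sum_le_two_mul_sum_norm_sum_inner (𝕜 : Type*) {E : Type*} [RCLike 𝕜]
    [NormedAddCommGroup E] [InnerProductSpace 𝕜 E] (z : ℕ → E) (L : ℕ) :
    ‖∑ i ∈ range L, z i‖ ^ 2 ≤
      2 * ∑ h ∈ range L, ‖∑ i ∈ range (L - h), inner 𝕜 (z i) (z (i + h))‖ := by
  have hdiag : ∑ j ∈ range L, ∑ i ∈ range (j + 1), inner 𝕜 (z i) (z j) =
      ∑ h ∈ range L, ∑ i ∈ range (L - h), inner 𝕜 (z i) (z (i + h)) := by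
    rw [← sum_range_diag_flip L fun h i => inner 𝕜 (z i) (z (i + h))]
    refine sum_congr rfl fun j _ => ?_
    rw [← sum_range_reflect]
    refine sum_congr rfl fun i hi => ?_
    rw [mem_range] at hi
    rw [Nat.add_sub_cancel, Nat.sub_add_cancel (by omega)]
  refine (norm_sq_sum_le_two_mul_re_sum_inner (𝕜 := 𝕜) z L).trans ?_
  rw [hdiag]
  gcongr
  exact (RCLike.re_le_norm _).trans (norm_sum_le _ _)

lemma sum_piFinset_prod_succ {R M : Type*} [CommMonoid R] [AddCommMonoid M] (s : Finset R) (j : ℕ)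
    (g : R → M) :
    ∑ h ∈ piFinset fun _ : Fin (j + 1) => s, g (∏ i, h i) =
      ∑ a ∈ s, ∑ h ∈ piFinset fun _ : Fin j => s, g (a * ∏ i, h i) := by
  rw [← sum_product']
  refine (sum_equiv (Fin.consEquiv fun _ => R) (fun x => ?_) fun x _ => ?_).symm
  · simp [Fin.forall_fin_succ]
  · simp [Fin.prod_univ_succ]

lemma norm_sum_ee_eval_le_linearSumBound {N L : ℕ} (hN : 1 ≤ N) (hL : L ≤ N) {α : ℝ}
    {P : Polynomial ℝ} (hP : P ∈ phases 1 α) :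
    ‖∑ i ∈ range L, ee (P.eval (i : ℝ))‖ ≤ linearSumBound N α := by
  have heval (x : ℝ) : P.eval x = α * x + P.coeff 0 := by
    rw [← hP.2]
    conv_lhs => rw [Polynomial.eq_X_add_C_of_natDegree_le_one hP.1]
    simp
  simpa only [heval] using norm_sum_ee_linear_le hN hL α (P.coeff 0)

lemma norm_sum_ee_eval_sq_le {N L : ℕ} (hL : L ≤ N) (P : Polynomial ℝ) :
    ‖∑ i ∈ range L, ee (P.eval (i : ℝ))‖ ^ 2 ≤
      2 * ∑ h ∈ range N, ‖∑ i ∈ range (L - h), ee ((P.taylor (h : ℝ) - P).eval (i : ℝ))‖ := by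
  have hinner (h i : ℕ) : inner ℂ (ee (P.eval (i : ℝ))) (ee (P.eval ((i + h : ℕ) : ℝ))) =
      ee ((P.taylor (h : ℝ) - P).eval (i : ℝ)) := by
    rw [inner_ee, Polynomial.eval_sub, Polynomial.taylor_eval, Nat.cast_add]
  refine (norm_sq_sum_le_two_mul_sum_norm_sum_inner ℂ _ L).trans ?_
  simp only [hinner]
  gcongr

lemma pow_sum_mul_card_le {ι : Type*} {s : Finset ι} {f : ι → ℝ} (hf : ∀ i ∈ s, 0 ≤ f i) {p : ℕ}
    (hp : p ≠ 0) : (∑ i ∈ s, f i) ^ p * #s ≤ (#s : ℝ) ^ p * ∑ i ∈ s, f i ^ p := by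
  obtain ⟨m, rfl⟩ := Nat.exists_eq_succ_of_ne_zero hp
  calc (∑ i ∈ s, f i) ^ (m + 1) * #s ≤ (#s : ℝ) ^ m * (∑ i ∈ s, f i ^ (m + 1)) * #s := by
        gcongr
        exact pow_sum_le_card_mul_sum_pow hf m
    _ = (#s : ℝ) ^ (m + 1) * ∑ i ∈ s, f i ^ (m + 1) := by ring

/-- Degree reduction: each use of `norm_sum_ee_eval_sq_le` squares the sum and multiplies the
leading coefficient by the degree and by the shift, until the phase is linear. -/
theorem norm_sum_ee_eval_pow_le {N : ℕ} (hN : 1 ≤ N) (j : ℕ) {L : ℕ} (hL : L ≤ N) {α : ℝ}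
    {P : Polynomial ℝ} (hP : P ∈ phases (j + 1) α) :
    ‖∑ i ∈ range L, ee (P.eval (i : ℝ))‖ ^ 2 ^ j * (N : ℝ) ^ (j + 1) ≤
      (2 * N) ^ 2 ^ j * ∑ h ∈ piFinset fun _ : Fin j => range N,
        linearSumBound N (((j + 1).factorial * ∏ i, h i : ℕ) * α) := by
  induction j generalizing L α P with
  | zero =>
    simp only [pow_zero, pow_one, Fintype.piFinset_of_isEmpty, univ_unique, prod_of_isEmpty,
      sum_singleton, zero_add, Nat.factorial_one, mul_one, Nat.cast_one, one_mul]
    rw [mul_comm, mul_assoc, two_mul]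
    refine le_add_of_nonneg_of_le (mul_nonneg N.cast_nonneg (linearSumBound_nonneg N α)) ?_
    gcongr
    exact norm_sum_ee_eval_le_linearSumBound hN hL hP
  | succ j ih =>
    set S := ‖∑ i ∈ range L, ee (P.eval (i : ℝ))‖
    set T : ℕ → ℝ := fun h => ‖∑ i ∈ range (L - h), ee ((P.taylor (h : ℝ) - P).eval (i : ℝ))‖
    set B : ℕ → ℝ := fun m => linearSumBound N (((j + 2).factorial * m : ℕ) * α)
    have hS : S ^ 2 ≤ 2 * ∑ h ∈ range N, T h := norm_sum_ee_eval_sq_le hL P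
    have hpow : (∑ h ∈ range N, T h) ^ 2 ^ j * N ≤ N ^ 2 ^ j * ∑ h ∈ range N, T h ^ 2 ^ j := by
      simpa only [card_range] using
        pow_sum_mul_card_le (s := range N) (fun h _ => norm_nonneg _) (Nat.two_pow_pos j).ne'
    have hT (h : ℕ) : T h ^ 2 ^ j * (N : ℝ) ^ (j + 1) ≤
        (2 * N) ^ 2 ^ j * ∑ k ∈ piFinset fun _ : Fin j => range N, B (h * ∏ i, k i) := by
      refine (ih (by omega) (taylor_sub_mem_phases hP (h : ℝ))).trans_eq ?_
      congr! 3 with k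
      rw [Nat.factorial_succ (j + 1)]
      push_cast
      ring
    calc S ^ 2 ^ (j + 1) * (N : ℝ) ^ (j + 1 + 1)
        = (S ^ 2) ^ 2 ^ j * N ^ (j + 2) := by rw [← pow_mul, ← pow_succ']
      _ ≤ (2 * ∑ h ∈ range N, T h) ^ 2 ^ j * N ^ (j + 2) := by gcongr
      _ = 2 ^ 2 ^ j * N ^ (j + 1) * ((∑ h ∈ range N, T h) ^ 2 ^ j * N) := by ring
      _ ≤ 2 ^ 2 ^ j * N ^ (j + 1) * (N ^ 2 ^ j * ∑ h ∈ range N, T h ^ 2 ^ j) := by gcongr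
      _ = (2 * N) ^ 2 ^ j * ∑ h ∈ range N, T h ^ 2 ^ j * N ^ (j + 1) := by
          rw [← sum_mul]; ring
      _ ≤ (2 * N) ^ 2 ^ j * ∑ h ∈ range N, ((2 * N) ^ 2 ^ j *
            ∑ k ∈ piFinset fun _ : Fin j => range N, B (h * ∏ i, k i)) := by
          exact mul_le_mul_of_nonneg_left (sum_le_sum fun h _ => hT h) (by positivity)
      _ = (2 * N) ^ 2 ^ (j + 1) * ∑ h ∈ piFinset fun _ : Fin (j + 1) => range N, B (∏ i, h i) := by
          rw [← mul_sum, sum_piFinset_prod_succ (range N) j B]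
          ring

end WeylDifferencing

section DivisorBound

lemma add_one_le_mul_rpow_of_two_le {ε : ℝ} (hε : 0 < ε) (a : ℕ) {p : ℝ} (hp : 2 ≤ p) :
    (a : ℝ) + 1 ≤ (1 + 1 / (ε * Real.log 2)) * (p ^ a) ^ ε := by
  have htwo : 1 + a * (ε * Real.log 2) ≤ ((2 : ℝ) ^ a) ^ ε := by
    rw [← Real.rpow_natCast, ← Real.rpow_mul zero_le_two, Real.rpow_def_of_pos two_pos]
    linarith [Real.add_one_le_exp (Real.log 2 * (a * ε))]
  calc (a : ℝ) + 1 ≤ a + 1 + (a * (ε * Real.log 2) + 1 / (ε * Real.log 2)) :=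
        le_add_of_nonneg_right (by positivity)
    _ = (1 + 1 / (ε * Real.log 2)) * (1 + a * (ε * Real.log 2)) := by field_simp; ring
    _ ≤ (1 + 1 / (ε * Real.log 2)) * (p ^ a) ^ ε := by
        gcongr
        exact htwo.trans (by gcongr)

lemma add_one_le_rpow_of_two_le_rpow {ε : ℝ} (a : ℕ) {p : ℝ} (hp : 0 ≤ p) (h : 2 ≤ p ^ ε) :
    (a : ℝ) + 1 ≤ (p ^ a) ^ ε :=
  calc (a : ℝ) + 1 ≤ 2 ^ a := by exact_mod_cast Nat.lt_two_pow_self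
    _ ≤ (p ^ ε) ^ a := by gcongr
    _ = (p ^ a) ^ ε := Real.rpow_pow_comm hp ε a

theorem exists_card_divisors_le_rpow {ε : ℝ} (hε : 0 < ε) :
    ∃ C : ℝ, 0 ≤ C ∧ ∀ m : ℕ, m ≠ 0 → (#m.divisors : ℝ) ≤ C * (m : ℝ) ^ ε := by
  set c : ℝ := 1 + 1 / (ε * Real.log 2)
  have hc : 1 ≤ c := le_add_of_nonneg_right (by positivity)
  obtain ⟨B, hB⟩ := exists_nat_ge ((2 : ℝ) ^ (1 / ε))
  refine ⟨c ^ B, by positivity, fun m hm => ?_⟩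
  have hfactor (p) (hp : p ∈ m.primeFactors) : (m.factorization p : ℝ) + 1 ≤
      (if p < B then c else 1) * ((p : ℝ) ^ m.factorization p) ^ ε := by
    split_ifs with hpB
    · exact add_one_le_mul_rpow_of_two_le hε _
        (by exact_mod_cast (Nat.prime_of_mem_primeFactors hp).two_le)
    · rw [one_mul]
      refine add_one_le_rpow_of_two_le_rpow _ p.cast_nonneg ?_
      have hBp : (2 : ℝ) ^ (1 / ε) ≤ p := hB.trans (by exact_mod_cast not_lt.1 hpB)
      calc (2 : ℝ) = ((2 : ℝ) ^ (1 / ε)) ^ ε := by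
            rw [← Real.rpow_mul zero_le_two, one_div_mul_cancel hε.ne', Real.rpow_one]
        _ ≤ (p : ℝ) ^ ε := by gcongr
  have hprod : ∏ p ∈ m.primeFactors, ((p : ℝ) ^ m.factorization p) ^ ε = (m : ℝ) ^ ε := by
    rw [Real.finsetProd_rpow _ _ fun _ _ => by positivity]
    congr 1
    exact_mod_cast Nat.prod_factorization_pow_eq_self hm
  have hsmall : ∏ p ∈ m.primeFactors, (if p < B then c else 1) ≤ c ^ B := by
    rw [prod_ite, prod_const, prod_const_one, mul_one]
    refine pow_le_pow_right₀ hc ?_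
    simpa using card_le_card (t := range B)
      fun p hp => mem_range.2 (mem_filter.1 hp).2
  calc (#m.divisors : ℝ) = ∏ p ∈ m.primeFactors, ((m.factorization p : ℝ) + 1) := by
        rw [Nat.card_divisors hm]
        push_cast
        rfl
    _ ≤ ∏ p ∈ m.primeFactors,
          (if p < B then c else 1) * ((p : ℝ) ^ m.factorization p) ^ ε :=
        prod_le_prod (fun _ _ => by positivity) hfactor
    _ ≤ c ^ B * (m : ℝ) ^ ε := by
        rw [prod_mul_distrib, hprod]
        gcongr

lemma exists_card_divisors_pow_le_rpow (j : ℕ) {ε : ℝ} (hε : 0 < ε) :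
    ∃ C : ℝ, 0 ≤ C ∧ ∀ {N : ℕ}, 1 ≤ N → ∀ m ∈ Icc 1 (N ^ j),
      (#m.divisors : ℝ) ^ j ≤ C * (N : ℝ) ^ ε := by
  set η := ε / (j ^ 2 + 1)
  have hη : 0 < η := by positivity
  have hηε : j * η * j ≤ ε := by
    calc j * η * j = ε * (j ^ 2 / (j ^ 2 + 1)) := by ring
      _ ≤ ε := mul_le_of_le_one_right hε.le (div_le_one_of_le₀ (by linarith) (by positivity))
  obtain ⟨C, hC, h⟩ := exists_card_divisors_le_rpow hη
  refine ⟨C ^ j, by positivity, fun {N} hN m hm => ?_⟩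
  rw [mem_Icc] at hm
  have hm0 : m ≠ 0 := by omega
  calc (#m.divisors : ℝ) ^ j ≤ (C * (m : ℝ) ^ η) ^ j := by gcongr; exact h m hm0
    _ ≤ (C * ((N : ℝ) ^ j) ^ η) ^ j := by
        gcongr
        exact_mod_cast hm.2
    _ = C ^ j * (N : ℝ) ^ (j * η * j) := by
        rw [mul_pow, ← Real.rpow_natCast_mul N.cast_nonneg, ← Real.rpow_mul_natCast N.cast_nonneg]
    _ ≤ C ^ j * (N : ℝ) ^ ε := by
        gcongr
        exact_mod_cast hN

end DivisorBound

section ProductsOverBoxes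

open Fintype (piFinset)

variable {ι : Type*} [Fintype ι] [DecidableEq ι]

lemma card_filter_piFinset_prod_eq_zero_le (N : ℕ) :
    #{h ∈ piFinset fun _ : ι => range N | ∏ i, h i = 0} ≤
      Fintype.card ι * N ^ (Fintype.card ι - 1) := by
  rcases Nat.eq_zero_or_pos N with rfl | hN
  · rcases isEmpty_or_nonempty ι <;> simp
  calc #{h ∈ piFinset fun _ : ι => range N | ∏ i, h i = 0}
      ≤ #(univ.biUnion fun i => {h ∈ piFinset fun _ : ι => range N | h i = 0}) := by
        refine card_le_card fun h hh => ?_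
        obtain ⟨hmem, hprod⟩ := mem_filter.1 hh
        obtain ⟨i, hi, h0⟩ := prod_eq_zero_iff.1 hprod
        exact mem_biUnion.2 ⟨i, hi, mem_filter.2 ⟨hmem, h0⟩⟩
    _ ≤ ∑ i : ι, #{h ∈ piFinset fun _ : ι => range N | h i = 0} := card_biUnion_le
    _ = Fintype.card ι * N ^ (Fintype.card ι - 1) := by
        simp [Fintype.card_filter_piFinset_const_eq_of_mem _ _ (mem_range.2 hN)]

lemma card_filter_piFinset_prod_eq_le (s : Finset ℕ) {m : ℕ} (hm : m ≠ 0) :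
    #{h ∈ piFinset fun _ : ι => s | ∏ i, h i = m} ≤ #m.divisors ^ Fintype.card ι := by
  calc #{h ∈ piFinset fun _ : ι => s | ∏ i, h i = m} ≤ #(piFinset fun _ : ι => m.divisors) := by
        refine card_le_card fun h hh => Fintype.mem_piFinset.2 fun i => ?_
        exact Nat.mem_divisors.2
          ⟨(mem_filter.1 hh).2 ▸ dvd_prod_of_mem h (mem_univ i), hm⟩
    _ = #m.divisors ^ Fintype.card ι := by
        rw [Fintype.card_piFinset, prod_const, card_univ]

lemma sum_piFinset_prod_le (N : ℕ) {g : ℕ → ℝ} (hg : ∀ m, 0 ≤ g m) {D : ℝ}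
    (hD : ∀ m ∈ Icc 1 (N ^ Fintype.card ι), (#m.divisors : ℝ) ^ Fintype.card ι ≤ D) :
    ∑ h ∈ piFinset fun _ : ι => range N, g (∏ i, h i) ≤
      Fintype.card ι * N ^ (Fintype.card ι - 1) * g 0 +
        D * ∑ m ∈ Icc 1 (N ^ Fintype.card ι), g m := by
  have hmaps : ∀ h ∈ piFinset fun _ : ι => range N,
      ∏ i, h i ∈ insert 0 (Icc 1 (N ^ Fintype.card ι)) := by
    intro h hh
    have hle : ∏ i, h i ≤ N ^ Fintype.card ι :=
      prod_le_pow_card _ _ _ fun i _ => (mem_range.1 (Fintype.mem_piFinset.1 hh i)).le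
    simp only [mem_insert, mem_Icc]
    omega
  rw [← sum_fiberwise_of_maps_to' hmaps, sum_insert (by simp), mul_sum]
  simp only [sum_const, nsmul_eq_mul]
  gcongr with m hm
  · exact hg 0
  · exact_mod_cast card_filter_piFinset_prod_eq_zero_le N
  · exact hg m
  · refine le_trans ?_ (hD m hm)
    exact_mod_cast card_filter_piFinset_prod_eq_le _ (by rw [mem_Icc] at hm; omega)

end ProductsOverBoxes

section Spacing

lemma one_div_le_abs_intCast_mul_div_sub {q : ℕ} {u d : ℤ} (hgcd : Int.gcd u q = 1) (hd : d ≠ 0)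
    (hdq : |d| < q) (w : ℤ) : 1 / (q : ℝ) ≤ |(d : ℝ) * (u / q) - w| := by
  have hq : (0 : ℝ) < q := by exact_mod_cast (abs_nonneg d).trans_lt hdq
  have hne : d * u - w * q ≠ 0 := by
    intro h0
    have hdvd : (q : ℤ) ∣ d :=
      (Int.isCoprime_iff_gcd_eq_one.2 hgcd).symm.dvd_of_dvd_mul_right ⟨w, by linarith⟩
    exact hdq.not_ge (Int.le_of_dvd (abs_pos.2 hd) ((dvd_abs _ _).2 hdvd))
  have hone : (1 : ℝ) ≤ |((d * u - w * q : ℤ) : ℝ)| := by exact_mod_cast Int.one_le_abs hne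
  have hcast : ((d * u - w * q : ℤ) : ℝ) = (d * (u / q) - w) * q := by
    push_cast
    field_simp
  rwa [hcast, abs_mul, Nat.abs_cast, ← div_le_iff₀ hq] at hone

lemma inv_two_mul_le_norm_intCast_mul {q : ℕ} {u : ℤ} {α : ℝ} (h : IsApproximant α u q) {d : ℤ}
    (hd : d ≠ 0) (hdq : 2 * |d| ≤ q) : (2 * q : ℝ)⁻¹ ≤ ‖((d * α : ℝ) : UnitAddCircle)‖ := by
  obtain ⟨hq, hgcd, hα⟩ := h
  rw [Int.cast_natCast] at hα
  have hgap := one_div_le_abs_intCast_mul_div_sub hgcd hd (by omega) (round (d * α))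
  have herr : |(d : ℝ) * (u / q - α)| ≤ 1 / (2 * q : ℝ) := by
    have hdq' : 2 * |(d : ℝ)| ≤ q := by exact_mod_cast hdq
    calc |(d : ℝ) * (u / q - α)| = |(d : ℝ)| * |α - u / q| := by rw [abs_mul, abs_sub_comm]
      _ ≤ q / 2 * (1 / (q : ℝ) ^ 2) := by
          gcongr
          linarith
      _ = 1 / (2 * q) := by field_simp
  have htri : |(d : ℝ) * (u / q) - round (d * α)| ≤
      |d * α - round (d * α)| + |(d : ℝ) * (u / q - α)| := by
    have hsplit : (d : ℝ) * (u / q) - round (d * α) =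
        (d * α - round (d * α)) + d * (u / q - α) := by ring
    rw [hsplit]
    exact abs_add_le _ _
  have hhalf : 1 / (q : ℝ) = (2 * q : ℝ)⁻¹ + 1 / (2 * q) := by
    field_simp
    norm_num
  rw [UnitAddCircle.norm_eq]
  linarith

lemma norm_coe_sub_lt_inv_of_floor_mul_fract_eq {R x y : ℝ} (hR : 0 < R)
    (h : ⌊R * Int.fract x⌋₊ = ⌊R * Int.fract y⌋₊) : ‖((x - y : ℝ) : UnitAddCircle)‖ < R⁻¹ := by
  have hfloor (z : ℝ) : (⌊R * Int.fract z⌋₊ : ℝ) ≤ R * Int.fract z :=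
    Nat.floor_le (mul_nonneg hR.le (Int.fract_nonneg z))
  have hdist : |R * (Int.fract x - Int.fract y)| < 1 := by
    have hx := hfloor x
    have hx' := Nat.lt_floor_add_one (R * Int.fract x)
    rw [h] at hx hx'
    rw [abs_lt]
    constructor <;> linarith [hfloor y, Nat.lt_floor_add_one (R * Int.fract y)]
  have hfract : x - y - (⌊x⌋ - ⌊y⌋ : ℤ) = Int.fract x - Int.fract y := by
    rw [Int.fract, Int.fract]
    push_cast
    ring
  calc ‖((x - y : ℝ) : UnitAddCircle)‖ ≤ |x - y - (⌊x⌋ - ⌊y⌋ : ℤ)| := by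
        rw [UnitAddCircle.norm_eq]
        exact round_le _ _
    _ < R⁻¹ := by
        rwa [hfract, ← one_div, lt_div_iff₀' hR, ← abs_of_pos hR, ← abs_mul]

/-- The pigeonhole principle for well-spaced points: each of the `R` arcs `[k / R, (k + 1) / R)`
contains at most one of them, and its points are at distance at least `min k (R - 1 - k) / R` from
the integers. -/
lemma sum_le_two_mul_sum_range_of_separated {ι : Type*} {s : Finset ι} {x : ι → ℝ} {R : ℕ}
    (hR : 1 ≤ R)
    (hsep : (s : Set ι).Pairwise fun i j => (R : ℝ)⁻¹ ≤ ‖((x i - x j : ℝ) : UnitAddCircle)‖)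
    {F : ℝ → ℝ} {B : ℕ → ℝ} (hB : ∀ k, 0 ≤ B k)
    (hF : ∀ (θ : ℝ) (k : ℕ), k / R ≤ ‖(θ : UnitAddCircle)‖ → F θ ≤ B k) :
    ∑ i ∈ s, F (x i) ≤ 2 * ∑ k ∈ range R, B k := by
  have hR0 : (0 : ℝ) < R := by exact_mod_cast hR
  set φ : ℝ → ℕ := fun θ => ⌊R * Int.fract θ⌋₊
  have hφ_le (θ : ℝ) : (φ θ : ℝ) ≤ R * Int.fract θ :=
    Nat.floor_le (mul_nonneg hR0.le (Int.fract_nonneg θ))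
  have hφ_lt_succ (θ : ℝ) : R * Int.fract θ < φ θ + 1 := Nat.lt_floor_add_one _
  have hφ_lt (θ : ℝ) : φ θ < R := by
    have : (φ θ : ℝ) < R := (hφ_le θ).trans_lt (mul_lt_of_lt_one_right hR0 (Int.fract_lt_one θ))
    exact_mod_cast this
  have hinj : Set.InjOn (fun i => φ (x i)) s := by
    intro i hi j hj hij
    by_contra hne
    exact (hsep hi hj hne).not_gt (norm_coe_sub_lt_inv_of_floor_mul_fract_eq hR0 hij)
  have hcell (θ : ℝ) : F θ ≤ B (φ θ) + B (R - 1 - φ θ) := by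
    have hnorm : ‖(θ : UnitAddCircle)‖ = min (Int.fract θ) (1 - Int.fract θ) := by
      rw [UnitAddCircle.norm_eq, abs_sub_round_eq_min]
    rcases min_choice (Int.fract θ) (1 - Int.fract θ) with hmin | hmin
    · refine (hF θ (φ θ) ?_).trans (le_add_of_nonneg_right (hB _))
      rw [hnorm, hmin, div_le_iff₀' hR0]
      exact hφ_le θ
    · refine (hF θ (R - 1 - φ θ) ?_).trans (le_add_of_nonneg_left (hB _))
      rw [hnorm, hmin, div_le_iff₀' hR0, Nat.sub_sub, Nat.cast_sub (by have := hφ_lt θ; omega)]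
      push_cast
      linarith [hφ_lt_succ θ]
  calc ∑ i ∈ s, F (x i) ≤ ∑ i ∈ s, (B (φ (x i)) + B (R - 1 - φ (x i))) :=
        sum_le_sum fun i _ => hcell (x i)
    _ = ∑ k ∈ s.image fun i => φ (x i), (B k + B (R - 1 - k)) :=
        (sum_image (f := fun k => B k + B (R - 1 - k)) hinj).symm
    _ ≤ ∑ k ∈ range R, (B k + B (R - 1 - k)) := by
        refine sum_le_sum_of_subset_of_nonneg ?_ fun k _ _ => add_nonneg (hB _) (hB _)
        exact image_subset_iff.2 fun i _ => mem_range.2 (hφ_lt (x i))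
    _ = 2 * ∑ k ∈ range R, B k := by rw [sum_add_distrib, sum_range_reflect, two_mul]

lemma sum_linearSumBound_le_of_separated {ι : Type*} {s : Finset ι} {x : ι → ℝ} {N R : ℕ}
    (hN : 1 ≤ N) (hR : 1 ≤ R)
    (hsep : (s : Set ι).Pairwise fun i j => (R : ℝ)⁻¹ ≤ ‖((x i - x j : ℝ) : UnitAddCircle)‖) :
    ∑ i ∈ s, linearSumBound N (x i) ≤ 2 * N + R * (1 + Real.log R) := by
  set B : ℕ → ℝ := fun k => if k = 0 then (N : ℝ) else R / 2 * (k : ℝ)⁻¹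
  have hB (k : ℕ) : 0 ≤ B k := by
    simp only [B]
    split_ifs <;> positivity
  have hle (θ : ℝ) (k : ℕ) (hk : k / R ≤ ‖(θ : UnitAddCircle)‖) : linearSumBound N θ ≤ B k := by
    simp only [B]
    split_ifs with h0
    · exact linearSumBound_le hN θ
    · refine (linearSumBound_le_of_le_norm (by positivity) hk).trans_eq ?_
      field_simp
  obtain ⟨r, rfl⟩ := Nat.exists_eq_add_of_le' hR
  have hharmonic : ∑ k ∈ range r, ((k + 1 : ℕ) : ℝ)⁻¹ ≤ 1 + Real.log (r + 1 : ℕ) := by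
    calc ∑ k ∈ range r, ((k + 1 : ℕ) : ℝ)⁻¹ ≤ ∑ k ∈ range (r + 1), ((k + 1 : ℕ) : ℝ)⁻¹ := by
          rw [sum_range_succ]
          exact le_add_of_nonneg_right (by positivity)
      _ = harmonic (r + 1) := by
          rw [harmonic]
          push_cast
          rfl
      _ ≤ 1 + Real.log (r + 1 : ℕ) := harmonic_le_one_add_log (r + 1)
  calc ∑ i ∈ s, linearSumBound N (x i) ≤ 2 * ∑ k ∈ range (r + 1), B k :=
        sum_le_two_mul_sum_range_of_separated hR hsep hB hle
    _ = 2 * (((r + 1 : ℕ) : ℝ) / 2 * ∑ k ∈ range r, ((k + 1 : ℕ) : ℝ)⁻¹ + N) := by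
        rw [sum_range_succ', mul_sum]
        simp only [B, Nat.succ_ne_zero, if_false, if_true]
    _ ≤ 2 * (((r + 1 : ℕ) : ℝ) / 2 * (1 + Real.log (r + 1 : ℕ)) + N) := by gcongr
    _ = 2 * N + (r + 1 : ℕ) * (1 + Real.log (r + 1 : ℕ)) := by ring

lemma sum_linearSumBound_block_le {N q : ℕ} (hN : 1 ≤ N) {u : ℤ} {α : ℝ}
    (h : IsApproximant α u q) (b : ℕ) :
    ∑ i ∈ range (q / 2 + 1), linearSumBound N ((b + i : ℕ) * α) ≤
      2 * N + 2 * q * (1 + Real.log (2 * q)) := by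
  have hq : 1 ≤ q := by exact_mod_cast h.1
  refine (sum_linearSumBound_le_of_separated hN (R := 2 * q) (by omega)
    fun i hi j hj hij => ?_).trans_eq (by push_cast; rfl)
  simp only [coe_range, Set.mem_Iio] at hi hj
  have hsub : ((b + i : ℕ) : ℝ) * α - (b + j : ℕ) * α = ((i - j : ℤ) : ℝ) * α := by
    push_cast
    ring
  rw [hsub]
  push_cast
  exact_mod_cast inv_two_mul_le_norm_intCast_mul h (d := i - j) (by omega)
    (by rcases abs_cases (i - j : ℤ) with ⟨habs, _⟩ | ⟨habs, _⟩ <;> omega)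

lemma sum_linearSumBound_natCast_mul_le {N q : ℕ} (hN : 1 ≤ N) {u : ℤ} {α : ℝ}
    (h : IsApproximant α u q) (R : ℕ) :
    ∑ r ∈ range R, linearSumBound N (r * α) ≤
      (2 * R / q + 1) * (2 * N + 2 * q * (1 + Real.log (2 * q))) := by
  have hq : (1 : ℝ) ≤ q := by exact_mod_cast h.1
  set L := q / 2 + 1
  set E := 2 * (N : ℝ) + 2 * q * (1 + Real.log (2 * q))
  have hE : 0 ≤ E := by
    have : 0 ≤ Real.log (2 * q) := Real.log_nonneg (by linarith)
    positivity
  have hblocks (b : ℕ) : ∑ r ∈ range (b * L), linearSumBound N (r * α) ≤ b * E := by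
    induction b with
    | zero => simp
    | succ b ih =>
      rw [Nat.succ_mul, sum_range_add, Nat.cast_succ, add_one_mul]
      exact add_le_add ih (sum_linearSumBound_block_le hN h (b * L))
  have hL : (q : ℝ) / 2 ≤ L := by
    have : q ≤ 2 * L := by omega
    have : (q : ℝ) ≤ 2 * L := by exact_mod_cast this
    linarith
  calc ∑ r ∈ range R, linearSumBound N (r * α)
      ≤ ∑ r ∈ range ((R / L + 1) * L), linearSumBound N (r * α) := by
        refine sum_le_sum_of_subset_of_nonneg (range_subset_range.2 ?_)
          fun _ _ _ => linearSumBound_nonneg _ _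
        rw [Nat.succ_mul]
        exact (Nat.lt_div_mul_add (Nat.succ_pos _)).le
    _ ≤ ((R / L + 1 : ℕ) : ℝ) * E := hblocks _
    _ ≤ (R / L + 1) * E := by
        push_cast
        gcongr
        exact Nat.cast_div_le
    _ ≤ (R / (q / 2) + 1) * E := by gcongr
    _ = (2 * R / q + 1) * E := by rw [div_div_eq_mul_div, mul_comm (R : ℝ)]

end Spacing

section WeylInequality

open Polynomial

lemma exists_one_add_log_le_rpow (k : ℕ) {η : ℝ} (hη : 0 < η) :
    ∃ C : ℝ, 0 ≤ C ∧ ∀ {N q : ℕ}, 1 ≤ N → 1 ≤ q → q ≤ N ^ k →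
      1 + Real.log (2 * q) ≤ C * (N : ℝ) ^ η := by
  refine ⟨2 + k / η, by positivity, fun {N q} hN hq hqN => ?_⟩
  have hN' : (1 : ℝ) ≤ (N : ℝ) ^ η := Real.one_le_rpow (by exact_mod_cast hN) hη.le
  have hlogq : Real.log q ≤ k * ((N : ℝ) ^ η / η) := by
    calc Real.log q ≤ Real.log ((N : ℝ) ^ k) := by gcongr; exact_mod_cast hqN
      _ = k * Real.log N := Real.log_pow _ _
      _ ≤ k * ((N : ℝ) ^ η / η) := by gcongr; exact Real.log_le_rpow_div N.cast_nonneg hη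
  have hlog2 : Real.log 2 ≤ 1 := by linarith [Real.log_two_lt_d9]
  calc 1 + Real.log (2 * q) = 1 + (Real.log 2 + Real.log q) := by
        rw [Real.log_mul two_ne_zero (by positivity)]
    _ ≤ 1 + (1 + k * ((N : ℝ) ^ η / η)) := by gcongr
    _ = 2 * 1 + k / η * (N : ℝ) ^ η := by ring
    _ ≤ 2 * (N : ℝ) ^ η + k / η * (N : ℝ) ^ η := by gcongr
    _ = (2 + k / η) * (N : ℝ) ^ η := by ring

lemma sum_linearSumBound_mul_le {N q : ℕ} (hN : 1 ≤ N) {u : ℤ} {α : ℝ} (h : IsApproximant α u q)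
    {F : ℕ} (hF : 1 ≤ F) {M : ℕ} (hM : 1 ≤ M) :
    ∑ m ∈ Icc 1 M, linearSumBound N ((F * m : ℕ) * α) ≤
      (4 * F * M / q + 1) * (2 * N + 2 * q * (1 + Real.log (2 * q))) := by
  have hinj : Set.InjOn (F * ·) (Icc 1 M : Finset ℕ) := (mul_right_injective₀ (by omega)).injOn
  have hq : (1 : ℝ) ≤ q := by exact_mod_cast h.1
  have hlog : 0 ≤ Real.log (2 * q) := Real.log_nonneg (by linarith)
  have hFM : (1 : ℝ) ≤ F * M := by exact_mod_cast Nat.one_le_iff_ne_zero.2 (by positivity)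
  calc ∑ m ∈ Icc 1 M, linearSumBound N ((F * m : ℕ) * α)
      = ∑ r ∈ (Icc 1 M).image (F * ·), linearSumBound N (r * α) :=
        (sum_image (f := fun r : ℕ => linearSumBound N (r * α)) hinj).symm
    _ ≤ ∑ r ∈ range (F * M + 1), linearSumBound N (r * α) := by
        refine sum_le_sum_of_subset_of_nonneg (image_subset_iff.2 fun m hm => ?_)
          fun _ _ _ => linearSumBound_nonneg _ _
        exact mem_range.2 (Nat.lt_succ_of_le (Nat.mul_le_mul_left F (mem_Icc.1 hm).2))
    _ ≤ (2 * (F * M + 1 : ℕ) / q + 1) * (2 * N + 2 * q * (1 + Real.log (2 * q))) :=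
        sum_linearSumBound_natCast_mul_le hN h _
    _ ≤ (4 * F * M / q + 1) * (2 * N + 2 * q * (1 + Real.log (2 * q))) := by
        gcongr (?_ / _ + _) * _
        push_cast
        linarith

lemma exists_sum_linearSumBound_mul_le {j : ℕ} (hj : 1 ≤ j) {F : ℕ} (hF : 1 ≤ F) {η : ℝ}
    (hη : 0 < η) :
    ∃ C : ℝ, 0 ≤ C ∧ ∀ {N q : ℕ} {u : ℤ} {α : ℝ}, 1 ≤ N → q ≤ N ^ (j + 1) → IsApproximant α u q →
      ∑ m ∈ Icc 1 (N ^ j), linearSumBound N ((F * m : ℕ) * α) ≤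
        C * (N : ℝ) ^ η * ((N : ℝ) ^ (j + 1) / q + (N : ℝ) ^ j + q) := by
  obtain ⟨C, hC, hlog⟩ := exists_one_add_log_le_rpow (j + 1) hη
  refine ⟨(8 * F + 2) * (1 + C), by positivity, fun {N q u α} hN hqN h => ?_⟩
  have hq : 1 ≤ q := by exact_mod_cast h.1
  have hN' : (1 : ℝ) ≤ (N : ℝ) ^ η := Real.one_le_rpow (by exact_mod_cast hN) hη.le
  have hNj : (N : ℝ) ≤ (N : ℝ) ^ j := by exact_mod_cast Nat.le_self_pow (by omega) N
  calc ∑ m ∈ Icc 1 (N ^ j), linearSumBound N ((F * m : ℕ) * α)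
      ≤ (4 * F * (N ^ j : ℕ) / q + 1) * (2 * N + 2 * q * (1 + Real.log (2 * q))) :=
        sum_linearSumBound_mul_le hN h hF (Nat.one_le_pow _ _ hN)
    _ ≤ (4 * F * (N ^ j : ℕ) / q + 1) * (2 * N * (N : ℝ) ^ η + 2 * q * (C * (N : ℝ) ^ η)) := by
        gcongr _ * (?_ + _ * ?_)
        · exact le_mul_of_one_le_right (by positivity) hN'
        · exact hlog hN hq hqN
    _ = (N : ℝ) ^ η * (8 * F * ((N : ℝ) ^ (j + 1) / q) + 8 * F * C * (N : ℝ) ^ j + 2 * N +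
          2 * C * q) := by
        push_cast
        field_simp
        ring
    _ ≤ (N : ℝ) ^ η * (8 * F * ((N : ℝ) ^ (j + 1) / q) + 8 * F * C * (N : ℝ) ^ j +
          2 * (N : ℝ) ^ j + 2 * C * q) := by gcongr
    _ ≤ (N : ℝ) ^ η * ((8 * F + 2) * (1 + C) * ((N : ℝ) ^ (j + 1) / q) +
          (8 * F + 2) * (1 + C) * (N : ℝ) ^ j + (8 * F + 2) * (1 + C) * q) := by
        rw [add_assoc (8 * F * ((N : ℝ) ^ (j + 1) / q)), ← add_mul]
        have hFC : 0 ≤ F * C := by positivity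
        gcongr _ * (?_ * _ + ?_ * _ + ?_ * _) <;> linarith [F.cast_nonneg (α := ℝ)]
    _ = (8 * F + 2) * (1 + C) * (N : ℝ) ^ η * ((N : ℝ) ^ (j + 1) / q + (N : ℝ) ^ j + q) := by ring

lemma exists_norm_sum_ee_eval_pow_le_of_le {j : ℕ} (hj : 1 ≤ j) {ε : ℝ} (hε : 0 < ε) :
    ∃ C : ℝ, 0 ≤ C ∧ ∀ {N q : ℕ} {u : ℤ} {α : ℝ} {P : ℝ[X]}, 1 ≤ N → q ≤ N ^ (j + 1) →
      IsApproximant α u q → P ∈ phases (j + 1) α →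
      ‖∑ i ∈ range N, ee (P.eval (i : ℝ))‖ ^ 2 ^ j * (N : ℝ) ^ (j + 1) ≤
        C * (N : ℝ) ^ 2 ^ j * (N : ℝ) ^ ε * ((N : ℝ) ^ (j + 1) / q + (N : ℝ) ^ j + q) := by
  obtain ⟨C₁, hC₁, hdiv⟩ := exists_card_divisors_pow_le_rpow j (ε := ε / 2) (half_pos hε)
  obtain ⟨C₂, hC₂, hsum⟩ := exists_sum_linearSumBound_mul_le hj
    (Nat.one_le_iff_ne_zero.2 (j + 1).factorial_ne_zero) (half_pos hε)
  refine ⟨2 ^ 2 ^ j * (j + C₁ * C₂), by positivity, fun {N q u α P} hN hqN h hP => ?_⟩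
  set Q := (N : ℝ) ^ (j + 1) / q + (N : ℝ) ^ j + q
  set g : ℕ → ℝ := fun m => linearSumBound N (((j + 1).factorial * m : ℕ) * α)
  have hNε : (1 : ℝ) ≤ (N : ℝ) ^ ε := Real.one_le_rpow (by exact_mod_cast hN) hε.le
  have hNQ : (N : ℝ) ^ j ≤ Q := by
    have : 0 ≤ (N : ℝ) ^ (j + 1) / q := by positivity
    linarith [q.cast_nonneg (α := ℝ)]
  have hbox : ∑ h ∈ Fintype.piFinset fun _ : Fin j => range N, g (∏ i, h i) ≤
      j * (N : ℝ) ^ (j - 1) * g 0 + C₁ * (N : ℝ) ^ (ε / 2) * ∑ m ∈ Icc 1 (N ^ j), g m := by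
    have := sum_piFinset_prod_le (ι := Fin j) N (g := g) (fun m => linearSumBound_nonneg N _)
      (D := C₁ * (N : ℝ) ^ (ε / 2)) (by rw [Fintype.card_fin]; exact hdiv hN)
    rwa [Fintype.card_fin] at this
  calc ‖∑ i ∈ range N, ee (P.eval (i : ℝ))‖ ^ 2 ^ j * (N : ℝ) ^ (j + 1)
      ≤ (2 * N) ^ 2 ^ j * ∑ h ∈ Fintype.piFinset fun _ : Fin j => range N, g (∏ i, h i) :=
        norm_sum_ee_eval_pow_le hN j le_rfl hP
    _ ≤ (2 * N) ^ 2 ^ j * (j * (N : ℝ) ^ (j - 1) * N +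
          C₁ * (N : ℝ) ^ (ε / 2) * (C₂ * (N : ℝ) ^ (ε / 2) * Q)) := by
        refine mul_le_mul_of_nonneg_left (hbox.trans ?_) (by positivity)
        gcongr
        · exact linearSumBound_le hN _
        · exact hsum hN hqN h
    _ = (2 * N) ^ 2 ^ j * (j * (1 * (N : ℝ) ^ j) + C₁ * C₂ * ((N : ℝ) ^ ε * Q)) := by
        rw [mul_assoc (j : ℝ), pow_sub_one_mul (by omega), ← add_halves ε,
          Real.rpow_add (by positivity), add_halves]
        ring
    _ ≤ (2 * N) ^ 2 ^ j * (j * ((N : ℝ) ^ ε * Q) + C₁ * C₂ * ((N : ℝ) ^ ε * Q)) := by gcongr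
    _ = 2 ^ 2 ^ j * (j + C₁ * C₂) * (N : ℝ) ^ 2 ^ j * (N : ℝ) ^ ε * Q := by ring

/-- **Weyl's inequality**, uniform in the lower coefficients of the phase. -/
theorem exists_norm_sum_ee_eval_pow_le {j : ℕ} (hj : 1 ≤ j) {ε : ℝ} (hε : 0 < ε) :
    ∃ C : ℝ, 0 ≤ C ∧ ∀ {N q : ℕ} {u : ℤ} {α : ℝ} {P : ℝ[X]}, 1 ≤ N → IsApproximant α u q →
      P ∈ phases (j + 1) α → ‖∑ i ∈ range N, ee (P.eval (i : ℝ))‖ ^ 2 ^ j ≤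
        C * (N : ℝ) ^ 2 ^ j * (N : ℝ) ^ ε * (1 / q + 1 / N + q / (N : ℝ) ^ (j + 1)) := by
  obtain ⟨C, hC, hweyl⟩ := exists_norm_sum_ee_eval_pow_le_of_le hj hε
  refine ⟨1 + C, by positivity, fun {N q u α P} hN h hP => ?_⟩
  have hq : (0 : ℝ) < q := by exact_mod_cast h.1
  have hNpos : (0 : ℝ) < N := by exact_mod_cast hN
  set A := (N : ℝ) ^ 2 ^ j * (N : ℝ) ^ ε * (1 / q + 1 / N + q / (N : ℝ) ^ (j + 1)) with hA_def
  have hA : 0 ≤ A := by positivity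
  suffices hS : ‖∑ i ∈ range N, ee (P.eval (i : ℝ))‖ ^ 2 ^ j ≤ A ∨
      ‖∑ i ∈ range N, ee (P.eval (i : ℝ))‖ ^ 2 ^ j ≤ C * A by
    rw [mul_assoc, mul_assoc, ← mul_assoc _ ((N : ℝ) ^ ε), ← hA_def, one_add_mul]
    rcases hS with hS | hS <;> linarith [mul_nonneg hC hA]
  rcases le_or_gt (N ^ (j + 1)) q with hNq | hqN
  · left
    have hNε : (1 : ℝ) ≤ (N : ℝ) ^ ε := Real.one_le_rpow (by exact_mod_cast hN) hε.le
    have hqN : 1 ≤ q / (N : ℝ) ^ (j + 1) :=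
      (one_le_div (by positivity)).2 (by exact_mod_cast hNq)
    calc ‖∑ i ∈ range N, ee (P.eval (i : ℝ))‖ ^ 2 ^ j ≤ (N : ℝ) ^ 2 ^ j * 1 * 1 := by
          rw [mul_one, mul_one]
          gcongr
          simpa only [card_range] using norm_sum_ee_le (range N) fun i => P.eval (i : ℝ)
      _ ≤ A := by
          rw [hA_def]
          gcongr
          exact hqN.trans (le_add_of_nonneg_left (by positivity))
  · right
    refine le_of_mul_le_mul_right ((hweyl hN hqN.le h hP).trans_eq ?_) (pow_pos hNpos (j + 1))
    rw [hA_def]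
    field_simp
    ring

end WeylInequality

section PowerSaving

open Polynomial

lemma one_div_add_one_div_add_div_pow_le {N q n : ℕ} (hN : 1 ≤ N) {Δ δ : ℝ} (hδΔ : δ ≤ Δ)
    (hδ1 : δ ≤ 1) (hlow : (N : ℝ) ^ Δ < q) (hupp : (q : ℝ) ≤ (N : ℝ) ^ ((n : ℝ) - Δ)) :
    1 / (q : ℝ) + 1 / N + q / (N : ℝ) ^ n ≤ 3 * (N : ℝ) ^ (-δ) := by
  have hN1 : (1 : ℝ) ≤ N := by exact_mod_cast hN
  have hN0 : (0 : ℝ) < N := by positivity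
  have hq : 1 / (q : ℝ) ≤ (N : ℝ) ^ (-δ) := by
    rw [Real.rpow_neg hN0.le, ← one_div]
    gcongr
    exact (Real.rpow_le_rpow_of_exponent_le hN1 hδΔ).trans hlow.le
  have hN' : 1 / (N : ℝ) ≤ (N : ℝ) ^ (-δ) := by
    rw [one_div, ← Real.rpow_neg_one]
    gcongr
  have hqN : (q : ℝ) / (N : ℝ) ^ n ≤ (N : ℝ) ^ (-δ) := by
    rw [div_le_iff₀ (by positivity), ← Real.rpow_natCast, ← Real.rpow_add hN0]
    exact hupp.trans (Real.rpow_le_rpow_of_exponent_le hN1 (by linarith))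
  linarith

lemma exists_eventually_norm_sum_ee_eval_le_rpow {n : ℕ} (hn : 2 ≤ n) {Δ t : ℝ} (hΔ : 0 < Δ)
    (ht : ∀ᶠ N : ℕ in atTop, ∃ u q : ℤ, IsApproximant t u q ∧
      (N : ℝ) ^ Δ < q ∧ (q : ℝ) ≤ (N : ℝ) ^ ((n : ℝ) - Δ)) :
    ∃ C δ : ℝ, 0 ≤ C ∧ 0 < δ ∧ ∀ᶠ N : ℕ in atTop, ∀ P ∈ phases n t,
      ‖∑ i ∈ range N, ee (P.eval (i : ℝ))‖ ≤ C * (N : ℝ) ^ (1 - δ) := by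
  obtain ⟨j, rfl⟩ : ∃ j, n = j + 1 := ⟨n - 1, by omega⟩
  set δ := min Δ 1
  have hδ : 0 < δ := lt_min hΔ one_pos
  obtain ⟨C, hC, hweyl⟩ := exists_norm_sum_ee_eval_pow_le (j := j) (by omega) (half_pos hδ)
  refine ⟨1 + 3 * C, δ / 2 / 2 ^ j, by positivity, by positivity, ?_⟩
  filter_upwards [ht, eventually_ge_atTop 1] with N hq hN P hP
  obtain ⟨u, q, happrox, hlow, hupp⟩ := hq
  lift q to ℕ using by linarith [happrox.1]
  rw [Int.cast_natCast] at hlow hupp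
  have hN0 : (0 : ℝ) < N := by exact_mod_cast hN
  refine le_of_pow_le_pow_left₀ (by positivity : 2 ^ j ≠ 0) (by positivity) ?_
  calc ‖∑ i ∈ range N, ee (P.eval (i : ℝ))‖ ^ 2 ^ j
      ≤ C * (N : ℝ) ^ 2 ^ j * (N : ℝ) ^ (δ / 2) * (1 / q + 1 / N + q / (N : ℝ) ^ (j + 1)) :=
        hweyl hN happrox hP
    _ ≤ C * (N : ℝ) ^ 2 ^ j * (N : ℝ) ^ (δ / 2) * (3 * (N : ℝ) ^ (-δ)) := by
        gcongr
        exact one_div_add_one_div_add_div_pow_le hN (min_le_left _ _) (min_le_right _ _) hlow hupp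
    _ = 3 * C * ((N : ℝ) ^ (1 - δ / 2 / 2 ^ j)) ^ 2 ^ j := by
        have hexp : (1 - δ / 2 / 2 ^ j) * (2 ^ j : ℕ) = (2 ^ j : ℕ) + δ / 2 + -δ := by
          push_cast
          field_simp
          ring
        rw [← Real.rpow_mul_natCast hN0.le, hexp, Real.rpow_add hN0, Real.rpow_add hN0,
          Real.rpow_natCast]
        ring
    _ ≤ (1 + 3 * C) ^ 2 ^ j * ((N : ℝ) ^ (1 - δ / 2 / 2 ^ j)) ^ 2 ^ j := by
        gcongr
        exact (by linarith : 3 * C ≤ 1 + 3 * C).trans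
          (le_self_pow₀ (by linarith) (by positivity))
    _ = ((1 + 3 * C) * (N : ℝ) ^ (1 - δ / 2 / 2 ^ j)) ^ 2 ^ j := (mul_pow _ _ _).symm

theorem exists_norm_sum_ee_eval_le_rpow {n : ℕ} (hn : 2 ≤ n) {Δ t : ℝ} (hΔ : 0 < Δ)
    (ht : ∀ᶠ N : ℕ in atTop, ∃ u q : ℤ, IsApproximant t u q ∧
      (N : ℝ) ^ Δ < q ∧ (q : ℝ) ≤ (N : ℝ) ^ ((n : ℝ) - Δ)) :
    ∃ C δ : ℝ, 0 < δ ∧ ∀ P ∈ phases n t, ∀ N : ℕ,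
      ‖∑ i ∈ range N, ee (P.eval (i : ℝ))‖ ≤ C * (N : ℝ) ^ (1 - δ) := by
  obtain ⟨C, δ, hC, hδ, hlarge⟩ := exists_eventually_norm_sum_ee_eval_le_rpow hn hΔ ht
  obtain ⟨N₀, hN₀⟩ := eventually_atTop.1 hlarge
  refine ⟨C + (N₀ : ℝ) ^ δ, δ, hδ, fun P hP N => ?_⟩
  rw [add_mul]
  rcases le_total N₀ N with hN | hN
  · exact (hN₀ N hN P hP).trans (le_add_of_nonneg_right (by positivity))
  refine le_add_of_nonneg_of_le (by positivity) ?_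
  rcases Nat.eq_zero_or_pos N with rfl | hpos
  · rw [range_zero, sum_empty, norm_zero]
    positivity
  calc ‖∑ i ∈ range N, ee (P.eval (i : ℝ))‖ ≤ N := by
        simpa only [card_range] using norm_sum_ee_le (range N) fun i => P.eval (i : ℝ)
    _ = (N : ℝ) ^ δ * (N : ℝ) ^ (1 - δ) := by
        rw [← Real.rpow_add (by positivity), add_sub_cancel, Real.rpow_one]
    _ ≤ (N₀ : ℝ) ^ δ * (N : ℝ) ^ (1 - δ) := by gcongr

end PowerSaving

section SummationByParts

open scoped Topology

lemma sum_range_smul_eq_sum_range_sub_smul {R M : Type*} [Ring R] [AddCommGroup M] [Module R M]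
    (f : ℕ → R) (g : ℕ → M) (N : ℕ) :
    ∑ k ∈ range N, f k • g k =
      f N • ∑ k ∈ range N, g k +
        ∑ k ∈ range N, (f k - f (k + 1)) • ∑ i ∈ range (k + 1), g i := by
  induction N with
  | zero => simp
  | succ N ih =>
    rw [sum_range_succ, ih, sum_range_succ _ N, sum_range_succ _ N, sum_range_succ g, sub_smul,
      smul_add, smul_add]
    abel

variable {ι E : Type*} [NormedAddCommGroup E] [NormedSpace ℝ E] {s : Set ι} {a : ℕ → ι → E}
  {C δ : ℝ}

lemma norm_inv_sub_inv_smul_le {v : E} {k : ℕ} (hv : ‖v‖ ≤ C * ((k + 1 : ℕ) : ℝ) ^ (1 - δ)) :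
    ‖(((k : ℝ) + 1)⁻¹ - ((k + 1 : ℕ) + 1 : ℝ)⁻¹) • v‖ ≤ C * ((k + 1 : ℕ) : ℝ) ^ (-1 - δ) := by
  have hk : (0 : ℝ) < (k + 1 : ℕ) := by positivity
  have hdiff : ((k : ℝ) + 1)⁻¹ - ((k + 1 : ℕ) + 1 : ℝ)⁻¹ =
      ((k + 1 : ℕ) : ℝ)⁻¹ * ((k + 1 : ℕ) + 1 : ℝ)⁻¹ := by
    push_cast
    field_simp
    ring
  have hweight : ((k + 1 : ℕ) : ℝ)⁻¹ * ((k + 1 : ℕ) + 1 : ℝ)⁻¹ ≤ ((k + 1 : ℕ) : ℝ) ^ (-2 : ℝ) := by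
    rw [Real.rpow_neg hk.le, Real.rpow_two, sq, mul_inv]
    gcongr
    linarith
  calc ‖(((k : ℝ) + 1)⁻¹ - ((k + 1 : ℕ) + 1 : ℝ)⁻¹) • v‖
      = ((k + 1 : ℕ) : ℝ)⁻¹ * ((k + 1 : ℕ) + 1 : ℝ)⁻¹ * ‖v‖ := by
        rw [hdiff, norm_smul, Real.norm_of_nonneg (by positivity)]
    _ ≤ ((k + 1 : ℕ) : ℝ) ^ (-2 : ℝ) * (C * ((k + 1 : ℕ) : ℝ) ^ (1 - δ)) := by gcongr
    _ = C * ((k + 1 : ℕ) : ℝ) ^ (-1 - δ) := by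
        rw [mul_left_comm, ← Real.rpow_add hk]
        ring_nf

lemma tendstoUniformlyOn_inv_smul_sum_range (hδ : 0 < δ)
    (h : ∀ x ∈ s, ∀ N : ℕ, ‖∑ k ∈ range N, a k x‖ ≤ C * (N : ℝ) ^ (1 - δ)) :
    TendstoUniformlyOn (fun (N : ℕ) x => ((N : ℝ) + 1)⁻¹ • ∑ k ∈ range N, a k x) 0 atTop s := by
  have hlim : Tendsto (fun N : ℕ => C * (N : ℝ) ^ (-δ)) atTop (𝓝 0) := by
    simpa only [mul_zero, Function.comp_def] using
      ((tendsto_rpow_neg_atTop hδ).comp tendsto_natCast_atTop_atTop).const_mul C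
  refine SeminormedAddGroup.tendstoUniformlyOn_zero.2 fun ε hε => ?_
  filter_upwards [hlim.eventually_lt_const hε, eventually_ge_atTop 1] with N hNε hN x hx
  have hN0 : (0 : ℝ) < N := by exact_mod_cast hN
  calc ‖((N : ℝ) + 1)⁻¹ • ∑ k ∈ range N, a k x‖ = ((N : ℝ) + 1)⁻¹ * ‖∑ k ∈ range N, a k x‖ := by
        rw [norm_smul, Real.norm_of_nonneg (by positivity)]
    _ ≤ (N : ℝ)⁻¹ * (C * (N : ℝ) ^ (1 - δ)) := by
        gcongr
        · linarith
        · exact h x hx N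
    _ = C * (N : ℝ) ^ (-δ) := by
        rw [mul_left_comm, ← Real.rpow_neg_one, ← Real.rpow_add hN0]
        ring_nf
    _ < ε := hNε

theorem exists_tendstoUniformlyOn_sum_range_inv_smul [CompleteSpace E] (hδ : 0 < δ)
    (h : ∀ x ∈ s, ∀ N : ℕ, ‖∑ k ∈ range N, a k x‖ ≤ C * (N : ℝ) ^ (1 - δ)) :
    ∃ S : ι → E,
      TendstoUniformlyOn (fun N x => ∑ k ∈ range N, ((k : ℝ) + 1)⁻¹ • a k x) S atTop s := by
  have hsummable : Summable fun k : ℕ => C * ((k + 1 : ℕ) : ℝ) ^ (-1 - δ) :=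
    ((summable_nat_add_iff 1).2 (Real.summable_nat_rpow.2 (by linarith))).mul_left C
  have hseries := tendstoUniformlyOn_tsum_nat hsummable fun k x hx =>
    norm_inv_sub_inv_smul_le (h x hx (k + 1))
  refine ⟨_, ((tendstoUniformlyOn_inv_smul_sum_range hδ h).add hseries).congr
    (Eventually.of_forall fun N x _ => ?_)⟩
  exact (sum_range_smul_eq_sum_range_sub_smul (fun k : ℕ => ((k : ℝ) + 1)⁻¹) (a · x) N).symm

end SummationByParts

section HilbertSums

open Polynomial

/-- The symmetric partial sum `Σ_{0<|k|≤K} e(P(k))/k` of the discrete Hilbert transform with the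
polynomial phase `P`; `SK n t x` is the case `P = t * X ^ n + x * X`. -/
noncomputable def hilbertSum (P : ℝ[X]) (K : ℕ) : ℂ :=
  ∑ k ∈ (Icc (-(K : ℤ)) K).filter (· ≠ 0), ee (P.eval (k : ℝ)) / k

lemma SK_eq_hilbertSum (n : ℕ) (t x : ℝ) (K : ℕ) :
    SK n t x K = hilbertSum (C t * X ^ n + C x * X) K := by
  simp [SK, hilbertSum]

lemma hilbertSum_eq_sum_range (P : ℝ[X]) (K : ℕ) :
    hilbertSum P K = ∑ k ∈ range K,
      ((k : ℝ) + 1)⁻¹ • (ee (P.eval (k + 1 : ℝ)) - ee (P.eval (-(k + 1) : ℝ))) := by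
  induction K with
  | zero => simp [hilbertSum, filter_singleton]
  | succ K ih =>
    have hsplit : (Icc (-((K + 1 : ℕ) : ℤ)) (K + 1 : ℕ)).filter (· ≠ 0) =
        insert ((K : ℤ) + 1) (insert (-((K : ℤ) + 1)) ((Icc (-(K : ℤ)) K).filter (· ≠ 0))) := by
      ext k
      simp only [mem_filter, mem_Icc, mem_insert]
      omega
    rw [sum_range_succ, ← ih, hilbertSum, hilbertSum, hsplit, sum_insert, sum_insert]
    · rw [Complex.real_smul]
      push_cast
      rw [div_neg]
      ring
    · simp
    · simp only [mem_insert, mem_filter, mem_Icc]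
      omega

lemma sum_range_ee_eval_sub_eq (P : ℝ[X]) (N : ℕ) :
    ∑ k ∈ range N, (ee (P.eval (k + 1 : ℝ)) - ee (P.eval (-(k + 1) : ℝ))) =
      ∑ i ∈ range N, ee ((taylor 1 P).eval (i : ℝ)) -
        ∑ i ∈ range N, ee ((taylor (-N : ℝ) P).eval (i : ℝ)) := by
  rw [sum_sub_distrib, ← sum_range_reflect fun k : ℕ => ee (P.eval (-(k + 1) : ℝ))]
  simp only [taylor_eval]
  congr 1
  refine sum_congr rfl fun i hi => ?_
  rw [Nat.sub_sub, Nat.cast_sub (by rw [mem_range] at hi; omega)]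
  congr 2
  push_cast
  ring

end HilbertSums

theorem stmt8_general {n : ℕ} (hn : 2 ≤ n) {Δ t : ℝ} (hΔ : 0 < Δ)
    (ht : ∀ᶠ N : ℕ in atTop, ∃ u q : ℤ, IsApproximant t u q ∧
      (N : ℝ) ^ Δ < q ∧ (q : ℝ) ≤ (N : ℝ) ^ ((n : ℝ) - Δ)) :
    ∃ S : Polynomial ℝ → ℂ,
      TendstoUniformlyOn (fun K P => hilbertSum P K) S atTop (phases n t) := by
  obtain ⟨C, δ, hδ, hC⟩ := exists_norm_sum_ee_eval_le_rpow hn hΔ ht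
  simp only [hilbertSum_eq_sum_range]
  refine exists_tendstoUniformlyOn_sum_range_inv_smul (C := 2 * C) hδ fun P hP N => ?_
  rw [sum_range_ee_eval_sub_eq, two_mul, add_mul]
  exact (norm_sub_le _ _).trans
    (add_le_add (hC _ (taylor_mem_phases hP 1) N) (hC _ (taylor_mem_phases hP (-N)) N))

/-- if `t ∈ 𝒜` then the partial sums `S_K(t,·)` converge uniformly in `x`. -/
theorem stmt8 (n : ℕ) (hn : 2 ≤ n) (Δ : ℝ) (hΔ0 : 0 < Δ) (hΔ1 : Δ < 1)
    (hΔ2 : n = 2 → Δ < 1 / 2) (t : ℝ) (ht : t ∈ Aall n Δ) :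
    ∃ S : ℝ → ℂ, TendstoUniformly (fun (K : ℕ) (x : ℝ) => SK n t x K) S atTop := by
  obtain ⟨S, hS⟩ := stmt8_general hn hΔ0
    (tendsto_natCast_atTop_atTop.eventually (eventually_atTop.2 ht.2))
  simp only [SK_eq_hilbertSum]
  exact ⟨_, tendstoUniformlyOn_univ.1 ((hS.comp fun x => _).mono fun x _ =>
    C_mul_X_pow_add_C_mul_X_mem_phases hn t x)⟩
end
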